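/- arXiv:2401.12670 — 2 statements merged into one kernel-verified Lean document; each statement's English description precedes it below -/
import Mathlib

section
/- For every positive integer k, every (320·k²)-connected finite simple graph has a k-connected orientation. -/
/-- A simple graph `G` is `k`-connected if it has at least `k+1` vertices and removing any
set of fewer than `k` vertices leaves a connected induced subgraph. -/
def KConnected {W : Type*} (G : SimpleGraph W) (k : ℕ) : Prop :=
  k + 1 ≤ Nat.card W ∧
    ∀ S : Set W, S.Finite → S.ncard < k → (G.induce (Sᶜ : Set W)).Connected

/-- `D` is an orientation of the simple graph `G`: every arc of `D` comes from an edge of `G`,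
and for each edge `{u, v}` of `G` exactly one of the arcs `(u, v)`, `(v, u)` belongs to `D`. -/
def IsOrientation {W : Type*} (G : SimpleGraph W) (D : W → W → Prop) : Prop :=
  (∀ u v, D u v → G.Adj u v) ∧ ∀ u v, G.Adj u v → (D u v ↔ ¬ D v u)

/-- After deleting the vertex set `S`, the directed graph `D` is strongly connected:
any vertex outside `S` can be reached from any other vertex outside `S` by a directed
path avoiding `S`. -/
def StronglyConnectedOutside {W : Type*} (D : W → W → Prop) (S : Set W) : Prop :=
  ∀ u v : W, u ∉ S → v ∉ S →
    Relation.ReflTransGen (fun a b => D a b ∧ a ∉ S ∧ b ∉ S) u v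

/-- A directed graph `D` is `k`-connected if it has at least `k+1` vertices and it remains
strongly connected after the removal of any set of fewer than `k` vertices. -/
def DKConnected {W : Type*} (D : W → W → Prop) (k : ℕ) : Prop :=
  k + 1 ≤ Nat.card W ∧
    ∀ S : Set W, S.Finite → S.ncard < k → StronglyConnectedOutside D S


namespace Thom

def GenP {Θ : Type*} [AddCommGroup Θ] [Module ℝ Θ] (P : Θ → Prop) : Prop :=
  ∀ θ₀ θ₁ : Θ, (∃ t : ℝ, P (θ₀ + t • (θ₁ - θ₀))) →
    {t : ℝ | ¬ P (θ₀ + t • (θ₁ - θ₀))}.Finite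

theorem GenP.exists_common {Θ : Type*} [AddCommGroup Θ] [Module ℝ Θ] {ι : Type*} [Finite ι]
    (P : ι → Θ → Prop) (hG : ∀ i, GenP (P i)) (hne : ∀ i, ∃ θ, P i θ) :
    ∃ θ, ∀ i, P i θ := by
  classical
  have := Fintype.ofFinite ι
  suffices h : ∀ s : Finset ι, ∃ θ, ∀ i ∈ s, P i θ by
    obtain ⟨θ, h⟩ := h Finset.univ
    exact ⟨θ, fun i => h i (Finset.mem_univ i)⟩
  intro s
  induction s using Finset.induction_on with
  | empty => exact ⟨0, by simp⟩
  | insert a s ha ih =>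
    obtain ⟨θ₀, h0⟩ := ih
    obtain ⟨θ₁, h1⟩ := hne a
    have hfin : (⋃ i ∈ insert a s, {t : ℝ | ¬ P i (θ₀ + t • (θ₁ - θ₀))}).Finite := by
      refine Set.Finite.biUnion (Finset.finite_toSet (insert a s)) ?_
      intro i hi
      refine hG i θ₀ θ₁ ?_
      rcases Finset.mem_insert.1 (Finset.mem_coe.1 hi) with rfl | hi
      · exact ⟨1, by simpa using h1⟩
      · exact ⟨0, by simpa using h0 i hi⟩
    obtain ⟨t, ht⟩ := hfin.infinite_compl.nonempty
    refine ⟨θ₀ + t • (θ₁ - θ₀), fun i hi => ?_⟩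
    by_contra hc
    exact ht (Set.mem_biUnion (Finset.mem_coe.2 hi) hc)

theorem line_li {ι W : Type*} [Finite ι] [AddCommGroup W] [Module ℝ W] (u w : ι → W) (t0 : ℝ)
    (h : LinearIndependent ℝ (fun i => u i + t0 • w i)) :
    {t : ℝ | ¬ LinearIndependent ℝ (fun i => u i + t • w i)}.Finite := by
  classical
  have := Fintype.ofFinite ι
  obtain ⟨L, hL⟩ := LinearMap.exists_leftInverse_of_injective
    (Fintype.linearCombination ℝ (fun i => u i + t0 • w i))
    (by
      rw [LinearMap.ker_eq_bot]
      exact LinearIndependent.fintypeLinearCombination_injective h)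
  have hL1 : ∀ i, L (u i + t0 • w i) = Pi.single i 1 := by
    intro i
    have := LinearMap.congr_fun hL (Pi.single i 1)
    simpa [Fintype.linearCombination_apply_single] using this
  let A : Matrix ι ι ℝ := fun i j => L (u i) j
  let B : Matrix ι ι ℝ := fun i j => L (w i) j
  let q : Polynomial ℝ := Matrix.det (Matrix.of fun i j => Polynomial.C (A i j) + Polynomial.X * Polynomial.C (B i j))
  have hq : ∀ t, q.eval t = Matrix.det (Matrix.of fun i j => L (u i + t • w i) j) := by
    intro t
    simp only [q, ← Polynomial.coe_evalRingHom]
    rw [RingHom.map_det]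
    congr 1
    ext i j
    simp [A, B]; ring
  have hq0 : q ≠ 0 := by
    intro h0
    have := hq t0
    rw [h0] at this
    have h1 : (Matrix.of fun i j => L (u i + t0 • w i) j) = (1 : Matrix ι ι ℝ) := by
      ext i j
      simp only [Matrix.of_apply, hL1, Matrix.one_apply, Pi.single_apply]
      simp [eq_comm]
    rw [h1] at this
    simp at this
  refine (q.roots.toFinset.finite_toSet).subset ?_
  intro t ht
  simp only [Finset.mem_coe, Multiset.mem_toFinset, Polynomial.mem_roots hq0, Polynomial.IsRoot.def]
  by_contra hne
  apply ht
  rw [hq] at hne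
  have := Matrix.linearIndependent_rows_of_det_ne_zero hne
  exact LinearIndependent.of_comp L this

theorem genP_li {Θ : Type*} [AddCommGroup Θ] [Module ℝ Θ] {ι W : Type*} [Finite ι]
    [AddCommGroup W] [Module ℝ W] (f : Θ → ι → W)
    (hf : ∀ θ₀ θ₁ (t : ℝ) i, f (θ₀ + t • (θ₁ - θ₀)) i = f θ₀ i + t • (f θ₁ i - f θ₀ i)) :
    GenP (fun θ => LinearIndependent ℝ (f θ)) := by
  intro θ₀ θ₁ ⟨t0, h⟩
  have e : ∀ t : ℝ, f (θ₀ + t • (θ₁ - θ₀)) = fun i => f θ₀ i + t • (f θ₁ i - f θ₀ i) :=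
    fun t => funext (hf θ₀ θ₁ t)
  simp only [e] at h ⊢
  exact line_li _ _ t0 h

theorem split_step {E W : Type*} [DecidableEq E] [AddCommGroup W] [Module ℝ W] (v : E → W) (F : Set E)
    (a : E) (x y : W) (hv : v a = x + y) (h : LinearIndepOn ℝ v F) :
    LinearIndepOn ℝ (Function.update v a x) F ∨ LinearIndepOn ℝ (Function.update v a y) F := by
  by_cases ha : a ∈ F
  · have hF : F = insert a (F \ {a}) := by simp [Set.insert_eq_of_mem ha]
    have hn : a ∉ F \ {a} := by simp
    rw [hF, linearIndepOn_insert hn] at h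
    have hc : ∀ z, Set.EqOn (Function.update v a z) v (F \ {a}) := by
      intro z e he
      have : e ≠ a := fun h => he.2 h
      simp [this]
    have key : ∀ z, z ∉ Submodule.span ℝ (v '' (F \ {a})) → LinearIndepOn ℝ (Function.update v a z) F := by
      intro z hz
      rw [hF, linearIndepOn_insert hn, (hc z).image_eq]
      refine ⟨(linearIndepOn_congr (hc z)).2 h.1, by simpa using hz⟩
    by_contra hcon
    push Not at hcon
    have h1 : x ∈ Submodule.span ℝ (v '' (F \ {a})) := by
      by_contra hx; exact hcon.1 (key x hx)
    have h2 : y ∈ Submodule.span ℝ (v '' (F \ {a})) := by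
      by_contra hx; exact hcon.2 (key y hx)
    exact h.2 (hv ▸ Submodule.add_mem _ h1 h2)
  · left
    refine (linearIndepOn_congr ?_).2 h
    intro e he
    have : e ≠ a := fun h => ha (h ▸ he)
    simp [this]

theorem split_all {E W : Type*} [AddCommGroup W] [Module ℝ W] (x y : E → W)
    (F : Set E) (h : LinearIndepOn ℝ (fun e => x e + y e) F) (S : Finset E) :
    ∃ w : E → W, (∀ e ∈ S, w e = x e ∨ w e = y e) ∧ (∀ e, e ∉ S → w e = x e + y e) ∧
      LinearIndepOn ℝ w F := by
  classical
  induction S using Finset.induction_on with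
  | empty => exact ⟨_, by simp, by simp, h⟩
  | insert a S ha ih =>
    obtain ⟨w, h1, h2, h3⟩ := ih
    have key : ∀ z, (z = x a ∨ z = y a) → LinearIndepOn ℝ (Function.update w a z) F →
      ∃ w : E → W, (∀ e ∈ insert a S, w e = x e ∨ w e = y e) ∧
        (∀ e, e ∉ insert a S → w e = x e + y e) ∧ LinearIndepOn ℝ w F := by
      intro z hz hl
      refine ⟨_, ?_, ?_, hl⟩
      · intro e he
        by_cases hea : e = a
        · subst hea; simpa using hz
        · simp only [Function.update_of_ne hea]
          exact h1 e ((Finset.mem_insert.1 he).resolve_left hea)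
      · intro e he
        rw [Finset.mem_insert, not_or] at he
        simp only [Function.update_of_ne he.1]
        exact h2 e he.2
    rcases split_step w F a (x a) (y a) (h2 a ha) h3 with hl | hl
    · exact key _ (Or.inl rfl) hl
    · exact key _ (Or.inr rfl) hl

theorem li_of_smul {E W : Type*} [AddCommGroup W] [Module ℝ W] (R : E → W) (a : E → ℝ) (F : Set E)
    (h : LinearIndepOn ℝ (fun e => a e • R e) F) : LinearIndepOn ℝ R F := by
  have ha : ∀ e : F, a e ≠ 0 := by
    intro e h0
    have := LinearIndependent.ne_zero e h
    simp [h0] at this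
  have := LinearIndependent.units_smul h (fun e => (Units.mk0 (a e) (ha e))⁻¹)
  refine (linearIndependent_congr_aux ?_ this)
  funext e
  simp only [Pi.smul_apply', Units.smul_def, Units.val_inv_eq_inv_val, Units.val_mk0]
  exact inv_smul_smul₀ (ha e) _
where
  linearIndependent_congr_aux {v w : F → W} (e : v = w) (h : LinearIndependent ℝ v) :
    LinearIndependent ℝ w := e ▸ h

/-- Splitting of pairs. -/
theorem split_pair {E W : Type*} [DecidableEq E] [AddCommGroup W] [Module ℝ W] (R : E → W) (a b : E → ℝ)
    (F : Finset E) (h : LinearIndepOn ℝ (fun e => ((a e • R e, b e • R e) : W × W)) (F : Set E)) :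
    ∃ F1 ⊆ F, LinearIndepOn ℝ R (F1 : Set E) ∧ LinearIndepOn ℝ R ((F \ F1 : Finset E) : Set E) := by
  classical
  obtain ⟨w, h1, -, h3⟩ := split_all (fun e => ((a e • R e, 0) : W × W)) (fun e => (0, b e • R e))
    (F : Set E) (by simpa using h) F
  refine ⟨F.filter (fun e => w e = (a e • R e, 0)), Finset.filter_subset _ _, ?_, ?_⟩
  · have := h3.mono (t := (F.filter (fun e => w e = (a e • R e, 0)) : Finset E)) (by exact_mod_cast Finset.filter_subset _ _)
    have h' : LinearIndepOn ℝ (fun e => LinearMap.inl ℝ W W (a e • R e))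
        ((F.filter (fun e => w e = (a e • R e, 0)) : Finset E) : Set E) := by
      refine (linearIndepOn_congr ?_).1 this
      intro e he
      simp only [Finset.coe_filter, Set.mem_ofPred_eq] at he
      simp [he.2]
    exact li_of_smul R a _ (LinearIndependent.of_comp (LinearMap.inl ℝ W W) h')
  · have := h3.mono (t := (F \ F.filter (fun e => w e = (a e • R e, 0)) : Finset E)) (by simp)
    have h' : LinearIndepOn ℝ (fun e => LinearMap.inr ℝ W W (b e • R e))
        ((F \ F.filter (fun e => w e = (a e • R e, 0)) : Finset E) : Set E) := by
      refine (linearIndepOn_congr ?_).1 this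
      intro e he
      simp only [Finset.coe_sdiff, Finset.coe_filter, Set.mem_sdiff, Finset.mem_coe,
        Set.mem_ofPred_eq, not_and] at he
      have := (h1 e he.1).resolve_left (he.2 he.1)
      simp [this]
    exact li_of_smul R b _ (LinearIndependent.of_comp (LinearMap.inr ℝ W W) h')

end Thom


namespace Thom

variable {V : Type*} [DecidableEq V]

def row {d : ℕ} (p : V → Fin d → ℝ) (e : Sym2 V) : V × Fin d → ℝ :=
  Sym2.lift ⟨fun u v x => (if x.1 = u then p u x.2 - p v x.2 else 0) +
    (if x.1 = v then p v x.2 - p u x.2 else 0), fun u v => by funext x; exact add_comm _ _⟩ e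

theorem row_mk {d : ℕ} (p : V → Fin d → ℝ) (u v : V) (x : V × Fin d) :
    row p s(u, v) x = (if x.1 = u then p u x.2 - p v x.2 else 0) +
    (if x.1 = v then p v x.2 - p u x.2 else 0) := rfl

theorem row_affine {d : ℕ} (p q : V → Fin d → ℝ) (t : ℝ) (e : Sym2 V) :
    row (p + t • (q - p)) e = row p e + t • (row q e - row p e) := by
  induction e using Sym2.ind with
  | _ u v =>
    funext x
    simp only [row_mk, Pi.add_apply, Pi.smul_apply, Pi.sub_apply, smul_eq_mul]
    split_ifs <;> ring

theorem row_avoid {d : ℕ} (p : V → Fin d → ℝ) (e : Sym2 V) (v : V) (h : v ∉ e) (l : Fin d) :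
    row p e (v, l) = 0 := by
  induction e using Sym2.ind with
  | _ u w =>
    simp only [Sym2.mem_iff, not_or] at h
    simp [row_mk, h.1, h.2]

theorem row_update {d : ℕ} (p : V → Fin d → ℝ) (e : Sym2 V) (v : V) (z : Fin d → ℝ) (h : v ∉ e) :
    row (Function.update p v z) e = row p e := by
  induction e using Sym2.ind with
  | _ u w =>
    simp only [Sym2.mem_iff, not_or] at h
    funext x
    simp [row_mk, Function.update_of_ne (Ne.symm h.1), Function.update_of_ne (Ne.symm h.2)]

def star (v : V) (A : Finset V) : Finset (Sym2 V) := A.image (fun x => s(v, x))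

theorem block {E W W' : Type*} [AddCommGroup W] [Module ℝ W] [AddCommGroup W'] [Module ℝ W']
    (R : E → W) (π : W →ₗ[ℝ] W') (F S : Set E) (hF : ∀ e ∈ F, π (R e) = 0)
    (h1 : LinearIndepOn ℝ R F) (h2 : LinearIndepOn ℝ (fun e => π (R e)) S) :
    LinearIndepOn ℝ R (F ∪ S) := by
  have h2' : LinearIndepOn ℝ R S := LinearIndependent.of_comp π h2
  refine LinearIndepOn.union h1 h2' ?_
  have hd := Submodule.range_ker_disjoint (f := π) (v := fun e : S => R e) h2
  rw [← Set.image_eq_range] at hd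
  refine (hd.symm).mono_left ?_
  rw [Submodule.span_le]
  rintro _ ⟨e, he, rfl⟩
  exact hF e he

def proj (d : ℕ) (v : V) : (V × Fin d → ℝ) →ₗ[ℝ] (Fin d → ℝ) :=
  LinearMap.funLeft ℝ ℝ (fun l => (v, l))

theorem proj_star {d : ℕ} (p : V → Fin d → ℝ) (v x : V) (h : x ≠ v) :
    proj d v (row p s(v, x)) = p v - p x := by
  funext l
  simp [proj, row_mk, h.symm]

theorem ext0_at {d : ℕ} (p : V → Fin d → ℝ) (F : Finset (Sym2 V)) (v : V) (A : Finset V)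
    (hF : LinearIndepOn ℝ (row p) (F : Set (Sym2 V))) (hv : ∀ e ∈ F, v ∉ e) (hA : v ∉ A)
    (hp : LinearIndepOn ℝ (fun x => p v - p x) (A : Set V)) :
    LinearIndepOn ℝ (row p) ((F ∪ star v A : Finset (Sym2 V)) : Set (Sym2 V)) := by
  rw [Finset.coe_union]
  refine block (row p) (proj d v) _ _ ?_ hF ?_
  · intro e he
    funext l
    exact row_avoid p e v (hv e (Finset.mem_coe.1 he)) l
  · rw [star, Finset.coe_image]
    apply LinearIndepOn.image_of_comp
    refine (linearIndepOn_congr ?_).2 hp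
    intro x hx
    have : x ≠ v := fun h => hA (h ▸ Finset.mem_coe.1 hx)
    simp [proj_star p v x this]

theorem li_exchange {E W : Type*} [AddCommGroup W] [Module ℝ W] (R : E → W) (s : Set E) (a b : E)
    (ha : a ∉ s) (h : LinearIndepOn ℝ R (insert a s)) (c : ℝ) (hc : c ≠ 0)
    (hb : R b - c • R a ∈ Submodule.span ℝ (R '' s)) : LinearIndepOn ℝ R (insert b s) := by
  rw [linearIndepOn_insert ha] at h
  have hb' : R b ∉ Submodule.span ℝ (R '' s) := by
    intro hm
    apply h.2
    have := Submodule.sub_mem _ hm hb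
    rw [sub_sub_cancel] at this
    have := Submodule.smul_mem _ c⁻¹ this
    rwa [inv_smul_smul₀ hc] at this
  by_cases hbs : b ∈ s
  · exact absurd (Submodule.subset_span (Set.mem_image_of_mem R hbs)) hb'
  · exact (linearIndepOn_insert hbs).2 ⟨h.1, hb'⟩

/-- the position vectors after placing a new vertex in the middle of `u,w`. -/
noncomputable def midv {d : ℕ} (u w : V) (p : V → Fin d → ℝ) (x : V) : Fin d → ℝ :=
  (1/2 : ℝ) • (p u + p w) - p x

theorem ext1_at {d : ℕ} (p : V → Fin d → ℝ) (F : Finset (Sym2 V)) (v u w : V) (A : Finset V)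
    (huw : u ≠ w) (hvu : u ≠ v) (hvw : w ≠ v) (hnF : s(u,w) ∉ F)
    (hF : LinearIndepOn ℝ (row p) ((insert s(u,w) F : Finset (Sym2 V)) : Set (Sym2 V)))
    (hv : ∀ e ∈ F, v ∉ e) (hA : v ∉ A) (huA : u ∉ A) (hwA : w ∉ A)
    (hp : LinearIndepOn ℝ (midv u w p) ((insert u A : Finset V) : Set V)) :
    ∃ p' : V → Fin d → ℝ, LinearIndepOn ℝ (row p')
      ((F ∪ star v (insert u (insert w A)) : Finset (Sym2 V)) : Set (Sym2 V)) := by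
  set p' := Function.update p v ((1/2 : ℝ) • (p u + p w)) with hp'
  refine ⟨p', ?_⟩
  have hF' : LinearIndepOn ℝ (row p') ((insert s(u,w) F : Finset (Sym2 V)) : Set (Sym2 V)) := by
    refine (linearIndepOn_congr ?_).2 hF
    intro e he
    refine row_update p e v _ ?_
    rcases Finset.mem_insert.1 (Finset.mem_coe.1 he) with rfl | he
    · simp [hvu.symm, hvw.symm]
    · exact hv e he
  have h1 := ext0_at p' (insert s(u,w) F) v (insert u A) hF' ?_ ?_ ?_
  · have hnot : s(u,w) ∉ F ∪ star v (insert u A) := by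
      simp only [Finset.mem_union, hnF, star, Finset.mem_image, false_or, not_exists, not_and]
      rintro x hx heq
      have : v ∈ s(u,w) := heq ▸ Sym2.mem_mk_left v x
      simp [hvu.symm, hvw.symm] at this
    rw [Finset.insert_union, Finset.coe_insert] at h1
    have h2 := li_exchange (row p') _ s(u,w) s(v,w) (by simpa using hnot) h1 (1/2) (by norm_num) ?_
    · refine h2.mono ?_
      rw [← Finset.coe_insert, Finset.coe_subset]
      intro e
      simp only [star, Finset.mem_union, Finset.mem_image, Finset.mem_insert]
      rintro (h | ⟨x, (rfl | rfl | hx), rfl⟩)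
      · exact Or.inr (Or.inl h)
      · exact Or.inr (Or.inr ⟨x, Or.inl rfl, rfl⟩)
      · exact Or.inl rfl
      · exact Or.inr (Or.inr ⟨x, Or.inr hx, rfl⟩)
    · have : row p' s(v,w) - (1/2 : ℝ) • row p' s(u,w) = - row p' s(v,u) := by
        funext ⟨x, l⟩
        have e1 : p' u = p u := Function.update_of_ne hvu _ _
        have e2 : p' w = p w := Function.update_of_ne hvw _ _
        have e3 : p' v l = (1/2 : ℝ) * (p u l + p w l) := by simp [p']; ring
        simp only [Pi.sub_apply, Pi.smul_apply, Pi.neg_apply, row_mk, e1, e2, e3, smul_eq_mul]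
        by_cases a1 : x = v
        · subst a1; simp [hvu.symm, hvw.symm]; ring
        · by_cases a2 : x = u
          · subst a2; simp [huw, hvu]; ring
          · by_cases a3 : x = w
            · subst a3; simp [huw.symm, hvw]; ring
            · simp [a1, a2, a3]
      rw [this]
      refine Submodule.neg_mem _ (Submodule.subset_span ⟨s(v,u), ?_, rfl⟩)
      simp [star]
  · intro e he
    rcases Finset.mem_insert.1 he with rfl | he
    · simp [hvu.symm, hvw.symm]
    · exact hv e he
  · simp [hvu.symm, hA]
  · refine (linearIndepOn_congr ?_).2 hp
    intro x hx
    have hx' : x ≠ v := by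
      rintro rfl
      rcases Finset.mem_insert.1 (Finset.mem_coe.1 hx) with h | h
      · exact hvu h.symm
      · exact hA h
    simp [p', midv, Function.update_of_ne hx']

end Thom


namespace Thom

variable {V : Type*} [DecidableEq V]

abbrev MIdx (d : ℕ) := Σ i : Fin d, Fin (i.1 + 1)

theorem card_MIdx (d : ℕ) : 2 * Fintype.card (MIdx d) = d * (d + 1) := by
  simp only [Fintype.card_sigma, Fintype.card_fin]
  rw [Fin.sum_univ_eq_sum_range (fun i => i + 1) d]
  have h := Finset.sum_range_id_mul_two (d + 1)
  rw [Finset.sum_range_succ'] at h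
  simp only [add_zero] at h
  rw [mul_comm, h, Nat.add_sub_cancel, mul_comm]

def MIdx.snd' {d : ℕ} (q : MIdx d) : Fin d := ⟨q.2.1, by have := q.2.2; have := q.1.2; omega⟩

/-- trivial motions -/
def mot {d : ℕ} (X : Finset V) (p : V → Fin d → ℝ) (q : MIdx d) (x : X × Fin d) : ℝ :=
  if q.snd' = q.1 then (if x.2 = q.1 then 1 else 0)
  else (if x.2 = q.snd' then p x.1 q.1 else 0) - (if x.2 = q.1 then p x.1 q.snd' else 0)

theorem mot_affine {d : ℕ} (X : Finset V) (p r : V → Fin d → ℝ) (t : ℝ) (q : MIdx d) :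
    mot X (p + t • (r - p)) q = mot X p q + t • (mot X r q - mot X p q) := by
  funext x
  simp only [mot, Pi.add_apply, Pi.smul_apply, Pi.sub_apply, smul_eq_mul]
  split_ifs <;> ring

theorem li_of_dual {ι W : Type*} [Fintype ι] [DecidableEq ι] [AddCommGroup W] [Module ℝ W]
    (v : ι → W) (φ : ι → W →ₗ[ℝ] ℝ)
    (h1 : ∀ i, φ i (v i) ≠ 0) (h2 : ∀ i j, i ≠ j → φ i (v j) = 0) : LinearIndependent ℝ v := by
  rw [Fintype.linearIndependent_iff]
  intro g hg i
  have := congrArg (φ i) hg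
  rw [map_sum, map_zero, Finset.sum_eq_single i] at this
  · rw [map_smul, smul_eq_mul] at this
    exact (mul_eq_zero.1 this).resolve_right (h1 i)
  · intro j _ hj
    rw [map_smul, h2 i j hj.symm, smul_zero]
  · simp

theorem MIdx.ext' {d : ℕ} {q r : MIdx d} (h1 : q.1 = r.1) (h2 : q.snd' = r.snd') : q = r := by
  obtain ⟨i, j⟩ := q
  obtain ⟨i', j'⟩ := r
  simp only at h1
  subst h1
  simp only [MIdx.snd', Fin.mk.injEq] at h2
  congr
  exact Fin.ext h2

theorem MIdx.le {d : ℕ} (q : MIdx d) : q.snd' ≤ q.1 := by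
  have := q.2.2
  simp only [MIdx.snd', Fin.le_def]; omega

theorem mot_exists {d : ℕ} (X : Finset V) (hX : d ≤ X.card) :
    ∃ p : V → Fin d → ℝ, LinearIndependent ℝ (mot X p) := by
  classical
  obtain ⟨g⟩ : Nonempty (Fin d ↪ X) := by
    apply Function.Embedding.nonempty_of_card_le
    simpa using hX
  by_cases hd : d = 0
  · subst hd
    refine ⟨fun _ _ => 0, ?_⟩
    have : IsEmpty (MIdx 0) := ⟨fun q => q.1.elim0⟩
    exact linearIndependent_empty_type
  have hd' : 0 < d := Nat.pos_of_ne_zero hd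
  let p : V → Fin d → ℝ := fun x l => if h : l.1 + 1 < d then (if (g ⟨l.1 + 1, h⟩ : V) = x then 1 else 0) else 0
  have hp0 : ∀ l, p (g ⟨0, hd'⟩) l = 0 := by
    intro l
    simp only [p]
    split_ifs with h1 h2
    · have := g.injective (Subtype.ext h2)
      simp at this
    · rfl
    · rfl
  have hpa : ∀ (a : Fin d) (h : a.1 + 1 < d) (l : Fin d), p (g ⟨a.1+1, h⟩) l = if l = a then 1 else 0 := by
    intro a h l
    simp only [p]
    by_cases h3 : l = a
    · subst h3; simp [h]
    · rw [if_neg h3]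
      split_ifs with h1 h2
      · have := g.injective (Subtype.ext h2)
        simp only [Fin.mk.injEq, add_left_inj] at this
        exact absurd (Fin.ext this) h3
      · rfl
      · rfl
  refine ⟨p, ?_⟩
  let φ : MIdx d → ((X × Fin d → ℝ) →ₗ[ℝ] ℝ) := fun q =>
    if h : q.snd'.1 + 1 < d ∧ q.snd' ≠ q.1 then
      LinearMap.proj (R := ℝ) (φ := fun _ : X × Fin d => ℝ) (g ⟨q.snd'.1 + 1, h.1⟩, q.1) - LinearMap.proj (R := ℝ) (φ := fun _ : X × Fin d => ℝ) (g ⟨0, hd'⟩, q.1)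
    else LinearMap.proj (R := ℝ) (φ := fun _ : X × Fin d => ℝ) (g ⟨0, hd'⟩, q.1)
  have hlt : ∀ q : MIdx d, q.snd' ≠ q.1 → q.snd'.1 + 1 < d := by
    intro q hq
    have h1 := q.le
    have h2 := q.1.2
    have : q.snd' < q.1 := lt_of_le_of_ne h1 hq
    rw [Fin.lt_def] at this
    omega
  have hφ1 : ∀ q r, q.snd' = q.1 → φ q (mot X p r) = if q = r then 1 else 0 := by
    intro q r hq
    simp only [φ, hq, ne_eq, not_true_eq_false, and_false, dite_false, LinearMap.proj_apply, mot, hp0,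
      ite_self, sub_zero]
    by_cases hqr : q = r
    · subst hqr; simp [hq]
    · rw [if_neg hqr]
      split_ifs with h1 h2
      · exact absurd (MIdx.ext' h2 (by rw [hq, h1, h2])) hqr
      · rfl
      · rfl
  have hφ2 : ∀ q r, q.snd' ≠ q.1 → φ q (mot X p r) = if q = r then -1 else 0 := by
    intro q r hq
    have hc : q.snd'.1 + 1 < d ∧ q.snd' ≠ q.1 := ⟨hlt q hq, hq⟩
    simp only [φ, dif_pos hc, LinearMap.sub_apply, LinearMap.proj_apply, mot, hp0, hpa]
    by_cases hqr : q = r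
    · subst hqr
      simp [hq, Ne.symm hq]
    · rw [if_neg hqr]
      have hq1 := q.le
      have hr1 := r.le
      by_cases hr : r.snd' = r.1
      · simp [hr]
      · simp only [hr, if_false, ite_self, sub_zero]
        by_cases h1 : q.1 = r.snd'
        · have h2 : r.1 ≠ q.snd' := by
            intro h2
            rw [h1, ← h2] at hq1
            exact hr (le_antisymm hr1 hq1)
          have h3 : q.1 ≠ r.1 := fun h => hr (h1 ▸ h)
          simp [h2, h3]
        · by_cases h3 : q.1 = r.1
          · have h4 : r.snd' ≠ q.snd' := fun h => hqr (MIdx.ext' h3 h.symm)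
            simp [h1, h4]
          · simp [h1, h3]
  apply li_of_dual _ φ
  · intro q
    by_cases h : q.snd' = q.1
    · rw [hφ1 q q h]; simp
    · rw [hφ2 q q h]; simp
  · intro q r hqr
    by_cases h : q.snd' = q.1
    · rw [hφ1 q r h, if_neg hqr]
    · rw [hφ2 q r h, if_neg hqr]

theorem mot_orth {d : ℕ} (X : Finset V) (p : V → Fin d → ℝ) (q : MIdx d) (u v : V)
    (hu : u ∈ X) (hv : v ∈ X) :
    (fun x : X × Fin d => row p s(u,v) (x.1, x.2)) ⬝ᵥ mot X p q = 0 := by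
  simp only [dotProduct, row_mk, Fintype.sum_prod_type]
  rw [Finset.sum_comm]
  have h1 : ∀ l : Fin d, (∑ x : X, ((if (x : V) = u then p u l - p v l else 0) +
      (if (x : V) = v then p v l - p u l else 0)) * mot X p q (x, l))
      = (p u l - p v l) * (mot X p q (⟨u, hu⟩, l) - mot X p q (⟨v, hv⟩, l)) := by
    intro l
    simp only [add_mul, ite_mul, zero_mul, Finset.sum_add_distrib]
    rw [Finset.sum_eq_single (⟨u, hu⟩ : X), Finset.sum_eq_single (⟨v, hv⟩ : X)]
    · simp; ring
    · intro b _ hb; rw [if_neg]; exact fun h => hb (Subtype.ext h)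
    · simp
    · intro b _ hb; rw [if_neg]; exact fun h => hb (Subtype.ext h)
    · simp
  simp only [h1]
  by_cases hq : q.snd' = q.1
  · simp [mot, hq]
  · have h2 : ∀ l : Fin d, (p u l - p v l) * (mot X p q (⟨u, hu⟩, l) - mot X p q (⟨v, hv⟩, l)) =
      (if l = q.snd' then (p u l - p v l) * (p u q.1 - p v q.1) else 0) -
      (if l = q.1 then (p u l - p v l) * (p u q.snd' - p v q.snd') else 0) := by
      intro l
      simp only [mot, hq, if_false]
      split_ifs <;> ring
    simp only [h2, Finset.sum_sub_distrib, Finset.sum_ite_eq', Finset.mem_univ, if_true]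
    ring

theorem sparse_at {d : ℕ} (X : Finset V) (p : V → Fin d → ℝ) (hm : LinearIndependent ℝ (mot X p))
    (F : Finset (Sym2 V)) (hF : LinearIndepOn ℝ (row p) (F : Set (Sym2 V)))
    (hFX : ∀ e ∈ F, ∀ x ∈ e, x ∈ X) : 2 * F.card + d * (d + 1) ≤ 2 * (d * X.card) := by
  classical
  let res : (V × Fin d → ℝ) →ₗ[ℝ] (X × Fin d → ℝ) := LinearMap.funLeft ℝ ℝ (fun x => (x.1, x.2))
  have h1 : LinearIndependent ℝ (fun e : F => res (row p e)) := by
    have hF' : LinearIndependent ℝ (fun e : F => row p e) := hF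
    refine LinearIndependent.map hF' ?_
    rw [Submodule.disjoint_def]
    intro z hz hk
    have hz' : ∀ x : V, x ∉ X → ∀ l, z (x, l) = 0 := by
      intro x hx l
      clear hk
      induction hz using Submodule.span_induction with
      | mem z hz =>
        obtain ⟨e, rfl⟩ := hz
        exact row_avoid p _ x (fun h => hx (hFX e e.2 x h)) l
      | zero => rfl
      | add a b _ _ ha hb => simp [ha, hb]
      | smul c a _ ha => simp [ha]
    funext ⟨x, l⟩
    by_cases hx : x ∈ X
    · exact congrFun hk (⟨x, hx⟩, l)
    · exact hz' x hx l
  have hd : Disjoint (Submodule.span ℝ (Set.range (fun e : F => res (row p e))))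
      (Submodule.span ℝ (Set.range (mot X p))) := by
    rw [Submodule.disjoint_def]
    have horth : ∀ z ∈ Submodule.span ℝ (Set.range (fun e : F => res (row p e))),
        ∀ y ∈ Submodule.span ℝ (Set.range (mot X p)), z ⬝ᵥ y = 0 := by
      intro z hz y hy
      induction hz, hy using Submodule.span_induction₂ with
      | mem_mem a b ha hb =>
        obtain ⟨⟨e, he⟩, rfl⟩ := ha
        obtain ⟨q, rfl⟩ := hb
        induction e using Sym2.ind with
        | _ u v => exact mot_orth X p q u v (hFX _ he u (by simp)) (hFX _ he v (by simp))
      | zero_left => simp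
      | zero_right => simp
      | add_left x y z _ _ _ h1 h2 => simp [add_dotProduct, h1, h2]
      | add_right x y z _ _ _ h1 h2 => simp [dotProduct_add, h1, h2]
      | smul_left r x y _ _ h => simp [smul_dotProduct, h]
      | smul_right r x y _ _ h => simp [dotProduct_smul, h]
    intro z hz hy
    exact dotProduct_self_eq_zero.1 (horth z hz z hy)
  have h2 := LinearIndependent.sum_type h1 hm hd
  have h3 := h2.fintype_card_le_finrank
  have h4 := card_MIdx d
  simp only [Fintype.card_sum, Fintype.card_coe, Module.finrank_fintype_fun_eq_card,
    Fintype.card_prod, Fintype.card_fin] at h3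
  have : X.card * d = d * X.card := mul_comm _ _
  omega

end Thom


namespace Thom

structure UMat (V : Type*) [DecidableEq V] (d : ℕ) where
  MI : Finset (Sym2 V) → Prop
  Q : Sym2 V → (V × Fin d → ℝ) × (V × Fin d → ℝ)
  mono : ∀ F F', MI F → F' ⊆ F → MI F'
  empty : MI ∅
  ext0 : ∀ F v A, MI F → (∀ e ∈ F, v ∉ e) → v ∉ A → A.card ≤ d → MI (F ∪ star v A)
  ext1 : ∀ F v u w A, MI (insert s(u,w) F) → s(u,w) ∉ F → (∀ e ∈ F, v ∉ e) → u ≠ w → u ≠ v →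
    w ≠ v → v ∉ A → u ∉ A → w ∉ A → A.card + 1 ≤ d → MI (F ∪ star v (insert u (insert w A)))
  sparse : ∀ (F : Finset (Sym2 V)) (X : Finset V), MI F → (∀ e ∈ F, ∀ x ∈ e, x ∈ X) → d ≤ X.card →
    2 * F.card + d * (d + 1) ≤ 2 * (d * X.card)
  split : ∀ F : Finset (Sym2 V), LinearIndepOn ℝ Q (F : Set (Sym2 V)) ↔ ∃ F1 ⊆ F, MI F1 ∧ MI (F \ F1)

theorem genP_row {V : Type*} [DecidableEq V] {d : ℕ} (F : Finset (Sym2 V)) :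
    GenP (fun p : V → Fin d → ℝ => LinearIndepOn ℝ (row p) (F : Set (Sym2 V))) :=
  genP_li (fun (p : V → Fin d → ℝ) (e : (F : Set (Sym2 V))) => row p e.1)
    (fun a b t i => row_affine a b t i.1)

theorem genP_diff {V : Type*} {d : ℕ} (v : V) (A : Finset V) :
    GenP (fun p : V → Fin d → ℝ => LinearIndepOn ℝ (fun x => p v - p x) (A : Set V)) := by
  refine genP_li (fun (p : V → Fin d → ℝ) (x : (A : Set V)) => p v - p x) (fun a b t i => ?_)
  funext l
  simp only [Pi.add_apply, Pi.sub_apply, Pi.smul_apply, smul_eq_mul]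
  ring

theorem genP_midv {V : Type*} {d : ℕ} (u w : V) (A : Finset V) :
    GenP (fun p : V → Fin d → ℝ => LinearIndepOn ℝ (midv u w p) (A : Set V)) := by
  refine genP_li (fun (p : V → Fin d → ℝ) (x : (A : Set V)) => midv u w p x) (fun a b t i => ?_)
  funext l
  simp only [midv, Pi.add_apply, Pi.sub_apply, Pi.smul_apply, smul_eq_mul]
  ring

theorem genP_mot {V : Type*} [DecidableEq V] {d : ℕ} (X : Finset V) :
    GenP (fun p : V → Fin d → ℝ => LinearIndependent ℝ (mot X p)) :=
  genP_li (fun p i => mot X p i) (fun a b t i => mot_affine X a b t i)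

theorem diff_exists {V : Type*} [DecidableEq V] {d : ℕ} (v : V) (A : Finset V) (hv : v ∉ A)
    (hA : A.card ≤ d) :
    ∃ p : V → Fin d → ℝ, LinearIndepOn ℝ (fun x => p v - p x) (A : Set V) := by
  classical
  obtain ⟨g⟩ : Nonempty (A ↪ Fin d) := by
    apply Function.Embedding.nonempty_of_card_le
    simpa using hA
  refine ⟨fun x => if h : x ∈ A then Pi.single (g ⟨x, h⟩) 1 else 0, ?_⟩
  refine li_of_dual _ (fun x : (A : Set V) => LinearMap.proj (R := ℝ) (φ := fun _ : Fin d => ℝ)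
    (g ⟨x.1, x.2⟩)) ?_ ?_
  · rintro ⟨x, hx⟩
    have hx' : x ∈ A := hx
    simp [hv, hx']
  · rintro ⟨x, hx⟩ ⟨y, hy⟩ hxy
    have hx' : x ∈ A := hx
    have hy' : y ∈ A := hy
    have : g ⟨x, hx⟩ ≠ g ⟨y, hy⟩ := fun h => hxy (by
      have := g.injective h
      simpa using this)
    simp [hv, hy', this]

theorem midv_exists {V : Type*} [DecidableEq V] {d : ℕ} (u w : V) (A : Finset V) (huw : u ≠ w)
    (hu : u ∉ A) (hw : w ∉ A) (hA : A.card + 1 ≤ d) :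
    ∃ p : V → Fin d → ℝ, LinearIndepOn ℝ (midv u w p) ((insert u A : Finset V) : Set V) := by
  classical
  obtain ⟨g⟩ : Nonempty ((insert u A : Finset V) ↪ Fin d) := by
    apply Function.Embedding.nonempty_of_card_le
    simpa [Finset.card_insert_of_notMem hu] using hA
  have huI : u ∈ insert u A := Finset.mem_insert_self u A
  refine ⟨fun x => if h : x ∈ insert u A then Pi.single (g ⟨x, h⟩) 1 else
    if x = w then - Pi.single (g ⟨u, huI⟩) 1 else 0, ?_⟩
  have hwI : w ∉ insert u A := by simp [huw.symm, hw]
  refine li_of_dual _ (fun x : ((insert u A : Finset V) : Set V) => LinearMap.proj (R := ℝ)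
    (φ := fun _ : Fin d => ℝ) (g ⟨x.1, x.2⟩)) ?_ ?_
  · rintro ⟨x, hx⟩
    have hx' : x ∈ insert u A := hx
    simp only [midv, dif_pos hx', dif_pos huI, dif_neg hwI]
    simp
  · rintro ⟨x, hx⟩ ⟨y, hy⟩ hxy
    have hx' : x ∈ insert u A := hx
    have hy' : y ∈ insert u A := hy
    have : g ⟨x, hx⟩ ≠ g ⟨y, hy⟩ := fun h => hxy (by
      have := g.injective h
      simpa using this)
    simp only [midv, dif_pos hy', dif_pos huI, dif_neg hwI]
    simp [this]

theorem exists_gen (V : Type*) [DecidableEq V] [Fintype V] (d : ℕ) :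
    ∃ p : V → Fin d → ℝ,
      (∀ F : Finset (Sym2 V), (∃ p' : V → Fin d → ℝ, LinearIndepOn ℝ (row p') (F : Set (Sym2 V))) →
        LinearIndepOn ℝ (row p) (F : Set (Sym2 V))) ∧
      (∀ (v : V) (A : Finset V), v ∉ A → A.card ≤ d →
        LinearIndepOn ℝ (fun x => p v - p x) (A : Set V)) ∧
      (∀ (u w : V) (A : Finset V), u ≠ w → u ∉ A → w ∉ A → A.card + 1 ≤ d →
        LinearIndepOn ℝ (midv u w p) ((insert u A : Finset V) : Set V)) ∧
      (∀ X : Finset V, d ≤ X.card → LinearIndependent ℝ (mot X p)) := by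
  classical
  let I1 := {F : Finset (Sym2 V) // ∃ p' : V → Fin d → ℝ, LinearIndepOn ℝ (row p') (F : Set (Sym2 V))}
  let I2 := {q : V × Finset V // q.1 ∉ q.2 ∧ q.2.card ≤ d}
  let I3 := {q : V × V × Finset V // q.1 ≠ q.2.1 ∧ q.1 ∉ q.2.2 ∧ q.2.1 ∉ q.2.2 ∧ q.2.2.card + 1 ≤ d}
  let I4 := {X : Finset V // d ≤ X.card}
  let P : (I1 ⊕ I2) ⊕ (I3 ⊕ I4) → (V → Fin d → ℝ) → Prop := fun i p =>
    match i with
    | Sum.inl (Sum.inl F) => LinearIndepOn ℝ (row p) (F.1 : Set (Sym2 V))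
    | Sum.inl (Sum.inr q) => LinearIndepOn ℝ (fun x => p q.1.1 - p x) (q.1.2 : Set V)
    | Sum.inr (Sum.inl q) => LinearIndepOn ℝ
        (midv q.1.1 q.1.2.1 p) ((insert q.1.1 q.1.2.2 : Finset V) : Set V)
    | Sum.inr (Sum.inr X) => LinearIndependent ℝ (mot X.1 p)
  have hgen : ∀ i, GenP (P i) := by
    rintro ((F | q) | (q | X))
    · exact genP_row F.1
    · exact genP_diff q.1.1 q.1.2
    · exact genP_midv q.1.1 q.1.2.1 _
    · exact genP_mot X.1
  have hne : ∀ i, ∃ p, P i p := by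
    rintro ((F | q) | (q | X))
    · exact F.2
    · exact diff_exists q.1.1 q.1.2 q.2.1 q.2.2
    · exact midv_exists q.1.1 q.1.2.1 q.1.2.2 q.2.1 q.2.2.1 q.2.2.2.1 q.2.2.2.2
    · exact mot_exists X.1 X.2
  obtain ⟨p, hp⟩ := GenP.exists_common P hgen hne
  refine ⟨p, ?_, ?_, ?_, ?_⟩
  · intro F hF
    exact hp (Sum.inl (Sum.inl ⟨F, hF⟩))
  · intro v A h1 h2
    exact hp (Sum.inl (Sum.inr ⟨(v, A), h1, h2⟩))
  · intro u w A h1 h2 h3 h4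
    exact hp (Sum.inr (Sum.inl ⟨(u, w, A), h1, h2, h3, h4⟩))
  · intro X hX
    exact hp (Sum.inr (Sum.inr ⟨X, hX⟩))

theorem exists_scal {E W : Type*} [DecidableEq E] [Fintype E] [AddCommGroup W] [Module ℝ W] (R : E → W) :
    ∃ a b : E → ℝ, ∀ F : Finset E, (∃ F1 ⊆ F, LinearIndepOn ℝ R (F1 : Set E) ∧
      LinearIndepOn ℝ R ((F \ F1 : Finset E) : Set E)) →
      LinearIndepOn ℝ (fun e => ((a e • R e, b e • R e) : W × W)) (F : Set E) := by
  classical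
  let I := {F : Finset E // ∃ F1 ⊆ F, LinearIndepOn ℝ R (F1 : Set E) ∧
      LinearIndepOn ℝ R ((F \ F1 : Finset E) : Set E)}
  let P : I → ((E → ℝ) × (E → ℝ)) → Prop := fun F c =>
    LinearIndependent ℝ (fun e : (F.1 : Set E) => ((c.1 e • R e, c.2 e • R e) : W × W))
  suffices h : ∃ c, ∀ i, P i c by
    obtain ⟨⟨a, b⟩, h⟩ := h
    exact ⟨a, b, fun F hF => h ⟨F, hF⟩⟩
  apply GenP.exists_common P
  · intro F
    refine genP_li (fun (c : (E → ℝ) × (E → ℝ)) (e : (F.1 : Set E)) => ((c.1 e • R e, c.2 e • R e) : W × W))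
      (fun c c' t i => ?_)
    ext1
    · simp [add_smul, sub_smul, mul_smul, smul_sub]
    · simp [add_smul, sub_smul, mul_smul, smul_sub]
  · rintro ⟨F, F1, hF1, h1, h2⟩
    refine ⟨(fun e => if e ∈ F1 then 1 else 0, fun e => if e ∈ F1 then 0 else 1), ?_⟩
    have hF : (F : Set E) = (F1 : Set E) ∪ ((F \ F1 : Finset E) : Set E) := by
      rw [← Finset.coe_union, Finset.union_sdiff_of_subset hF1]
    change LinearIndepOn ℝ (fun e => (((if e ∈ F1 then (1:ℝ) else 0) • R e,
      (if e ∈ F1 then (0:ℝ) else 1) • R e) : W × W)) (F : Set E)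
    rw [hF]
    refine block _ (LinearMap.snd ℝ W W) _ _ ?_ ?_ ?_
    · intro e he
      have : e ∈ F1 := he
      simp [this]
    · refine LinearIndependent.of_comp (LinearMap.fst ℝ W W) ?_
      change LinearIndepOn ℝ (fun e => (LinearMap.fst ℝ W W) (((if e ∈ F1 then (1:ℝ) else 0) • R e,
        (if e ∈ F1 then (0:ℝ) else 1) • R e) : W × W)) (F1 : Set E)
      refine (linearIndepOn_congr ?_).2 h1
      intro e he
      have : e ∈ F1 := he
      simp [this]
    · refine (linearIndepOn_congr ?_).2 h2
      intro e he
      have : e ∉ F1 := (Finset.mem_sdiff.1 (Finset.mem_coe.1 he)).2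
      simp [this]

theorem exists_UMat (V : Type*) [DecidableEq V] [Fintype V] (d : ℕ) : Nonempty (UMat V d) := by
  classical
  obtain ⟨p, h1, h2, h3, h4⟩ := exists_gen V d
  obtain ⟨a, b, hab⟩ := exists_scal (row p)
  exact ⟨{
    MI := fun F => LinearIndepOn ℝ (row p) (F : Set (Sym2 V))
    Q := fun e => (a e • row p e, b e • row p e)
    mono := fun F F' hF h => hF.mono (by exact_mod_cast h)
    empty := by simp
    ext0 := fun F v A hF hv hA hc => ext0_at p F v A hF hv hA (h2 v A hA hc)
    ext1 := fun F v u w A hF hn hv huw hu hw hvA huA hwA hc =>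
      h1 _ (ext1_at p F v u w A huw hu hw hn hF hv hvA huA hwA (h3 u w A huw huA hwA hc))
    sparse := fun F X hF hX hd => sparse_at X p (h4 X hd) F hF hX
    split := fun F => ⟨fun h => split_pair (row p) a b F h, fun h => hab F h⟩ }⟩

end Thom


namespace Thom

theorem mem_star {V : Type*} [DecidableEq V] {v : V} {A : Finset V} {e : Sym2 V} :
    e ∈ star v A ↔ ∃ x ∈ A, s(v, x) = e := by simp [star]

theorem star_card {V : Type*} [DecidableEq V] (v : V) (A : Finset V) : (star v A).card = A.card := by
  apply Finset.card_image_of_injective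
  intro x y h
  rcases (by simpa using h : x = y ∨ v = y ∧ x = v) with h | ⟨h1, h2⟩
  · exact h
  · exact h2.trans h1

theorem card_union_star {V : Type*} [DecidableEq V] (F : Finset (Sym2 V)) (v : V) (A : Finset V)
    (hF : ∀ e ∈ F, v ∉ e) : (F ∪ star v A).card = F.card + A.card := by
  rw [Finset.card_union_of_disjoint, star_card]
  rw [Finset.disjoint_left]
  intro e he hs
  obtain ⟨x, _, rfl⟩ := mem_star.1 hs
  exact hF _ he (by simp)

theorem star_union {V : Type*} [DecidableEq V] (v : V) (A B : Finset V) :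
    star v (A ∪ B) = star v A ∪ star v B := Finset.image_union _ _

theorem star_insert {V : Type*} [DecidableEq V] (v u : V) (B : Finset V) :
    star v (insert u B) = insert s(v,u) (star v B) := Finset.image_insert _ _ _

theorem split_card {α : Type*} [DecidableEq α] (A : Finset α) (a b : ℕ) (h : A.card ≤ a + b) :
    ∃ A1 A2, A = A1 ∪ A2 ∧ A1.card ≤ a ∧ A2.card ≤ b := by
  obtain ⟨A1, h1, h2⟩ := Finset.exists_subset_card_eq (s := A) (n := min a A.card) (by omega)
  refine ⟨A1, A \ A1, (Finset.union_sdiff_of_subset h1).symm, by omega, ?_⟩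
  rw [Finset.card_sdiff_of_subset h1]
  omega

namespace UMat

variable {V : Type*} [DecidableEq V] {d : ℕ} (U : UMat V d)

def I (F : Finset (Sym2 V)) : Prop := LinearIndepOn ℝ U.Q (F : Set (Sym2 V))

noncomputable def r (F : Finset (Sym2 V)) : ℕ :=
  Module.finrank ℝ (Submodule.span ℝ (U.Q '' (F : Set (Sym2 V))))

theorem I_of_cover {F F1 F2 : Finset (Sym2 V)} (h1 : U.MI F1) (h2 : U.MI F2) (h : F ⊆ F1 ∪ F2) :
    U.I F := by
  refine (U.split F).2 ⟨F ∩ F1, Finset.inter_subset_left, U.mono _ _ h1 Finset.inter_subset_right,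
    U.mono _ _ h2 ?_⟩
  intro e he
  have := @h e
  simp only [Finset.mem_sdiff, Finset.mem_inter, Finset.mem_union] at he this
  tauto

theorem I_split {F : Finset (Sym2 V)} (h : U.I F) :
    ∃ F1 F2, F = F1 ∪ F2 ∧ Disjoint F1 F2 ∧ U.MI F1 ∧ U.MI F2 := by
  obtain ⟨F1, hs, h1, h2⟩ := (U.split F).1 h
  exact ⟨F1, F \ F1, (Finset.union_sdiff_of_subset hs).symm, Finset.disjoint_sdiff, h1, h2⟩

theorem I_mono {F F' : Finset (Sym2 V)} (h : U.I F) (hs : F' ⊆ F) : U.I F' :=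
  LinearIndepOn.mono h (by exact_mod_cast hs)

theorem ext0U {F : Finset (Sym2 V)} {v : V} {A : Finset V} (h : U.I F) (hv : ∀ e ∈ F, v ∉ e)
    (hA : v ∉ A) (hc : A.card ≤ 2 * d) : U.I (F ∪ star v A) := by
  obtain ⟨F1, F2, rfl, hd, h1, h2⟩ := U.I_split h
  obtain ⟨A1, A2, rfl, c1, c2⟩ := split_card A d d (by omega)
  simp only [Finset.mem_union, not_or] at hA hv
  refine U.I_of_cover (U.ext0 F1 v A1 h1 (fun e he => hv e (Or.inl he)) hA.1 c1)
    (U.ext0 F2 v A2 h2 (fun e he => hv e (Or.inr he)) hA.2 c2) ?_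
  rw [star_union]
  intro e
  simp only [Finset.mem_union]
  tauto

theorem ext1U {F : Finset (Sym2 V)} {v u w : V} {A : Finset V} (hd1 : 1 ≤ d)
    (h : U.I (insert s(u,w) F)) (hn : s(u,w) ∉ F)
    (hv : ∀ e ∈ F, v ∉ e) (huw : u ≠ w) (huv : u ≠ v) (hwv : w ≠ v)
    (hA : v ∉ A) (huA : u ∉ A) (hwA : w ∉ A) (hc : A.card + 1 ≤ 2 * d) :
    U.I (F ∪ star v (insert u (insert w A))) := by
  obtain ⟨F1, F2, hF, hd, h1, h2⟩ := U.I_split h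
  obtain ⟨A1, A2, rfl, c1, c2⟩ := split_card A (d - 1) d (by omega)
  simp only [Finset.mem_union, not_or] at hA huA hwA
  have key : ∀ F1 F2 : Finset (Sym2 V), insert s(u,w) F = F1 ∪ F2 → Disjoint F1 F2 → U.MI F1 → U.MI F2 →
      s(u,w) ∈ F1 → U.I (F ∪ star v (insert u (insert w (A1 ∪ A2)))) := by
    intro F1 F2 hF hd h1 h2 hm
    have hm2 : s(u,w) ∉ F2 := Finset.disjoint_left.1 hd hm
    have hsub : ∀ e, e ∈ F1 ∨ e ∈ F2 → e ≠ s(u,w) → e ∈ F := by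
      intro e he hne
      have : e ∈ insert s(u,w) F := by rw [hF]; exact Finset.mem_union.2 he
      exact (Finset.mem_insert.1 this).resolve_left hne
    have e1 : ∀ e ∈ F1.erase s(u,w), v ∉ e := fun e he =>
      hv e (hsub e (Or.inl (Finset.mem_of_mem_erase he)) (Finset.ne_of_mem_erase he))
    have e2 : ∀ e ∈ F2, v ∉ e := fun e he =>
      hv e (hsub e (Or.inr he) (fun h => hm2 (h ▸ he)))
    have m1 := U.ext1 (F1.erase s(u,w)) v u w A1 (by rwa [Finset.insert_erase hm])
      (Finset.notMem_erase _ _) e1 huw huv hwv hA.1 huA.1 hwA.1 (by omega)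
    have m2 := U.ext0 F2 v A2 h2 e2 hA.2 c2
    refine U.I_of_cover m1 m2 ?_
    simp only [star_union, star_insert]
    intro e he
    simp only [Finset.mem_union, Finset.mem_insert, Finset.mem_erase] at he ⊢
    rcases he with he | he
    · have : e ∈ F1 ∪ F2 := by rw [← hF]; exact Finset.mem_insert_of_mem he
      have hne : e ≠ s(u,w) := fun h => hn (h ▸ he)
      rcases Finset.mem_union.1 this with h | h
      · exact Or.inl (Or.inl ⟨hne, h⟩)
      · exact Or.inr (Or.inl h)
    · tauto
  have hm : s(u,w) ∈ F1 ∪ F2 := by rw [← hF]; exact Finset.mem_insert_self _ _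
  rcases Finset.mem_union.1 hm with hm | hm
  · exact key F1 F2 hF hd h1 h2 hm
  · exact key F2 F1 (by rw [hF, Finset.union_comm]) hd.symm h2 h1 hm

theorem upper {F : Finset (Sym2 V)} (h : U.I F) (X : Finset V) (hX : ∀ e ∈ F, ∀ x ∈ e, x ∈ X)
    (hd : d ≤ X.card) : F.card + d * (d + 1) ≤ 2 * (d * X.card) := by
  obtain ⟨F1, F2, rfl, hdj, h1, h2⟩ := U.I_split h
  have a1 := U.sparse F1 X h1 (fun e he => hX e (Finset.mem_union_left _ he)) hd
  have a2 := U.sparse F2 X h2 (fun e he => hX e (Finset.mem_union_right _ he)) hd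
  rw [Finset.card_union_of_disjoint hdj]
  omega

section rank
variable [Fintype V]

theorem exists_basis (F : Finset (Sym2 V)) : ∃ B ⊆ F, U.I B ∧ B.card = U.r F ∧
    Submodule.span ℝ (U.Q '' (B : Set (Sym2 V))) = Submodule.span ℝ (U.Q '' (F : Set (Sym2 V))) := by
  classical
  obtain ⟨b, hbF, -, hsp, hli⟩ := exists_linearIndepOn_extension
    (linearIndepOn_empty ℝ U.Q) (Set.empty_subset (F : Set (Sym2 V)))
  have hfin : b.Finite := (Finset.finite_toSet F).subset hbF
  obtain ⟨B, rfl⟩ := hfin.exists_finset_coe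
  have hs : Submodule.span ℝ (U.Q '' (B : Set (Sym2 V))) = Submodule.span ℝ (U.Q '' (F : Set (Sym2 V))) :=
    le_antisymm (Submodule.span_mono (Set.image_mono hbF)) (Submodule.span_le.2 hsp)
  refine ⟨B, by exact_mod_cast hbF, hli, ?_, hs⟩
  rw [r, ← hs, Set.image_eq_range]
  have := finrank_span_eq_card (R := ℝ) (b := fun x : (B : Set (Sym2 V)) => U.Q x) hli
  rw [this]
  simp

theorem card_le_r {B F : Finset (Sym2 V)} (h : U.I B) (hs : B ⊆ F) : B.card ≤ U.r F := by
  have h1 := finrank_span_eq_card (R := ℝ) (b := fun x : (B : Set (Sym2 V)) => U.Q x) h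
  rw [← Set.image_eq_range] at h1
  have h2 : Module.finrank ℝ (Submodule.span ℝ (U.Q '' (B : Set (Sym2 V)))) ≤ U.r F :=
    Submodule.finrank_mono (Submodule.span_mono (Set.image_mono (by exact_mod_cast hs)))
  rw [h1] at h2
  simpa using h2

end rank

section build

def build (g : ℕ → V) (back : ℕ → Finset ℕ) : ℕ → Finset (Sym2 V)
  | 0 => ∅
  | m + 1 => build g back m ∪ star (g m) ((back m).image g)

theorem mem_build (g : ℕ → V) (back : ℕ → Finset ℕ) (m : ℕ) (e : Sym2 V) :
    e ∈ build g back m ↔ ∃ i < m, ∃ j ∈ back i, e = s(g i, g j) := by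
  induction m with
  | zero => simp [build]
  | succ m ih =>
    simp only [build, Finset.mem_union, ih, mem_star, Finset.mem_image]
    constructor
    · rintro (⟨i, hi, j, hj, rfl⟩ | ⟨_, ⟨j, hj, rfl⟩, rfl⟩)
      · exact ⟨i, by omega, j, hj, rfl⟩
      · exact ⟨m, by omega, j, hj, rfl⟩
    · rintro ⟨i, hi, j, hj, rfl⟩
      by_cases h : i < m
      · exact Or.inl ⟨i, h, j, hj, rfl⟩
      · obtain rfl : i = m := by omega
        exact Or.inr ⟨_, ⟨j, hj, rfl⟩, rfl⟩

theorem build_spec (g : ℕ → V) (back : ℕ → Finset ℕ) (m : ℕ) (hg : Set.InjOn g (Set.Iio m))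
    (hb : ∀ i, ∀ j ∈ back i, j < i) (hc : ∀ i, (back i).card ≤ d) :
    U.MI (build g back m) ∧ (build g back m).card = ∑ i ∈ Finset.range m, (back i).card := by
  induction m with
  | zero => exact ⟨U.empty, rfl⟩
  | succ m ih =>
    obtain ⟨h1, h2⟩ := ih (hg.mono (fun i hi => by simp only [Set.mem_Iio] at hi ⊢; omega))
    have hne : ∀ i < m, g m ≠ g i := by
      intro i hi h
      have := hg (by simp : m ∈ Set.Iio (m+1)) (by simp only [Set.mem_Iio]; omega : i ∈ Set.Iio (m+1)) h
      omega
    have hav : ∀ e ∈ build g back m, g m ∉ e := by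
      intro e he
      obtain ⟨i, hi, j, hj, rfl⟩ := (mem_build g back m e).1 he
      simp [hne i hi, hne j ((hb i j hj).trans hi)]
    have hcard : ((back m).image g).card = (back m).card := by
      apply Finset.card_image_of_injOn
      refine hg.mono ?_
      intro j hj
      have := hb m j hj
      simp only [Set.mem_Iio]; omega
    refine ⟨U.ext0 _ _ _ h1 hav ?_ (by rw [hcard]; exact hc m), ?_⟩
    · intro h
      obtain ⟨j, hj, h⟩ := Finset.mem_image.1 h
      exact hne j (hb m j hj) h.symm
    · rw [build, card_union_star _ _ _ hav, hcard, h2, Finset.sum_range_succ]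

def bk (d i : ℕ) : Finset ℕ :=
  if i < d then Finset.range i else if i < 3 * d then Finset.range d else
    if i < 4 * d then Finset.Ico (2 * d) (3 * d) else
      if i < 5 * d then Finset.Ico d (2 * d) else Finset.range d

theorem bk_card (d i : ℕ) : (bk d i).card = min i d := by
  unfold bk
  split_ifs <;> simp only [Finset.card_range, Nat.card_Ico] <;> omega

theorem mem_bk (d i j : ℕ) : j ∈ bk d i ↔ (i < d ∧ j < i) ∨ (d ≤ i ∧ i < 3 * d ∧ j < d) ∨
    (3 * d ≤ i ∧ i < 4 * d ∧ 2 * d ≤ j ∧ j < 3 * d) ∨ (4 * d ≤ i ∧ i < 5 * d ∧ d ≤ j ∧ j < 2 * d) ∨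
    (5 * d ≤ i ∧ j < d) := by
  unfold bk
  split_ifs <;> simp only [Finset.mem_range, Finset.mem_Ico] <;> omega

def rho (d i : ℕ) : ℕ := if i < 5 * d then 5 * d - 1 - i else i

theorem sum_min (d m : ℕ) (h : d ≤ m) :
    2 * ∑ i ∈ Finset.range m, min i d + d * (d + 1) = 2 * (d * m) := by
  induction m, h using Nat.le_induction with
  | base =>
    have : ∑ i ∈ Finset.range d, min i d = ∑ i ∈ Finset.range d, i :=
      Finset.sum_congr rfl (fun i hi => min_eq_left (Finset.mem_range.1 hi).le)
    rw [this, mul_comm, Finset.sum_range_id_mul_two]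
    cases d with
    | zero => rfl
    | succ n => simp; ring
  | succ m hm ih =>
    rw [Finset.sum_range_succ, min_eq_right hm]
    have : d * (m + 1) = d * m + d := by ring
    omega

theorem full (hd1 : 1 ≤ d) (C : Finset V) (hC : 5 * d ≤ C.card) :
    ∃ F, U.I F ∧ F.card + d * (d + 1) = 2 * (d * C.card) ∧
      ∀ e ∈ F, ∃ u ∈ C, ∃ v ∈ C, u ≠ v ∧ e = s(u,v) := by
  classical
  set m := C.card with hm
  let eqv := C.equivFin
  have hm0 : 0 < m := by omega
  let g : ℕ → V := fun i => if h : i < m then (eqv.symm ⟨i, h⟩ : V) else (eqv.symm ⟨0, hm0⟩ : V)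
  have hgC : ∀ i, g i ∈ C := by
    intro i
    simp only [g]
    split_ifs
    · exact (eqv.symm _).2
    · exact (eqv.symm _).2
  have hg : ∀ i j, i < m → j < m → g i = g j → i = j := by
    intro i j hi hj h
    simp only [g, hi, hj, dif_pos] at h
    have := eqv.symm.injective (Subtype.ext h)
    simpa using this
  have hrlt : ∀ i < m, rho d i < m := by
    intro i hi; unfold rho; split_ifs <;> omega
  have hrinj : ∀ i j, rho d i = rho d j → i = j := by
    intro i j; unfold rho; split_ifs <;> omega
  have hblt : ∀ i, ∀ j ∈ bk d i, j < i := by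
    intro i j h; rw [mem_bk] at h; omega
  have hbc : ∀ i, (bk d i).card ≤ d := by intro i; rw [bk_card]; omega
  have s1 := U.build_spec g (bk d) m (fun i hi j hj h => hg i j hi hj h) hblt hbc
  have s2 := U.build_spec (fun i => g (rho d i)) (bk d) m
    (fun i hi j hj h => hrinj i j (hg _ _ (hrlt i hi) (hrlt j hj) h)) hblt hbc
  have hdj : Disjoint (build g (bk d) m) (build (fun i => g (rho d i)) (bk d) m) := by
    rw [Finset.disjoint_left]
    intro e h1 h2
    obtain ⟨i, hi, j, hj, rfl⟩ := (mem_build _ _ _ _).1 h1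
    obtain ⟨i', hi', j', hj', h⟩ := (mem_build _ _ _ _).1 h2
    have hjl := (hblt i j hj).trans hi
    have hjl' := (hblt i' j' hj').trans hi'
    rw [mem_bk] at hj hj'
    rcases Sym2.eq_iff.1 h with ⟨a, b⟩ | ⟨a, b⟩
    · have a' := hg _ _ hi (hrlt _ hi') a
      have b' := hg _ _ hjl (hrlt _ hjl') b
      clear h a b h1 h2 s1 s2
      unfold rho at a' b'
      split_ifs at a' b' <;> omega
    · have a' := hg _ _ hi (hrlt _ hjl') a
      have b' := hg _ _ hjl (hrlt _ hi') b
      clear h a b h1 h2 s1 s2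
      unfold rho at a' b'
      split_ifs at a' b' <;> omega
  refine ⟨_, U.I_of_cover s1.1 s2.1 (le_refl _), ?_, ?_⟩
  · rw [Finset.card_union_of_disjoint hdj, s1.2, s2.2]
    simp only [bk_card]
    have := sum_min d m (by omega)
    omega
  · intro e he
    rcases Finset.mem_union.1 he with h | h
    · obtain ⟨i, hi, j, hj, rfl⟩ := (mem_build _ _ _ _).1 h
      have hjl := hblt i j hj
      refine ⟨_, hgC i, _, hgC j, fun h => ?_, rfl⟩
      have := hg _ _ hi (hjl.trans hi) h
      omega
    · obtain ⟨i, hi, j, hj, rfl⟩ := (mem_build _ _ _ _).1 h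
      have hjl := hblt i j hj
      refine ⟨_, hgC _, _, hgC _, fun h => ?_, rfl⟩
      have := hrinj _ _ (hg _ _ (hrlt _ hi) (hrlt _ (hjl.trans hi)) h)
      omega

end build

end UMat

end Thom


namespace Thom

section avg
variable {V : Type*} [DecidableEq V] [Fintype V] {n : ℕ}

def bef (σ : V ≃ Fin n) (M : Finset V) (v : V) : Finset V := M.filter (fun x => σ x < σ v)

theorem bef_swap (σ : V ≃ Fin n) (M : Finset V) (x v : V) (hx : x ∈ M) (hv : v ∈ M) :
    (bef ((Equiv.swap x v).trans σ) M x).card = (bef σ M v).card := by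
  have hsw : ∀ y ∈ M, Equiv.swap x v y ∈ M := by
    intro y hy
    rw [Equiv.swap_apply_def]
    split_ifs <;> assumption
  refine Finset.card_bij (fun y _ => Equiv.swap x v y) ?_ ?_ ?_
  · intro y hy
    simp only [bef, Finset.mem_filter, Equiv.trans_apply, Equiv.swap_apply_left] at hy ⊢
    exact ⟨hsw y hy.1, hy.2⟩
  · intro a _ b _ h
    exact (Equiv.swap x v).injective h
  · intro y hy
    simp only [bef, Finset.mem_filter] at hy
    refine ⟨Equiv.swap x v y, ?_, by simp⟩
    simp only [bef, Finset.mem_filter, Equiv.trans_apply, Equiv.swap_apply_left,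
      Equiv.swap_apply_self]
    exact ⟨hsw y hy.1, hy.2⟩

theorem bef_inj (σ : V ≃ Fin n) (M : Finset V) (x y : V) (hx : x ∈ M) (hy : y ∈ M)
    (h : (bef σ M x).card = (bef σ M y).card) : x = y := by
  have key : ∀ x y, x ∈ M → σ x < σ y → (bef σ M x).card < (bef σ M y).card := by
    intro x y hx hlt
    apply Finset.card_lt_card
    rw [Finset.ssubset_iff_of_subset]
    · exact ⟨x, by simp [bef, hx, hlt], by simp [bef]⟩
    · intro z hz
      simp only [bef, Finset.mem_filter] at hz ⊢
      exact ⟨hz.1, hz.2.trans hlt⟩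
  rcases lt_trichotomy (σ x) (σ y) with h1 | h1 | h1
  · have := key x y hx h1; omega
  · exact σ.injective h1
  · have := key y x hy h1; omega

theorem count_rank (M : Finset V) (v : V) (hv : v ∈ M) (j : ℕ) :
    M.card * (Finset.univ.filter (fun σ : V ≃ Fin n => (bef σ M v).card = j)).card ≤
      Fintype.card (V ≃ Fin n) := by
  have h1 : ∀ x ∈ M, (Finset.univ.filter (fun σ : V ≃ Fin n => (bef σ M v).card = j)).card =
      (Finset.univ.filter (fun σ : V ≃ Fin n => (bef σ M x).card = j)).card := by
    intro x hx
    refine Finset.card_bij (fun σ _ => (Equiv.swap x v).trans σ) ?_ ?_ ?_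
    · intro σ hσ
      simp only [Finset.mem_filter, Finset.mem_univ, true_and] at hσ ⊢
      rw [bef_swap σ M x v hx hv, hσ]
    · intro a _ b _ h
      ext y
      have := congrArg (fun f : V ≃ Fin n => f (Equiv.swap x v y)) h
      simp at this
      rw [this]
    · intro σ hσ
      simp only [Finset.mem_filter, Finset.mem_univ, true_and] at hσ
      refine ⟨(Equiv.swap x v).trans σ, ?_, by ext; simp⟩
      simp only [Finset.mem_filter, Finset.mem_univ, true_and]
      rw [Equiv.swap_comm, bef_swap σ M v x hv hx, hσ]
  rw [← smul_eq_mul, ← Finset.sum_const, Finset.sum_congr rfl h1]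
  simp only [Finset.card_filter]
  rw [Finset.sum_comm, ← Finset.card_univ, Finset.card_eq_sum_ones]
  refine Finset.sum_le_sum (fun σ _ => ?_)
  rw [← Finset.card_filter, Finset.card_le_one]
  intro a ha b hb
  simp only [Finset.mem_filter] at ha hb
  exact bef_inj σ M a b ha.1 hb.1 (ha.2.trans hb.2.symm)

theorem count_last (u w v : V) (huw : u ≠ w) (huv : u ≠ v) (hwv : w ≠ v) :
    Fintype.card (V ≃ Fin n) ≤
     3 * (Finset.univ.filter (fun σ : V ≃ Fin n => σ u < σ v ∧ σ w < σ v)).card := by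
  have hsw : ∀ x y z : V, x ≠ y → x ≠ z → y ≠ z →
      (Finset.univ.filter (fun σ : V ≃ Fin n => σ x < σ y ∧ σ z < σ y)).card ≤
      (Finset.univ.filter (fun σ : V ≃ Fin n => σ x < σ z ∧ σ y < σ z)).card := by
    intro x y z hxy hxz hyz
    refine Finset.card_le_card_of_injOn (fun σ => (Equiv.swap y z).trans σ) ?_ ?_
    · intro σ hσ
      simp only [Finset.coe_filter, Set.mem_ofPred_eq, Finset.mem_univ, true_and, Equiv.trans_apply,
        Equiv.swap_apply_left, Equiv.swap_apply_right] at hσ ⊢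
      rwa [Equiv.swap_apply_of_ne_of_ne hxy hxz]
    · intro a _ b _ h
      ext t
      have := congrArg (fun f : V ≃ Fin n => f (Equiv.swap y z t)) h
      simp at this
      rw [this]
  have h1 := hsw w u v huw.symm hwv huv
  have h2 := hsw u w v huw huv hwv
  have hcomm : (Finset.univ.filter (fun σ : V ≃ Fin n => σ w < σ v ∧ σ u < σ v)).card =
    (Finset.univ.filter (fun σ : V ≃ Fin n => σ u < σ v ∧ σ w < σ v)).card := by
    congr 1; ext σ; simp [and_comm]
  rw [hcomm] at h1
  have hcov : (Finset.univ : Finset (V ≃ Fin n)) ⊆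
      (Finset.univ.filter (fun σ : V ≃ Fin n => σ u < σ v ∧ σ w < σ v)) ∪
      ((Finset.univ.filter (fun σ : V ≃ Fin n => σ w < σ u ∧ σ v < σ u)) ∪
       (Finset.univ.filter (fun σ : V ≃ Fin n => σ u < σ w ∧ σ v < σ w))) := by
    intro σ _
    simp only [Finset.mem_union, Finset.mem_filter, Finset.mem_univ, true_and]
    have a1 : σ u ≠ σ w := fun h => huw (σ.injective h)
    have a2 : σ u ≠ σ v := fun h => huv (σ.injective h)
    have a3 : σ w ≠ σ v := fun h => hwv (σ.injective h)
    omega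
  have := Finset.card_le_card hcov
  rw [Finset.card_univ] at this
  have b1 := Finset.card_union_le (Finset.univ.filter (fun σ : V ≃ Fin n => σ u < σ v ∧ σ w < σ v))
    ((Finset.univ.filter (fun σ : V ≃ Fin n => σ w < σ u ∧ σ v < σ u)) ∪
       (Finset.univ.filter (fun σ : V ≃ Fin n => σ u < σ w ∧ σ v < σ w)))
  have b2 := Finset.card_union_le 
    ((Finset.univ.filter (fun σ : V ≃ Fin n => σ w < σ u ∧ σ v < σ u))) 
       (Finset.univ.filter (fun σ : V ≃ Fin n => σ u < σ w ∧ σ v < σ w))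
  omega

def gain (D : ℕ) (u w : V) (A : Finset V) : ℕ :=
  if A.card ≤ D then A.card else if u ∈ A ∧ w ∈ A then D + 1 else D

theorem gain_ineq (D : ℕ) (u w : V) (A : Finset V) :
    D + (if u ∈ A ∧ w ∈ A then 1 else 0) ≤ gain D u w A +
      ∑ j ∈ Finset.range (D + 1), (D + 1 - j) * (if A.card = j then 1 else 0) := by
  unfold gain
  by_cases h : A.card ≤ D
  · have h2 : (D + 1 - A.card) * (if A.card = A.card then 1 else 0) ≤
      ∑ j ∈ Finset.range (D + 1), (D + 1 - j) * (if A.card = j then 1 else 0) :=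
      Finset.single_le_sum (f := fun j => (D + 1 - j) * (if A.card = j then 1 else 0))
        (fun _ _ => Nat.zero_le _) (Finset.mem_range.2 (by omega))
    simp only [if_true, mul_one] at h2
    rw [if_pos h]
    split_ifs <;> omega
  · rw [if_neg h]
    split_ifs <;> omega

theorem sum_coef (D : ℕ) : 2 * ∑ j ∈ Finset.range (D + 1), (D + 1 - j) = (D + 1) * (D + 2) := by
  rw [← Finset.sum_range_reflect]
  have : ∀ j ∈ Finset.range (D + 1), (D + 1 - (D + 1 - 1 - j)) = j + 1 := by
    intro j hj
    have := Finset.mem_range.1 hj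
    omega
  rw [Finset.sum_congr rfl this, Finset.sum_add_distrib, mul_add, mul_comm 2,
    Finset.sum_range_id_mul_two]
  simp
  ring

theorem avg_one (D : ℕ) (u w v : V) (M : Finset V) (huw : u ≠ w) (hvM : v ∉ M) (hu : u ∈ M)
    (hw : w ∈ M) (hm : 3 * ((D + 1) * (D + 2)) ≤ 2 * (M.card + 1)) :
    Fintype.card (V ≃ Fin n) * D ≤ ∑ σ : V ≃ Fin n, gain D u w (bef σ M v) := by
  have hb : ∀ σ : V ≃ Fin n, bef σ (insert v M) v = bef σ M v := by
    intro σ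
    simp [bef, Finset.filter_insert]
  set N := Fintype.card (V ≃ Fin n) with hN
  set m := M.card + 1
  have h1 := Finset.sum_le_sum (fun (σ : V ≃ Fin n) (_ : σ ∈ Finset.univ) =>
    gain_ineq D u w (bef σ M v))
  rw [Finset.sum_add_distrib, Finset.sum_add_distrib, Finset.sum_const, Finset.card_univ,
    smul_eq_mul, ← hN, ← Finset.card_filter, Finset.sum_comm] at h1
  simp only [← Finset.mul_sum, ← Finset.card_filter] at h1
  have h2 : N ≤ 3 * (Finset.univ.filter (fun σ : V ≃ Fin n => u ∈ bef σ M v ∧ w ∈ bef σ M v)).card := by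
    have := count_last (n := n) u w v huw (fun h => hvM (h ▸ hu)) (fun h => hvM (h ▸ hw))
    simpa [bef, hu, hw] using this
  have h3 : m * ∑ j ∈ Finset.range (D + 1), (D + 1 - j) *
      (Finset.univ.filter (fun σ : V ≃ Fin n => (bef σ M v).card = j)).card ≤
      (∑ j ∈ Finset.range (D + 1), (D + 1 - j)) * N := by
    rw [Finset.mul_sum, Finset.sum_mul]
    refine Finset.sum_le_sum (fun j _ => ?_)
    have := count_rank (n := n) (insert v M) v (Finset.mem_insert_self _ _) j
    rw [Finset.card_insert_of_notMem hvM] at this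
    simp only [hb] at this
    calc _ = (D + 1 - j) * (m * _) := by ring
      _ ≤ _ := Nat.mul_le_mul_left _ this
  have h4 := sum_coef D
  generalize (∑ j ∈ Finset.range (D + 1), (D + 1 - j)) = s at h3 h4
  generalize ∑ j ∈ Finset.range (D + 1), (D + 1 - j) *
      (Finset.univ.filter (fun σ : V ≃ Fin n => (bef σ M v).card = j)).card = P at h1 h3
  generalize (Finset.univ.filter (fun σ : V ≃ Fin n => u ∈ bef σ M v ∧ w ∈ bef σ M v)).card = L at h1 h2
  generalize ∑ σ : V ≃ Fin n, gain D u w (bef σ M v) = S at h1 ⊢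
  have h5 : 3 * s ≤ m := by omega
  have h6 : m * (3 * P) ≤ m * N := by nlinarith
  have h7 : 3 * P ≤ N := Nat.le_of_mul_le_mul_left h6 (by omega)
  omega

theorem avg_all (D : ℕ) (hn : Fintype.card V = n) (Y : Finset V) (u w : V → V) (M : V → Finset V)
    (huw : ∀ v ∈ Y, u v ≠ w v) (hvM : ∀ v ∈ Y, v ∉ M v) (hu : ∀ v ∈ Y, u v ∈ M v)
    (hw : ∀ v ∈ Y, w v ∈ M v) (hm : ∀ v ∈ Y, 3 * ((D + 1) * (D + 2)) ≤ 2 * ((M v).card + 1)) :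
    ∃ σ : V ≃ Fin n, Y.card * D ≤ ∑ v ∈ Y, gain D (u v) (w v) (bef σ (M v) v) := by
  have hne : (Finset.univ : Finset (V ≃ Fin n)).Nonempty := ⟨Fintype.equivFinOfCardEq hn, Finset.mem_univ _⟩
  by_contra! hcon
  have h1 := Finset.sum_lt_sum_of_nonempty hne (fun σ _ => hcon σ)
  rw [Finset.sum_comm] at h1
  have h2 := Finset.sum_le_sum (fun v hv => avg_one (n := n) D (u v) (w v) v (M v) (huw v hv) (hvM v hv)
    (hu v hv) (hw v hv) (hm v hv))
  rw [Finset.sum_const, smul_eq_mul] at h2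
  rw [Finset.sum_const, Finset.card_univ, smul_eq_mul] at h1
  have : Y.card * (Fintype.card (V ≃ Fin n) * D) = Fintype.card (V ≃ Fin n) * (Y.card * D) := by ring
  omega

end avg

end Thom


namespace Thom
namespace UMat
variable {V : Type*} [DecidableEq V] [Fintype V] {d : ℕ} (U : UMat V d)

def cl (G : SimpleGraph V) : SimpleGraph V where
  Adj u w := u ≠ w ∧ U.Q s(u,w) ∈ Submodule.span ℝ (U.Q '' G.edgeSet)
  symm := ⟨fun u w h => ⟨h.1.symm, by rw [Sym2.eq_swap]; exact h.2⟩⟩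
  loopless := ⟨fun u h => h.1 rfl⟩

theorem le_cl (G : SimpleGraph V) : G ≤ U.cl G := by
  intro u w h
  exact ⟨h.ne, Submodule.subset_span ⟨s(u,w), h, rfl⟩⟩

theorem span_cl (G : SimpleGraph V) :
    Submodule.span ℝ (U.Q '' (U.cl G).edgeSet) = Submodule.span ℝ (U.Q '' G.edgeSet) := by
  apply le_antisymm
  · rw [Submodule.span_le]
    rintro _ ⟨e, he, rfl⟩
    induction e using Sym2.ind with
    | _ u w => exact he.2
  · exact Submodule.span_mono (Set.image_mono (SimpleGraph.edgeSet_mono (U.le_cl G)))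

def Closed (H : SimpleGraph V) : Prop :=
  ∀ u w, u ≠ w → ¬ H.Adj u w → U.Q s(u,w) ∉ Submodule.span ℝ (U.Q '' H.edgeSet)

theorem closed_cl (G : SimpleGraph V) : U.Closed (U.cl G) := by
  intro u w huw h h2
  rw [span_cl] at h2
  exact h ⟨huw, h2⟩

noncomputable def EH (H : SimpleGraph V) (X : Finset V) : Finset (Sym2 V) :=
  (Set.toFinite {e : Sym2 V | e ∈ H.edgeSet ∧ ∀ x ∈ e, x ∈ X}).toFinset

theorem mem_EH {H : SimpleGraph V} {X : Finset V} {e : Sym2 V} :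
    e ∈ EH H X ↔ e ∈ H.edgeSet ∧ ∀ x ∈ e, x ∈ X := by
  simp [EH]

theorem star_EH {H : SimpleGraph V} {X : Finset V} {v : V} {A : Finset V} {F : Finset (Sym2 V)}
    (hF : F ⊆ EH H X) (hA : ∀ a ∈ A, a ∈ X ∧ H.Adj v a) : F ∪ star v A ⊆ EH H (insert v X) := by
  intro e he
  rw [mem_EH]
  rcases Finset.mem_union.1 he with h | h
  · have := mem_EH.1 (hF h)
    exact ⟨this.1, fun x hx => Finset.mem_insert_of_mem (this.2 x hx)⟩
  · obtain ⟨a, ha, rfl⟩ := mem_star.1 h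
    refine ⟨(hA a ha).2, fun x hx => ?_⟩
    rcases Sym2.mem_iff.1 hx with rfl | rfl
    · exact Finset.mem_insert_self _ _
    · exact Finset.mem_insert_of_mem (hA _ ha).1

theorem step0 (H : SimpleGraph V) {X : Finset V} {v : V} {A : Finset V} (hv : v ∉ X)
    (hA : ∀ a ∈ A, a ∈ X ∧ H.Adj v a) (hc : A.card ≤ 2 * d) :
    U.r (EH H X) + A.card ≤ U.r (EH H (insert v X)) := by
  obtain ⟨B, hB, hI, hcard, -⟩ := U.exists_basis (EH H X)
  have hvB : ∀ e ∈ B, v ∉ e := fun e he h => hv ((mem_EH.1 (hB he)).2 v h)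
  rw [← hcard, ← card_union_star B v A hvB]
  exact U.card_le_r (U.ext0U hI hvB (fun h => (hA v h).2.ne rfl) hc) (star_EH hB hA)

theorem I_insert {B : Finset (Sym2 V)} {e : Sym2 V} (hB : U.I B)
    (h : U.Q e ∉ Submodule.span ℝ (U.Q '' (B : Set (Sym2 V)))) : U.I (insert e B) := by
  unfold I
  rw [Finset.coe_insert]
  exact LinearIndepOn.insert hB h

theorem step1 (hd : 1 ≤ d) {H : SimpleGraph V} (hH : U.Closed H) {X : Finset V} {v u w : V}
    {A : Finset V} (hv : v ∉ X)
    (hA : ∀ a ∈ insert u (insert w A), a ∈ X ∧ H.Adj v a) (huw : u ≠ w) (hnadj : ¬ H.Adj u w)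
    (huA : u ∉ A) (hwA : w ∉ A) (hc : A.card + 1 ≤ 2 * d) :
    U.r (EH H X) + (A.card + 2) ≤ U.r (EH H (insert v X)) := by
  obtain ⟨B, hB, hI, hcard, -⟩ := U.exists_basis (EH H X)
  have hvB : ∀ e ∈ B, v ∉ e := fun e he h => hv ((mem_EH.1 (hB he)).2 v h)
  have hn : U.Q s(u,w) ∉ Submodule.span ℝ (U.Q '' (B : Set (Sym2 V))) := by
    intro h
    refine hH u w huw hnadj (Submodule.span_mono (Set.image_mono ?_) h)
    intro e he
    exact (mem_EH.1 (hB he)).1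
  have hnB : s(u,w) ∉ B := fun h => hn (Submodule.subset_span ⟨_, h, rfl⟩)
  have hcd : (insert u (insert w A)).card = A.card + 2 := by
    rw [Finset.card_insert_of_notMem (by simp [huw, huA]), Finset.card_insert_of_notMem hwA]
  rw [← hcard, ← hcd, ← card_union_star B v _ hvB]
  have hne : ∀ a ∈ insert u (insert w A), a ≠ v := fun a ha => (hA a ha).2.ne'
  exact U.card_le_r (U.ext1U hd (U.I_insert hI hn) hnB hvB huw (hne u (by simp)) (hne w (by simp))
    (fun h => hne v (by simp [h]) rfl) huA hwA hc) (star_EH hB hA)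

theorem clique_lemma (hd : 1 ≤ d) {H : SimpleGraph V} (hH : U.Closed H) (C : Finset V)
    (hC : ∀ u ∈ C, ∀ v ∈ C, u ≠ v → H.Adj u v) (hcard : 5 * d ≤ C.card) (x : V) (hx : x ∉ C)
    (A : Finset V) (hA : ∀ a ∈ A, a ∈ C ∧ H.Adj x a) (hAc : 2 * d ≤ A.card) (y : V) (hy : y ∈ C) :
    H.Adj x y := by
  by_contra hn
  obtain ⟨A', hs, hA'⟩ := Finset.exists_subset_card_eq hAc
  obtain ⟨F, hI, hFc, hF⟩ := U.full hd C hcard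
  have hvF : ∀ e ∈ F, x ∉ e := by
    intro e he h
    obtain ⟨u, hu, v, hv, -, rfl⟩ := hF e he
    rcases Sym2.mem_iff.1 h with rfl | rfl
    · exact hx hu
    · exact hx hv
  have hFE : F ⊆ EH H C := by
    intro e he
    obtain ⟨u, hu, v, hv, hne, rfl⟩ := hF e he
    rw [mem_EH]
    refine ⟨hC u hu v hv hne, fun z hz => ?_⟩
    rcases Sym2.mem_iff.1 hz with rfl | rfl <;> assumption
  have hI2 := U.ext0U hI hvF (fun h => hx (hA x (hs h)).1) hA'.le
  have hE := star_EH hFE (fun a ha => hA a (hs ha))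
  have hnsp : U.Q s(x,y) ∉ Submodule.span ℝ (U.Q '' ((F ∪ star x A' : Finset (Sym2 V)) : Set (Sym2 V))) := by
    intro h
    refine hH x y (fun h => hx (h ▸ hy)) hn (Submodule.span_mono (Set.image_mono ?_) h)
    intro e he
    exact (mem_EH.1 (hE he)).1
  have hI3 := U.I_insert hI2 hnsp
  have hup := U.upper hI3 (insert x C) (by
    intro e he z hz
    rcases Finset.mem_insert.1 he with rfl | he
    · rcases Sym2.mem_iff.1 hz with rfl | rfl
      · exact Finset.mem_insert_self _ _
      · exact Finset.mem_insert_of_mem hy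
    · exact (mem_EH.1 (hE he)).2 z hz) (by rw [Finset.card_insert_of_notMem hx]; omega)
  rw [Finset.card_insert_of_notMem (fun h => hnsp (Submodule.subset_span ⟨_, h, rfl⟩)),
    card_union_star _ _ _ hvF, Finset.card_insert_of_notMem hx, hA'] at hup
  have : d * (C.card + 1) = d * C.card + d := by ring
  omega

theorem gain_step (hd : 1 ≤ d) {H : SimpleGraph V} (hH : U.Closed H) {X : Finset V} {v u w : V}
    {A : Finset V} (hv : v ∉ X) (hA : ∀ a ∈ A, a ∈ X ∧ H.Adj v a) (huw : u ≠ w)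
    (hnadj : ¬ H.Adj u w) :
    U.r (EH H X) + gain (2 * d) u w A ≤ U.r (EH H (insert v X)) := by
  unfold gain
  split_ifs with h1 h2
  · exact U.step0 H hv hA h1
  · have hw : w ∈ A.erase u := Finset.mem_erase.2 ⟨huw.symm, h2.2⟩
    have hc : ((A.erase u).erase w).card + 2 = A.card := by
      rw [Finset.card_erase_of_mem hw, Finset.card_erase_of_mem h2.1]; omega
    obtain ⟨A', hs, hA'⟩ := Finset.exists_subset_card_eq (s := (A.erase u).erase w) (n := 2 * d - 1) (by omega)
    have := U.step1 hd hH (A := A') hv (u := u) (w := w) (by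
      intro a ha
      apply hA
      rcases Finset.mem_insert.1 ha with rfl | ha
      · exact h2.1
      rcases Finset.mem_insert.1 ha with rfl | ha
      · exact h2.2
      exact Finset.mem_of_mem_erase (Finset.mem_of_mem_erase (hs ha))) huw hnadj
      (fun h => by have := hs h; simp at this) (fun h => by have := hs h; simp at this) (by omega)
    omega
  · obtain ⟨A', hs, hA'⟩ := Finset.exists_subset_card_eq (s := A) (n := 2 * d) (by omega)
    have := U.step0 H hv (fun a ha => hA a (hs ha)) (by omega)
    omega

theorem order_lemma (H : SimpleGraph V) {n : ℕ} (σ : V ≃ Fin n) (Y : Finset V) (g : V → ℕ)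
    (hg : ∀ v ∈ Y, U.r (EH H (bef σ Y v)) + g v ≤ U.r (EH H (insert v (bef σ Y v)))) :
    ∑ v ∈ Y, g v ≤ U.r (EH H Y) := by
  have key : ∀ t : ℕ, ∑ v ∈ Y.filter (fun v => (σ v : ℕ) < t), g v ≤
      U.r (EH H (Y.filter (fun v => (σ v : ℕ) < t))) := by
    intro t
    induction t with
    | zero => simp
    | succ t ih =>
      by_cases h : ∃ v ∈ Y, (σ v : ℕ) = t
      · obtain ⟨v, hv, hvt⟩ := h
        have e1 : bef σ Y v = Y.filter (fun v => (σ v : ℕ) < t) := by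
          ext x; simp only [bef, Finset.mem_filter, Fin.lt_def, hvt]
        have e2 : Y.filter (fun v => (σ v : ℕ) < t + 1) = insert v (Y.filter (fun v => (σ v : ℕ) < t)) := by
          ext x
          simp only [Finset.mem_filter, Finset.mem_insert]
          constructor
          · rintro ⟨a, b⟩
            by_cases hx : (σ x : ℕ) = t
            · left; exact σ.injective (Fin.ext (hx.trans hvt.symm))
            · right; exact ⟨a, by omega⟩
          · rintro (rfl | ⟨a, b⟩)
            · exact ⟨hv, by omega⟩
            · exact ⟨a, by omega⟩
        rw [e2, Finset.sum_insert (by simp [hvt]), ← e1]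
        have := hg v hv
        rw [← e1] at ih
        omega
      · have e2 : Y.filter (fun v => (σ v : ℕ) < t + 1) = Y.filter (fun v => (σ v : ℕ) < t) := by
          ext x
          simp only [Finset.mem_filter]
          refine and_congr_right (fun hx => ?_)
          have : (σ x : ℕ) ≠ t := fun h' => h ⟨x, hx, h'⟩
          omega
        rw [e2]; exact ih
  have := key n
  rwa [Finset.filter_true_of_mem (fun v _ => (σ v).2)] at this

end UMat
end Thom


namespace Thom

def Sep {V : Type*} (H : SimpleGraph V) (c : ℕ) : Prop :=
  ∀ S X : Finset V, S.card < c → (∃ u ∈ X, u ∉ S) → (∃ w, w ∉ X ∧ w ∉ S) →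
    ∃ x ∈ X, ∃ y, y ∉ X ∧ x ∉ S ∧ y ∉ S ∧ H.Adj x y

namespace UMat
variable {V : Type*} [DecidableEq V] [Fintype V] {d : ℕ} (U : UMat V d)

theorem complete_of_sep (hd : 1 ≤ d) {H : SimpleGraph V} (hH : U.Closed H) (c : ℕ)
    (hc : 3 * ((2 * d + 1) * (2 * d + 2)) ≤ 2 * c) (hsep : Sep H c) (hn : c < Fintype.card V) :
    ∀ u w, u ≠ w → H.Adj u w := by
  classical
  by_contra! hcon
  obtain ⟨u0, w0, huw0, hnadj0⟩ := hcon
  have hc5 : 9 * d + 3 ≤ c := by nlinarith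
  let N : V → Finset V := fun v => Finset.univ.filter (fun x => H.Adj v x)
  have hN : ∀ v x, x ∈ N v ↔ H.Adj v x := fun v x => by simp [N]
  let simpl : V → Prop := fun v => ∀ a b, H.Adj v a → H.Adj v b → a ≠ b → H.Adj a b
  let V' : Finset V := Finset.univ.filter (fun v => ¬ simpl v)
  have hV' : ∀ v, v ∈ V' ↔ ¬ simpl v := fun v => by simp [V']
  let N' : V → Finset V := fun v => V'.filter (fun x => H.Adj v x)
  have hN' : ∀ v x, x ∈ N' v ↔ x ∈ V' ∧ H.Adj v x := fun v x => by simp [N']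
  have ha : ∀ v, c ≤ (N v).card := by
    intro v
    by_contra! hlt
    by_cases hw : ∃ w, w ∉ ({v} : Finset V) ∧ w ∉ N v
    · obtain ⟨x, hx, y, hy, hxS, hyS, hadj⟩ := hsep (N v) {v} hlt
        ⟨v, by simp, fun h => ((hN _ _).1 h).ne rfl⟩ hw
      rw [Finset.mem_singleton] at hx
      subst hx
      exact hyS ((hN _ _).2 hadj)
    · push Not at hw
      have : (Finset.univ : Finset V) ⊆ insert v (N v) := by
        intro w _
        by_cases h : w = v
        · simp [h]
        · exact Finset.mem_insert_of_mem (hw w (by simpa using h))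
      have h1 := Finset.card_le_card this
      have h2 := Finset.card_insert_le v (N v)
      rw [Finset.card_univ] at h1
      omega
  let C : V → Finset V := fun z => insert z (N z)
  have hCm : ∀ z x, x ∈ C z ↔ x = z ∨ H.Adj z x := fun z x => by simp [C, hN]
  have hCc : ∀ z, c ≤ (C z).card := fun z => (ha z).trans (Finset.card_le_card (Finset.subset_insert _ _))
  have hCq : ∀ z, simpl z → ∀ u ∈ C z, ∀ v ∈ C z, u ≠ v → H.Adj u v := by
    intro z hz u hu v hv huv
    rcases (hCm z u).1 hu with rfl | h1
    · rcases (hCm _ v).1 hv with rfl | h2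
      · exact absurd rfl huv
      · exact h2
    · rcases (hCm z v).1 hv with rfl | h2
      · exact h1.symm
      · exact hz u v h1 h2 huv
  have hb : ∀ z, simpl z → c ≤ (N' z).card := by
    intro z hz
    by_contra! hlt
    have hy : ∃ y, y ∉ C z := by
      by_contra! h
      exact hnadj0 (hCq z hz u0 (h _) w0 (h _) huw0)
    obtain ⟨y, hy⟩ := hy
    obtain ⟨x, hx, y', hy', hxS, hyS, hadj⟩ := hsep (N' z) (C z) hlt
      ⟨z, by simp [C], fun h => ((hN' _ _).1 h).2.ne rfl⟩
      ⟨y, hy, fun h => hy ((hCm _ _).2 (Or.inr ((hN' _ _).1 h).2))⟩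
    apply hy'
    rcases (hCm _ _).1 hx with rfl | hzx
    · exact (hCm _ _).2 (Or.inr hadj)
    · have hxs : simpl x := by
        by_contra h
        exact hxS ((hN' _ _).2 ⟨(hV' _).2 h, hzx⟩)
      by_cases h : z = y'
      · simp [C, h]
      · exact (hCm _ _).2 (Or.inr (hxs z y' hzx.symm hadj h))
  have hdd : ∀ v ∈ V', c ≤ (N' v).card + 1 := by
    intro v hv
    by_cases hz : ∃ z, H.Adj v z ∧ simpl z
    · obtain ⟨z, hvz, hz⟩ := hz
      have hs : N' z ⊆ insert v (N' v) := by
        intro x hx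
        obtain ⟨h1, h2⟩ := (hN' _ _).1 hx
        by_cases h : x = v
        · simp [h]
        · exact Finset.mem_insert_of_mem ((hN' _ _).2 ⟨h1, hz v x hvz.symm h2 (Ne.symm h)⟩)
      exact (hb z hz).trans ((Finset.card_le_card hs).trans (Finset.card_insert_le _ _))
    · push Not at hz
      have hs : N v ⊆ N' v := by
        intro x hx
        exact (hN' _ _).2 ⟨(hV' _).2 (hz x ((hN _ _).1 hx)), (hN _ _).1 hx⟩
      have := ha v
      have := Finset.card_le_card hs
      omega
  have hcc : ∀ v ∈ V', ∃ u w, u ∈ N' v ∧ w ∈ N' v ∧ u ≠ w ∧ ¬ H.Adj u w := by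
    intro v hv
    by_contra! hq
    have hvs := (hV' v).1 hv
    by_cases hz : ∃ z, H.Adj v z ∧ simpl z
    · obtain ⟨z, hvz, hz⟩ := hz
      have hzV : z ∉ V' := fun h => (hV' _).1 h hz
      have hvC : v ∈ C z := (hCm _ _).2 (Or.inr hvz.symm)
      have claim : ∀ x ∈ N' v, x ∈ C z := by
        intro x hx
        by_contra hxC
        refine hxC ((hCm _ _).2 (Or.inr (U.clique_lemma hd hH (C z) (hCq z hz)
          (le_trans (by omega) (hCc z)) x hxC ((N' z).erase v) ?_ ?_ z (by simp [C])).symm))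
        · intro a haa
          obtain ⟨h1, h2⟩ := Finset.mem_erase.1 haa
          obtain ⟨h3, h4⟩ := (hN' _ _).1 h2
          have haC : a ∈ C z := (hCm _ _).2 (Or.inr h4)
          refine ⟨haC, hq x a hx ((hN' _ _).2 ⟨h3, ?_⟩) (fun h => hxC (h ▸ haC))⟩
          exact hz v a hvz.symm h4 h1.symm
        · have := hb z hz
          have := Finset.pred_card_le_card_erase (s := N' z) (a := v)
          omega
      have hy : ∃ y, H.Adj v y ∧ y ∉ C z := by
        by_contra! h
        exact hvs (fun a b h1 h2 h3 => hCq z hz a (h a h1) b (h b h2) h3)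
      obtain ⟨y, hvy, hyC⟩ := hy
      by_cases hyV : y ∈ V'
      · exact hyC (claim y ((hN' _ _).2 ⟨hyV, hvy⟩))
      · have hys : simpl y := by
          by_contra h
          exact hyV ((hV' _).2 h)
        have hzy : z ∉ C y := by
          intro h
          rcases (hCm _ _).1 h with rfl | h
          · exact hyC (by simp [C])
          · exact hyC ((hCm _ _).2 (Or.inr h.symm))
        refine hyC ((hCm _ _).2 (Or.inr (U.clique_lemma hd hH (C y) (hCq y hys)
          (le_trans (by omega) (hCc y)) z hzy (N' y) ?_ ?_ y (by simp [C]))))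
        · intro a haa
          obtain ⟨h3, h4⟩ := (hN' _ _).1 haa
          refine ⟨(hCm _ _).2 (Or.inr h4), ?_⟩
          have haC : a ∈ C z := by
            by_cases hav : a = v
            · rw [hav]; exact hvC
            · exact claim a ((hN' _ _).2 ⟨h3, hys v a hvy.symm h4 (Ne.symm hav)⟩)
          rcases (hCm _ _).1 haC with rfl | h
          · exact absurd h3 hzV
          · exact h
        · have := hb y hys
          omega
    · push Not at hz
      apply hvs
      intro a b h1 h2 h3
      exact hq a b ((hN' _ _).2 ⟨(hV' _).2 (hz a h1), h1⟩) ((hN' _ _).2 ⟨(hV' _).2 (hz b h2), h2⟩) h3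
  have hcc' : ∀ v, ∃ u w, v ∈ V' → u ∈ N' v ∧ w ∈ N' v ∧ u ≠ w ∧ ¬ H.Adj u w := by
    intro v
    by_cases hv : v ∈ V'
    · obtain ⟨u, w, h⟩ := hcc v hv
      exact ⟨u, w, fun _ => h⟩
    · exact ⟨v, v, fun h => absurd h hv⟩
  choose u w huw using hcc'
  obtain ⟨σ, hσ⟩ := avg_all (2 * d) rfl V' u w N' (fun v hv => (huw v hv).2.2.1)
    (fun v hv h => ((hN' _ _).1 h).2.ne rfl) (fun v hv => (huw v hv).1) (fun v hv => (huw v hv).2.1)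
    (fun v hv => by have := hdd v hv; omega)
  have hr := U.order_lemma H σ V' (fun v => gain (2 * d) (u v) (w v) (bef σ (N' v) v)) (by
    intro v hv
    refine U.gain_step hd hH (by simp [bef]) ?_ (huw v hv).2.2.1 (huw v hv).2.2.2
    intro a haa
    simp only [bef, Finset.mem_filter] at haa ⊢
    exact ⟨⟨((hN' _ _).1 haa.1).1, haa.2⟩, ((hN' _ _).1 haa.1).2⟩)
  have hT : ∀ T : Finset V, Disjoint T V' → (T ∪ V').card * (2 * d) ≤ U.r (EH H (T ∪ V')) := by
    intro T
    induction T using Finset.induction_on with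
    | empty => intro _; simpa using hσ.trans hr
    | insert z T hzT ih =>
      intro hdj
      rw [Finset.disjoint_insert_left] at hdj
      have h1 := ih hdj.2
      have hzs : simpl z := by
        by_contra h
        exact hdj.1 ((hV' _).2 h)
      obtain ⟨A, hA, hAc⟩ := Finset.exists_subset_card_eq (s := N' z) (n := 2 * d)
        (le_trans (by omega) (hb z hzs))
      have hnot : z ∉ T ∪ V' := by simp [hzT, hdj.1]
      have := U.step0 H hnot (A := A) (fun a haa => ⟨Finset.mem_union_right _ ((hN' _ _).1 (hA haa)).1,
        ((hN' _ _).1 (hA haa)).2⟩) hAc.le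
      rw [Finset.insert_union, Finset.card_insert_of_notMem hnot, add_mul]
      omega
  have hfin := hT V'ᶜ disjoint_compl_left
  have hun : V'ᶜ ∪ V' = Finset.univ := by rw [Finset.union_comm]; exact Finset.union_compl V'
  rw [hun] at hfin
  obtain ⟨B, hB, hI, hcard, -⟩ := U.exists_basis (EH H Finset.univ)
  have := U.upper hI Finset.univ (fun _ _ x _ => Finset.mem_univ x) (by rw [Finset.card_univ]; omega)
  have h1 : (Finset.univ : Finset V).card * (2 * d) = 2 * (d * (Finset.univ : Finset V).card) := by ring
  have h2 : 0 < d * (d + 1) := by positivity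
  omega

end UMat

theorem exists_two (V : Type*) [DecidableEq V] [Fintype V] (d : ℕ) (hd : 1 ≤ d) (G : SimpleGraph V)
    (c : ℕ) (hc : 3 * ((2 * d + 1) * (2 * d + 2)) ≤ 2 * c) (hsep : Sep G c)
    (hn : c < Fintype.card V) :
    ∃ F1 F2 : Finset (Sym2 V), Disjoint F1 F2 ∧ (∀ e ∈ F1 ∪ F2, e ∈ G.edgeSet) ∧
      2 * F1.card + d * (d + 1) = 2 * (d * Fintype.card V) ∧
      2 * F2.card + d * (d + 1) = 2 * (d * Fintype.card V) ∧
      (∀ X : Finset V, ∀ F ⊆ F1, (∀ e ∈ F, ∀ x ∈ e, x ∈ X) → d ≤ X.card →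
        2 * F.card + d * (d + 1) ≤ 2 * (d * X.card)) ∧
      (∀ X : Finset V, ∀ F ⊆ F2, (∀ e ∈ F, ∀ x ∈ e, x ∈ X) → d ≤ X.card →
        2 * F.card + d * (d + 1) ≤ 2 * (d * X.card)) := by
  classical
  obtain ⟨U⟩ := exists_UMat V d
  have hc5 : 9 * d + 3 ≤ c := by nlinarith
  have hcomp := U.complete_of_sep hd (U.closed_cl G) c hc (by
    intro S X h1 h2 h3
    obtain ⟨x, hx, y, hy, h4, h5, h6⟩ := hsep S X h1 h2 h3
    exact ⟨x, hx, y, hy, h4, h5, U.le_cl G h6⟩) hn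
  obtain ⟨F, hI, hFc, hF⟩ := U.full hd Finset.univ (by rw [Finset.card_univ]; omega)
  obtain ⟨B, hB, hBI, hBc, -⟩ := U.exists_basis (UMat.EH G Finset.univ)
  have hE : ((UMat.EH G Finset.univ : Finset (Sym2 V)) : Set (Sym2 V)) = G.edgeSet := by
    ext e; simp [UMat.mem_EH]
  have hBle : F.card ≤ B.card := by
    rw [hBc]
    have h1 := finrank_span_eq_card (R := ℝ) (b := fun x : (F : Set (Sym2 V)) => U.Q x) hI
    rw [← Set.image_eq_range] at h1
    have h2 : Submodule.span ℝ (U.Q '' (F : Set (Sym2 V))) ≤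
        Submodule.span ℝ (U.Q '' ((UMat.EH G Finset.univ : Finset (Sym2 V)) : Set (Sym2 V))) := by
      rw [hE, Submodule.span_le]
      rintro _ ⟨e, he, rfl⟩
      obtain ⟨u, -, v, -, hne, rfl⟩ := hF e he
      exact (hcomp u v hne).2
    have h3 := Submodule.finrank_mono h2
    rw [h1] at h3
    simpa [UMat.r] using h3
  obtain ⟨F1, F2, rfl, hdj, h1, h2⟩ := U.I_split hBI
  have a1 := U.sparse F1 Finset.univ h1 (by simp) (by rw [Finset.card_univ]; omega)
  have a2 := U.sparse F2 Finset.univ h2 (by simp) (by rw [Finset.card_univ]; omega)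
  rw [Finset.card_union_of_disjoint hdj] at hBle
  rw [Finset.card_univ] at *
  refine ⟨F1, F2, hdj, fun e he => ?_, by omega, by omega,
    fun X F hs hX => U.sparse F X (U.mono _ _ h1 hs) hX,
    fun X F hs hX => U.sparse F X (U.mono _ _ h2 hs) hX⟩
  have := hB he
  exact (UMat.mem_EH.1 this).1

end Thom


namespace Thom

theorem assign {V : Type*} [DecidableEq V] [Fintype V] (d : ℕ) (hd : 1 ≤ d) (F : Finset (Sym2 V))
    (T : Finset V) (hT : 2 * T.card = d * (d + 1)) (hloop : ∀ e ∈ F, ¬ e.IsDiag)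
    (hF : 2 * F.card + d * (d + 1) = 2 * (d * Fintype.card V))
    (hsp : ∀ X : Finset V, ∀ F' ⊆ F, (∀ e ∈ F', ∀ x ∈ e, x ∈ X) → d ≤ X.card →
        2 * F'.card + d * (d + 1) ≤ 2 * (d * X.card)) :
    ∃ a : Sym2 V → V, (∀ e ∈ F, a e ∈ e) ∧
      ∀ v, d ≤ (F.filter (fun e => a e = v)).card + (if v ∈ T then 1 else 0) := by
  classical
  let f : V → ℕ := fun v => d - (if v ∈ T then 1 else 0)
  have hf : ∀ v, f v + (if v ∈ T then 1 else 0) = d := by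
    intro v; simp only [f]; split_ifs <;> omega
  have hsum : ∀ Z : Finset V, ∑ v ∈ Z, f v + (Z.filter (· ∈ T)).card = d * Z.card := by
    intro Z
    rw [Finset.card_filter, ← Finset.sum_add_distrib, Finset.sum_congr rfl (fun v _ => hf v),
      Finset.sum_const, smul_eq_mul, mul_comm]
  let t : {e // e ∈ F} → Finset (Σ v : V, Fin (f v)) := fun e =>
    Finset.univ.filter (fun p => p.1 ∈ e.1)
  have hcardZ : ∀ Z : Finset V, (Finset.univ.filter (fun p : Σ v : V, Fin (f v) => p.1 ∈ Z)).card =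
      ∑ v ∈ Z, f v := by
    intro Z
    have : Finset.univ.filter (fun p : Σ v : V, Fin (f v) => p.1 ∈ Z) =
      Z.sigma (fun v => (Finset.univ : Finset (Fin (f v)))) := by
      ext p; simp
    rw [this, Finset.card_sigma]
    simp
  have hall : ∀ s : Finset {e // e ∈ F}, s.card ≤ (s.biUnion t).card := by
    intro s
    let Z : Finset V := Finset.univ.filter (fun v => ∃ e ∈ s, v ∈ e.1)
    have hZ : ∀ v, v ∈ Z ↔ ∃ e ∈ s, v ∈ e.1 := fun v => by simp [Z]
    have hb : s.biUnion t = Finset.univ.filter (fun p : Σ v : V, Fin (f v) => p.1 ∈ Z) := by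
      ext p
      simp [t, hZ]
    rw [hb, hcardZ]
    have hs := hsum Z
    let s' : Finset (Sym2 V) := s.map (Function.Embedding.subtype _)
    have hs' : s'.card = s.card := Finset.card_map _
    have hms : ∀ e ∈ s', ∃ h : e ∈ F, (⟨e, h⟩ : {e // e ∈ F}) ∈ s := by
      intro e he
      simpa [s'] using he
    have hZs : ∀ e ∈ s', ∀ x ∈ e, x ∈ Z := by
      intro e he x hx
      obtain ⟨h, h2⟩ := hms e he
      exact (hZ x).2 ⟨_, h2, hx⟩
    by_cases hZd : d ≤ Z.card
    · have h1 := hsp Z s' (fun e he => (hms e he).1) hZs hZd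
      have h2 : (Z.filter (· ∈ T)).card ≤ T.card :=
        Finset.card_le_card (fun x hx => (Finset.mem_filter.1 hx).2)
      omega
    · have h1 : s' ⊆ Z.offDiag.image (fun p => s(p.1, p.2)) := by
        intro e he
        have h1 := hZs e he
        have h2 := hloop e (hms e he).1
        induction e using Sym2.ind with
        | _ x y =>
          refine Finset.mem_image.2 ⟨(x, y), ?_, rfl⟩
          rw [Finset.mem_offDiag]
          exact ⟨h1 x (by simp), h1 y (by simp), fun h => h2 (by simpa using h)⟩
      have h2 := (Finset.card_le_card h1).trans Finset.card_image_le
      rw [Finset.offDiag_card, hs'] at h2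
      have h3 : (Z.filter (· ∈ T)).card ≤ Z.card := Finset.card_filter_le _ _
      have h4 : Z.card * Z.card + Z.card ≤ d * Z.card := by nlinarith
      omega
  obtain ⟨φ, hφ, hφt⟩ := (Finset.all_card_le_biUnion_card_iff_exists_injective t).1 hall
  have hcard : Fintype.card {e // e ∈ F} = Fintype.card (Σ v : V, Fin (f v)) := by
    have h1 := hcardZ Finset.univ
    have h2 := hsum Finset.univ
    simp only [Finset.mem_univ, Finset.filter_true] at h1
    have h3 : (Finset.univ.filter (· ∈ T)) = T := by ext; simp
    rw [h3, Finset.card_univ] at h2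
    rw [← Finset.card_univ (α := Σ v : V, Fin (f v)), h1, Fintype.card_coe]
    omega
  have hbij := (Fintype.bijective_iff_injective_and_card φ).2 ⟨hφ, hcard⟩
  let ψ := Equiv.ofBijective φ hbij
  by_cases hne : Nonempty V
  swap
  · refine ⟨fun e => (Quot.out e).1, fun e _ => Sym2.out_fst_mem e, fun v => absurd ⟨v⟩ hne⟩
  obtain ⟨v0⟩ := hne
  refine ⟨fun e => if h : e ∈ F then (φ ⟨e, h⟩).1 else v0, ?_, ?_⟩
  · intro e he
    simp only [he, dif_pos]
    have := hφt ⟨e, he⟩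
    simpa [t] using this
  · intro v
    rw [← hf v]
    refine Nat.add_le_add_right ?_ _
    have : ((Finset.univ : Finset (Fin (f v))).map ⟨fun i => (ψ.symm ⟨v, i⟩).1, by
        intro i j h
        have := ψ.symm.injective (Subtype.ext h)
        simpa using this⟩) ⊆ F.filter (fun e => (if h : e ∈ F then (φ ⟨e, h⟩).1 else v0) = v) := by
      intro e he
      obtain ⟨i, -, rfl⟩ := Finset.mem_map.1 he
      have h1 := (ψ.symm ⟨v, i⟩).2
      rw [Finset.mem_filter]
      refine ⟨h1, ?_⟩
      have : φ (ψ.symm ⟨v, i⟩) = ⟨v, i⟩ := ψ.apply_symm_apply _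
      exact (dif_pos h1).trans (congrArg Sigma.fst this)
    simpa using Finset.card_le_card this

theorem count_side {V : Type*} [DecidableEq V] [Fintype V] (d : ℕ) (F : Finset (Sym2 V))
    (T : Finset V) 
    (hsp : ∀ X : Finset V, ∀ F' ⊆ F, (∀ e ∈ F', ∀ x ∈ e, x ∈ X) → d ≤ X.card →
        2 * F'.card + d * (d + 1) ≤ 2 * (d * X.card))
    (hloop : ∀ e ∈ F, ¬ e.IsDiag)
    (a : Sym2 V → V) (ha : ∀ e ∈ F, a e ∈ e)
    (hdeg : ∀ v, d ≤ (F.filter (fun e => a e = v)).card + (if v ∈ T then 1 else 0))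
    (X S : Finset V) (hX : X.Nonempty)
    (hcl : ∀ e ∈ F, a e ∈ X → ∀ x ∈ e, x ∈ X ∪ S) :
    d * (d + 1) ≤ 2 * (d * S.card) + 2 * (X ∩ T).card := by
  classical
  obtain ⟨x, hx⟩ := hX
  have hW : d ≤ (X ∪ S).card := by
    have h1 : F.filter (fun e => a e = x) ⊆ star x ((X ∪ S).erase x) := by
      intro e he
      obtain ⟨h1, h2⟩ := Finset.mem_filter.1 he
      have h3 := ha e h1
      rw [h2] at h3
      obtain ⟨y, rfl⟩ := Sym2.mem_iff_exists.1 h3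
      refine mem_star.2 ⟨y, Finset.mem_erase.2 ⟨?_, hcl _ h1 (by rw [h2]; exact hx) y (by simp)⟩, rfl⟩
      intro h
      exact hloop _ h1 (by simp [h])
    have h2 := Finset.card_le_card h1
    have hxW : x ∈ X ∪ S := Finset.mem_union_left _ hx
    rw [star_card, Finset.card_erase_of_mem hxW] at h2
    have h3 := hdeg x
    have h4 : 0 < (X ∪ S).card := Finset.card_pos.2 ⟨x, hxW⟩
    split_ifs at h3 <;> omega
  have h1 := hsp (X ∪ S) (F.filter (fun e => a e ∈ X)) (Finset.filter_subset _ _)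
    (fun e he => hcl e (Finset.mem_filter.1 he).1 (Finset.mem_filter.1 he).2) hW
  have h2 : (F.filter (fun e => a e ∈ X)).card = ∑ v ∈ X, (F.filter (fun e => a e = v)).card := by
    rw [Finset.card_eq_sum_card_fiberwise (f := a) (t := X) (s := F.filter (fun e => a e ∈ X))
      (fun e he => (Finset.mem_filter.1 he).2)]
    refine Finset.sum_congr rfl (fun v hv => ?_)
    congr 1
    ext e
    simp only [Finset.mem_filter]
    constructor
    · rintro ⟨⟨h1, _⟩, h2⟩; exact ⟨h1, h2⟩
    · rintro ⟨h1, h2⟩; exact ⟨⟨h1, h2 ▸ hv⟩, h2⟩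
  have h3 := Finset.sum_le_sum (fun v (_ : v ∈ X) => hdeg v)
  rw [Finset.sum_add_distrib, ← h2, ← Finset.card_filter, Finset.filter_mem_eq_inter,
    Finset.sum_const, smul_eq_mul, mul_comm] at h3
  have h4 := Finset.card_union_le X S
  have h5 : d * (X ∪ S).card ≤ d * X.card + d * S.card := by
    rw [← mul_add]; exact Nat.mul_le_mul_left _ h4
  omega

end Thom

theorem Thom.sep_of_conn {V : Type*} (G : SimpleGraph V) (c : ℕ) (h : KConnected G c) :
    Thom.Sep G c := by
  rintro S X hS ⟨u, hu, huS⟩ ⟨w, hw, hwS⟩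
  have hc := h.2 (S : Set V) S.finite_toSet (by rwa [Set.ncard_coe_finset])
  obtain ⟨p⟩ := hc.preconnected ⟨u, by simpa using huS⟩ ⟨w, by simpa using hwS⟩
  obtain ⟨e, -, h1, h2⟩ := p.exists_boundary_dart {x | x.1 ∈ X} hu hw
  refine ⟨e.fst.1, h1, e.snd.1, h2, ?_, ?_, e.adj⟩
  · exact e.fst.2
  · exact e.snd.2

/-- Every `(320·k²)`-connected finite simple graph has a `k`-connected orientation. -/
theorem thomassen_conjecture {V : Type*} [Fintype V] (k : ℕ) (hk : 0 < k)
    (G : SimpleGraph V) (hG : KConnected G (320 * k ^ 2)) :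
    ∃ D : V → V → Prop, IsOrientation G D ∧ DKConnected D k := by
  classical
  have hn : 320 * k ^ 2 < Fintype.card V := by
    have := hG.1
    rw [Nat.card_eq_fintype_card] at this
    omega
  have hd : 1 ≤ 4 * k := by omega
  obtain ⟨F1, F2, hdj, hE, c1, c2, s1, s2⟩ := Thom.exists_two V (4 * k) hd G (320 * k ^ 2)
    (by nlinarith) (Thom.sep_of_conn G _ hG) hn
  obtain ⟨T, -, hT⟩ := Finset.exists_subset_card_eq (s := (Finset.univ : Finset V))
    (n := 8 * k ^ 2 + 2 * k) (by rw [Finset.card_univ]; nlinarith)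
  have hT2 : 2 * T.card = 4 * k * (4 * k + 1) := by rw [hT]; ring
  have l1 : ∀ e ∈ F1, ¬ e.IsDiag := fun e he =>
    G.not_isDiag_of_mem_edgeSet (hE e (Finset.mem_union_left _ he))
  have l2 : ∀ e ∈ F2, ¬ e.IsDiag := fun e he =>
    G.not_isDiag_of_mem_edgeSet (hE e (Finset.mem_union_right _ he))
  obtain ⟨a1, ha1, hd1⟩ := Thom.assign (4 * k) hd F1 T hT2 l1 c1 s1
  obtain ⟨a2, ha2, hd2⟩ := Thom.assign (4 * k) hd F2 T hT2 l2 c2 s2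
  let lin := Fintype.equivFin V
  let D : V → V → Prop := fun u v => G.Adj u v ∧
    (if s(u,v) ∈ F1 then a1 s(u,v) = u else if s(u,v) ∈ F2 then a2 s(u,v) = v else lin u < lin v)
  refine ⟨D, ⟨fun u v h => h.1, ?_⟩, ?_, ?_⟩
  · intro u v huv
    have hne := huv.ne
    simp only [D, huv, huv.symm, true_and]
    rw [Sym2.eq_swap (a := v) (b := u)]
    split_ifs with h1 h2
    · rcases Sym2.mem_iff.1 (ha1 _ h1) with h | h <;> rw [h] <;> simp [hne, hne.symm]
    · rcases Sym2.mem_iff.1 (ha2 _ h2) with h | h <;> rw [h] <;> simp [hne, hne.symm]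
    · have : lin u ≠ lin v := fun h => hne (lin.injective h)
      omega
  · rw [Nat.card_eq_fintype_card]
    nlinarith
  · intro S hSf hSk u v hu hv
    by_contra hcon
    obtain ⟨S, rfl⟩ := hSf.exists_finset_coe
    rw [Set.ncard_coe_finset] at hSk
    let R : V → V → Prop := fun a b => D a b ∧ a ∉ (S : Set V) ∧ b ∉ (S : Set V)
    let X : Finset V := Finset.univ.filter (fun x => Relation.ReflTransGen R u x)
    have hX : ∀ x, x ∈ X ↔ Relation.ReflTransGen R u x := fun x => by simp [X]
    let Y : Finset V := Finset.univ.filter (fun x => x ∉ S ∧ x ∉ X)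
    have hY : ∀ x, x ∈ Y ↔ x ∉ S ∧ x ∉ X := fun x => by simp [Y]
    have hXS : ∀ x ∈ X, x ∉ S := by
      intro x hx
      rcases Relation.ReflTransGen.cases_tail ((hX x).1 hx) with h | ⟨b, _, h⟩
      · rw [h]; exact hu
      · exact h.2.2
    have hno : ∀ x ∈ X, ∀ y ∈ Y, ¬ D x y := by
      intro x hx y hy h
      exact ((hY y).1 hy).2 ((hX y).2 (((hX x).1 hx).tail ⟨h, hXS x hx, ((hY y).1 hy).1⟩))
    have hcov : ∀ x, x ∈ X ∨ x ∈ Y ∨ x ∈ S := by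
      intro x; rw [hY]; tauto
    have r1 := Thom.count_side (4 * k) F1 T s1 l1 a1 ha1 hd1 X S ⟨u, (hX u).2 .refl⟩ (by
      intro e he hex y hy
      have hadj := hE e (Finset.mem_union_left _ he)
      have hm := ha1 e he
      generalize hxe : a1 e = x at *
      obtain ⟨z, rfl⟩ := Sym2.mem_iff_exists.1 hm
      have hz : z ∉ Y := fun h => hno x hex z h ⟨hadj, by rw [if_pos he]; exact hxe⟩
      have hz2 := hcov z
      rw [Finset.mem_union]
      rcases Sym2.mem_iff.1 hy with rfl | rfl
      · exact Or.inl hex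
      · tauto)
    have r2 := Thom.count_side (4 * k) F2 T s2 l2 a2 ha2 hd2 Y S
      ⟨v, (hY v).2 ⟨hv, fun h => hcon ((hX v).1 h)⟩⟩ (by
      intro e he hex y hy
      have hadj := hE e (Finset.mem_union_right _ he)
      have hm := ha2 e he
      generalize hxe : a2 e = x at *
      obtain ⟨z, rfl⟩ := Sym2.mem_iff_exists.1 hm
      have hnF1 : s(z,x) ∉ F1 := by
        rw [Sym2.eq_swap]; exact Finset.disjoint_right.1 hdj he
      have hF2 : s(z,x) ∈ F2 := by rwa [Sym2.eq_swap]
      have hz : z ∉ X := fun h => hno z h x hex ⟨SimpleGraph.Adj.symm hadj, by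
        rw [if_neg hnF1, if_pos hF2, Sym2.eq_swap]; exact hxe⟩
      have hz2 := hcov z
      rw [Finset.mem_union]
      rcases Sym2.mem_iff.1 hy with rfl | rfl
      · exact Or.inl hex
      · tauto)
    have r3 : (X ∩ T).card + (Y ∩ T).card ≤ T.card := by
      rw [← Finset.card_union_of_disjoint]
      · exact Finset.card_le_card (Finset.union_subset Finset.inter_subset_right Finset.inter_subset_right)
      · rw [Finset.disjoint_left]
        intro x h1 h2
        exact ((hY x).1 (Finset.mem_inter.1 h2).1).2 (Finset.mem_inter.1 h1).1
    have r4 : 4 * k * (4 * k + 1) ≤ 4 * (4 * k * S.card) := by omega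
    have r5 : 4 * k * (4 * k + 1) ≤ 4 * k * (4 * S.card) := by linarith
    have r6 := Nat.le_of_mul_le_mul_left r5 (by omega)
    omega
end

section
/- For all positive integers d and t, every (t·10d(d+1))-connected finite simple graph contains t pairwise edge-disjoint spanning subgraphs, each of which is d-connected. -/
namespace Pack
open Finset

lemma exists_poly {ι κ σ : Type*} [Fintype κ] (M : ι → κ → MvPolynomial σ ℝ) (s : Finset ι) :
    ∃ Δ : MvPolynomial σ ℝ, ∀ q : σ → ℝ, MvPolynomial.eval q Δ ≠ 0 ↔
      LinearIndepOn ℝ (fun i k => MvPolynomial.eval q (M i k)) (s : Set ι) := by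
  classical
  let A : Matrix s κ (MvPolynomial σ ℝ) := Matrix.of fun i k => M i k
  refine ⟨(A * A.transpose).det, fun q => ?_⟩
  rw [RingHom.map_det]
  set N : Matrix s κ ℝ := Matrix.of fun i k => MvPolynomial.eval q (M i k) with hN
  have e : (MvPolynomial.eval q).mapMatrix (A * A.transpose) = N * N.transpose := by
    rw [RingHom.mapMatrix_apply, Matrix.map_mul]
    rfl
  rw [e, not_iff_comm, ← Matrix.exists_vecMul_eq_zero_iff]
  have key : LinearIndepOn ℝ (fun i k => MvPolynomial.eval q (M i k)) (s : Set ι) ↔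
      ∀ c : s → ℝ, Matrix.vecMul c N = 0 → c = 0 := by
    unfold LinearIndepOn
    rw [Fintype.linearIndependent_iff]
    constructor
    · intro h c hc
      funext i
      refine h c ?_ i
      funext k
      have := congrFun hc k
      simpa [Matrix.vecMul, dotProduct, hN, Finset.sum_apply] using this
    · intro h c hc i
      have := h c ?_
      · exact congrFun this i
      funext k
      have := congrFun hc k
      simpa [Matrix.vecMul, dotProduct, hN, Finset.sum_apply] using this
  rw [key]
  push Not
  constructor
  · rintro ⟨c, hc, hc0⟩
    exact ⟨c, hc0, by rw [← Matrix.vecMul_vecMul, hc, Matrix.zero_vecMul]⟩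
  · rintro ⟨c, hc0, hc⟩
    refine ⟨c, ?_, hc0⟩
    rw [← Matrix.vecMul_vecMul, Matrix.vecMul_transpose] at hc
    have : dotProduct (Matrix.vecMul c N) (Matrix.vecMul c N) = 0 := by
      rw [← Matrix.dotProduct_mulVec, hc, dotProduct_zero]
    exact dotProduct_self_eq_zero.1 this

lemma exists_generic {J σ : Type*} [Fintype J] (Δ : J → MvPolynomial σ ℝ) :
    ∃ p : σ → ℝ, ∀ j, (∃ q, MvPolynomial.eval q (Δ j) ≠ 0) → MvPolynomial.eval p (Δ j) ≠ 0 := by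
  classical
  have h : (∏ j, if Δ j = 0 then 1 else Δ j) ≠ 0 := by
    rw [Finset.prod_ne_zero_iff]
    intro j _
    split_ifs with h
    · exact one_ne_zero
    · exact h
  have : ∃ p : σ → ℝ, MvPolynomial.eval p (∏ j, if Δ j = 0 then 1 else Δ j) ≠ 0 := by
    by_contra! hh
    exact h (MvPolynomial.funext (fun x => by rw [hh x, map_zero]))
  obtain ⟨p, hp⟩ := this
  refine ⟨p, fun j ⟨q, hq⟩ => ?_⟩
  rw [map_prod, Finset.prod_ne_zero_iff] at hp
  have := hp j (mem_univ j)
  rw [if_neg] at this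
  · exact this
  · rintro h0
    rw [h0, map_zero] at hq
    exact hq rfl

section
variable {V : Type*} [DecidableEq V] {d : ℕ}

def row {R : Type*} [CommRing R] (p : V × Fin d → R) (a b : V) : V × Fin d → R := fun x =>
  (if x.1 = a then p (a, x.2) - p (b, x.2) else 0) +
    (if x.1 = b then p (b, x.2) - p (a, x.2) else 0)

lemma row_symm {R : Type*} [CommRing R] (p : V × Fin d → R) (a b : V) :
    row p a b = row p b a := by
  funext x
  simp only [row]
  ring

lemma row_self {R : Type*} [CommRing R] (p : V × Fin d → R) (a : V) :
    row p a a = 0 := by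
  funext x
  simp [row]

def rowS {R : Type*} [CommRing R] (p : V × Fin d → R) : Sym2 V → V × Fin d → R :=
  Sym2.lift ⟨row p, row_symm p⟩

lemma rowS_mk {R : Type*} [CommRing R] (p : V × Fin d → R) (a b : V) :
    rowS p s(a, b) = row p a b := rfl

def hat {R : Type*} [CommRing R] (p : V × Fin d → R) (v : V) : Option (Fin d) → R :=
  fun o => o.elim 1 (fun i => p (v, i))

/-- general position plus genericity. -/
structure Gen (p : V × Fin d → ℝ) : Prop where
  gp : ∀ (S : Finset V), S.card ≤ d + 1 → ∀ l : V → ℝ, ∑ v ∈ S, l v = 0 →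
    (∀ i, ∑ v ∈ S, l v * p (v, i) = 0) → ∀ v ∈ S, l v = 0
  gen : ∀ (B : Finset (Sym2 V)) (q : V × Fin d → ℝ), LinearIndepOn ℝ (rowS q) (B : Set (Sym2 V)) →
    LinearIndepOn ℝ (rowS p) (B : Set (Sym2 V))

lemma gp_exists (S : Finset V) (hS : S.card ≤ d + 1) :
    ∃ q : V × Fin d → ℝ, LinearIndepOn ℝ (hat q) (S : Set V) := by
  have : ∃ g : V → Fin (d + 1), Set.InjOn g S := by
    have hc : Fintype.card S ≤ Fintype.card (Fin (d+1)) := by simpa using hS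
    obtain ⟨g⟩ := Function.Embedding.nonempty_of_card_le hc
    refine ⟨fun v => if h : v ∈ S then g ⟨v, h⟩ else 0, ?_⟩
    intro a ha b hb hab
    have ha' : a ∈ S := ha
    have hb' : b ∈ S := hb
    simp only [ha', hb', dif_pos] at hab
    simpa using hab
  obtain ⟨g, hg⟩ := this
  refine ⟨fun x => if g x.1 = x.2.succ then 1 else 0, ?_⟩
  rw [linearIndepOn_finset_iff]
  intro l hl
  have h1 : ∀ v ∈ S, g v ≠ 0 → l v = 0 := by
    intro v hv hv0
    obtain ⟨i, hi⟩ := Fin.exists_succ_eq.2 hv0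
    have := congrFun hl (some i)
    simp only [Finset.sum_apply, Pi.smul_apply, hat, Option.elim, smul_eq_mul, Pi.zero_apply] at this
    rw [Finset.sum_eq_single v] at this
    · simpa [hi] using this
    · intro b hb hbv
      rw [if_neg, mul_zero]
      intro h
      exact hbv (hg hb hv (by rw [h, hi]))
    · exact fun h => absurd hv h
  intro v hv
  by_cases hv0 : g v = 0
  · have := congrFun hl none
    simp only [Finset.sum_apply, Pi.smul_apply, hat, Option.elim, smul_eq_mul, Pi.zero_apply] at this
    rw [Finset.sum_eq_single v] at this
    · simpa using this
    · intro b hb hbv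
      rw [h1 b hb, zero_mul]
      intro h
      exact hbv (hg hb hv (by rw [h, hv0]))
    · exact fun h => absurd hv h
  · exact h1 v hv hv0

lemma exists_gen (V : Type*) [Fintype V] [DecidableEq V] (d : ℕ) :
    ∃ p : V × Fin d → ℝ, Gen p := by
  choose D1 hD1 using fun B : Finset (Sym2 V) =>
    exists_poly (rowS (fun x : V × Fin d => (MvPolynomial.X x : MvPolynomial (V × Fin d) ℝ))) B
  choose D2 hD2 using fun S : Finset V =>
    exists_poly (hat (fun x : V × Fin d => (MvPolynomial.X x : MvPolynomial (V × Fin d) ℝ))) S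
  have e1 : ∀ q : V × Fin d → ℝ, (fun i k => MvPolynomial.eval q (rowS (fun x : V × Fin d =>
      (MvPolynomial.X x : MvPolynomial (V × Fin d) ℝ)) i k)) = rowS q := by
    intro q
    funext e k
    induction e with | _ a b => ?_
    simp only [rowS_mk, row]
    rw [map_add]
    congr 1 <;> split_ifs <;> simp
  have e2 : ∀ q : V × Fin d → ℝ, (fun i k => MvPolynomial.eval q (hat (fun x : V × Fin d =>
      (MvPolynomial.X x : MvPolynomial (V × Fin d) ℝ)) i k)) = hat q := by
    intro q
    funext e k
    cases k <;> simp [hat]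
  simp only [e1] at hD1
  simp only [e2] at hD2
  obtain ⟨p, hp⟩ := exists_generic (Sum.elim D1 D2)
  refine ⟨p, ?_, ?_⟩
  · intro S hS l h1 h2
    obtain ⟨q, hq⟩ := gp_exists (d := d) S hS
    have := (hD2 S p).1 (hp (Sum.inr S) ⟨q, (hD2 S q).2 hq⟩)
    rw [linearIndepOn_finset_iff] at this
    apply this l
    funext k
    cases k with
    | none => simpa [hat, Finset.sum_apply] using h1
    | some i => simpa [hat, Finset.sum_apply] using h2 i
  · intro B q hq
    exact (hD1 B p).1 (hp (Sum.inl B) ⟨q, (hD1 B q).2 hq⟩)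

end
end Pack

namespace Pack
open Finset

section
variable {V : Type*} [DecidableEq V] {d : ℕ}

lemma rowS_off (p : V × Fin d → ℝ) (e : Sym2 V) (v : V) (hv : v ∉ e) (i : Fin d) :
    rowS p e (v, i) = 0 := by
  induction e with | _ a b => ?_
  rw [Sym2.mem_iff, not_or] at hv
  simp [rowS_mk, row, hv.1, hv.2]

lemma star_inj {v a b : V} (h : s(v, a) = s(v, b)) : a = b := by
  rw [Sym2.eq_iff] at h
  rcases h with h | h
  · exact h.2
  · exact h.2.trans h.1

lemma sum_split (q : V × Fin d → ℝ) (B : Finset (Sym2 V)) (v : V) (hB : ∀ e ∈ B, v ∉ e)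
    (Q : Finset V) (c : Sym2 V → ℝ) :
    ∑ e ∈ B ∪ Q.image (fun z => s(v, z)), c e • rowS q e =
      ∑ e ∈ B, c e • rowS q e + ∑ z ∈ Q, c s(v, z) • row q v z := by
  rw [Finset.sum_union, Finset.sum_image]
  · rfl
  · intro a _ b _ h
    exact star_inj h
  · rw [Finset.disjoint_left]
    intro e he h
    obtain ⟨z, -, rfl⟩ := Finset.mem_image.1 h
    exact hB _ he (Sym2.mem_mk_left _ _)

lemma sum_at (q : V × Fin d → ℝ) (B : Finset (Sym2 V)) (v : V) (hB : ∀ e ∈ B, v ∉ e)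
    (Q : Finset V) (hQ : v ∉ Q) (c : Sym2 V → ℝ)
    (h : ∑ e ∈ B, c e • rowS q e + ∑ z ∈ Q, c s(v, z) • row q v z = 0) (i : Fin d) :
    ∑ z ∈ Q, c s(v, z) * (q (v, i) - q (z, i)) = 0 := by
  have := congrFun h (v, i)
  simp only [Pi.add_apply, Finset.sum_apply, Pi.smul_apply, smul_eq_mul, Pi.zero_apply] at this
  rw [Finset.sum_eq_zero (s := B), zero_add] at this
  · rw [← this]
    refine Finset.sum_congr rfl fun z hz => ?_
    have : v ≠ z := fun h => hQ (h ▸ hz)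
    simp [row, this]
  · intro e he
    rw [rowS_off q e v (hB e he), mul_zero]

lemma card_image_star (v : V) (Q : Finset V) : (Q.image (fun z => s(v, z))).card = Q.card := by
  rw [Finset.card_image_of_injOn]
  intro a _ b _ h
  exact star_inj h

lemma ext0 {p : V × Fin d → ℝ} (hp : Gen p) (B : Finset (Sym2 V)) (v : V)
    (hB : ∀ e ∈ B, v ∉ e) (hI : LinearIndepOn ℝ (rowS p) (B : Set (Sym2 V)))
    (Q : Finset V) (hQ : v ∉ Q) (hc : Q.card ≤ d) :
    LinearIndepOn ℝ (rowS p) ((B ∪ Q.image (fun z => s(v, z)) : Finset (Sym2 V)) : Set (Sym2 V)) := by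
  rw [linearIndepOn_finset_iff] at hI ⊢
  intro c h
  rw [sum_split p B v hB] at h
  have h1 := sum_at p B v hB Q hQ c h
  obtain ⟨S, hS⟩ : ∃ S, S = ∑ z ∈ Q, c s(v, z) := ⟨_, rfl⟩
  have h2 := hp.gp (insert v Q) (by rw [card_insert_of_notMem hQ]; omega)
    (fun u => if u = v then S else - c s(v, u)) ?_ ?_
  · have h3 : ∀ z ∈ Q, c s(v, z) = 0 := by
      intro z hz
      have := h2 z (mem_insert_of_mem hz)
      rw [if_neg (fun h : z = v => hQ (h ▸ hz))] at this
      linarith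
    rw [Finset.sum_eq_zero (s := Q) (fun z hz => by rw [h3 z hz, zero_smul]), add_zero] at h
    intro e he
    rcases Finset.mem_union.1 he with he | he
    · exact hI c h e he
    · obtain ⟨z, hz, rfl⟩ := Finset.mem_image.1 he
      exact h3 z hz
  · have e : ∀ z ∈ Q, (if z = v then S else - c s(v, z)) = - c s(v, z) := fun z hz =>
      if_neg (fun h : z = v => hQ (h ▸ hz))
    rw [Finset.sum_insert hQ, if_pos rfl, Finset.sum_congr rfl e, Finset.sum_neg_distrib, hS]
    ring
  · intro i
    have e : ∀ z ∈ Q, (if z = v then S else - c s(v, z)) * p (z, i) = - (c s(v, z) * p (z, i)) :=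
      fun z hz => by rw [if_neg (fun h : z = v => hQ (h ▸ hz))]; ring
    rw [Finset.sum_insert hQ, if_pos rfl, Finset.sum_congr rfl e, Finset.sum_neg_distrib]
    have := h1 i
    simp only [mul_sub, Finset.sum_sub_distrib, ← Finset.sum_mul, ← hS] at this
    linarith

lemma ext1 {p : V × Fin d → ℝ} (hp : Gen p) (B : Finset (Sym2 V)) (v x y : V)
    (hB : ∀ e ∈ B, v ∉ e) (hxy : x ≠ y) (hn : s(x, y) ∉ B)
    (hI : LinearIndepOn ℝ (rowS p) ((insert s(x, y) B : Finset (Sym2 V)) : Set (Sym2 V)))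
    (Q : Finset V) (hQ : v ∉ Q) (hx : x ∈ Q) (hy : y ∈ Q) (hc : Q.card ≤ d + 1) :
    LinearIndepOn ℝ (rowS p) ((B ∪ Q.image (fun z => s(v, z)) : Finset (Sym2 V)) : Set (Sym2 V)) := by
  let q : V × Fin d → ℝ := fun a => if a.1 = v then (p (x, a.2) + p (y, a.2)) / 2 else p a
  have hq : ∀ a i, a ≠ v → q (a, i) = p (a, i) := fun a i h => if_neg h
  have hqv : ∀ i, q (v, i) = (p (x, i) + p (y, i)) / 2 := fun i => if_pos rfl
  have hne : ∀ z ∈ Q, z ≠ v := fun z hz h => hQ (h ▸ hz)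
  apply hp.gen _ q
  rw [linearIndepOn_finset_iff] at hI ⊢
  intro c h
  rw [sum_split q B v hB] at h
  have h1 := sum_at q B v hB Q hQ c h
  set S := ∑ z ∈ Q, c s(v, z) with hS
  have h2 := hp.gp Q hc
    (fun u => (if u = x then S / 2 else 0) + (if u = y then S / 2 else 0) - c s(v, u)) ?_ ?_
  rotate_left
  · rw [Finset.sum_sub_distrib, Finset.sum_add_distrib, Finset.sum_ite_eq', Finset.sum_ite_eq',
      if_pos hx, if_pos hy, ← hS]
    ring
  · intro i
    have := h1 i
    rw [Finset.sum_congr rfl (g := fun z => c s(v, z) * ((p (x, i) + p (y, i)) / 2) -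
      c s(v, z) * p (z, i)) (fun z hz => by rw [hqv, hq z i (hne z hz)]; ring),
      Finset.sum_sub_distrib, ← Finset.sum_mul, ← hS] at this
    simp only [sub_mul, add_mul, ite_mul, zero_mul]
    rw [Finset.sum_sub_distrib, Finset.sum_add_distrib, Finset.sum_ite_eq', Finset.sum_ite_eq',
      if_pos hx, if_pos hy]
    linarith
  have hcx : c s(v, x) = S / 2 := by
    have := h2 x hx
    simp only [if_pos, if_neg hxy] at this
    linarith
  have hcy : c s(v, y) = S / 2 := by
    have := h2 y hy
    simp only [if_pos, if_neg hxy.symm] at this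
    linarith
  have hcz : ∀ z ∈ Q, z ≠ x → z ≠ y → c s(v, z) = 0 := by
    intro z hz hzx hzy
    have := h2 z hz
    simp only [if_neg hzx, if_neg hzy] at this
    linarith
  have hrow : row q v x + row q v y = (1 / 2 : ℝ) • row p x y := by
    funext ⟨a, i⟩
    simp only [row, Pi.add_apply, Pi.smul_apply, smul_eq_mul, hqv, hq x i (hne x hx), hq y i (hne y hy)]
    by_cases hav : a = v
    · subst hav
      simp [(hne x hx).symm, (hne y hy).symm]
      ring
    · simp only [if_neg hav]
      by_cases hax : a = x
      · subst hax
        simp [hxy]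
        ring
      · by_cases hay : a = y
        · subst hay
          simp [hax]
          ring
        · simp [hax, hay]
  have hsumQ : ∑ z ∈ Q, c s(v, z) • row q v z = (S / 4) • row p x y := by
    rw [Finset.sum_eq_add_of_mem x y hx hy hxy, hcx, hcy, ← smul_add, hrow, smul_smul]
    · congr 1
      ring
    · intro z hz hzz
      rw [hcz z hz hzz.1 hzz.2, zero_smul]
  have hsumB : ∑ e ∈ B, c e • rowS q e = ∑ e ∈ B, c e • rowS p e := by
    refine Finset.sum_congr rfl fun e he => ?_
    congr 1
    have := hB e he
    induction e with | _ a b => ?_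
    rw [Sym2.mem_iff, not_or] at this
    funext ⟨u, i⟩
    simp only [rowS_mk, row, hq a i (Ne.symm this.1), hq b i (Ne.symm this.2)]
  rw [hsumQ, hsumB] at h
  have h3 := hI (fun e => if e = s(x, y) then S / 4 else c e) (by
    rw [Finset.sum_insert hn, if_pos rfl, rowS_mk, add_comm]
    refine Eq.trans ?_ h
    congr 1
    refine Finset.sum_congr rfl fun e he => ?_
    rw [if_neg (fun h : e = s(x, y) => hn (h ▸ he))])
  have hS0 : S = 0 := by
    have := h3 s(x, y) (mem_insert_self _ _)
    rw [if_pos rfl] at this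
    linarith
  intro e he
  rcases Finset.mem_union.1 he with he | he
  · have := h3 e (mem_insert_of_mem he)
    rwa [if_neg (fun h : e = s(x, y) => hn (h ▸ he))] at this
  · obtain ⟨z, hz, rfl⟩ := Finset.mem_image.1 he
    by_cases h1 : z = x
    · rw [h1, hcx, hS0, zero_div]
    by_cases h2 : z = y
    · rw [h2, hcy, hS0, zero_div]
    exact hcz z hz h1 h2

lemma stress (p : V × Fin d → ℝ) (T : Finset V) (l : V → ℝ) (h0 : ∑ v ∈ T, l v = 0)
    (h1 : ∀ i, ∑ v ∈ T, l v * p (v, i) = 0) :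
    ∑ a ∈ T, ∑ b ∈ T, (l a * l b) • row p a b = 0 := by
  have hx : ∀ x i, ∑ b ∈ T, l b * (p (x, i) - p (b, i)) = 0 := by
    intro x i
    simp only [mul_sub, Finset.sum_sub_distrib, ← Finset.sum_mul, h0, h1]
    ring
  funext ⟨x, i⟩
  simp only [Finset.sum_apply, Pi.smul_apply, smul_eq_mul, row, mul_add, Finset.sum_add_distrib,
    Pi.zero_apply, mul_ite, mul_zero]
  have e1 : ∑ a ∈ T, ∑ b ∈ T, (if x = a then l a * l b * (p (a, i) - p (b, i)) else 0) = 0 := by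
    apply Finset.sum_eq_zero
    intro a _
    by_cases h : x = a
    · simp only [if_pos h, mul_assoc, ← Finset.mul_sum, hx, mul_zero]
    · simp [h]
  have e2 : ∑ a ∈ T, ∑ b ∈ T, (if x = b then l a * l b * (p (b, i) - p (a, i)) else 0) = 0 := by
    rw [Finset.sum_comm]
    refine Eq.trans ?_ e1
    refine Finset.sum_congr rfl fun a _ => Finset.sum_congr rfl fun b _ => ?_
    rw [mul_comm (l b)]
  rw [e1, e2, add_zero]

lemma glue {p : V × Fin d → ℝ} (hp : Gen p) (U : Submodule ℝ (V × Fin d → ℝ))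
    (X : Finset V) (hX : X.card = d) (v x : V) (hv : v ∉ X) (hx : x ∉ X)
    (h1 : ∀ a ∈ X, ∀ b ∈ X, row p a b ∈ U) (h2 : ∀ a ∈ X, row p x a ∈ U)
    (h3 : ∀ a ∈ X, row p v a ∈ U) : row p v x ∈ U := by
  by_cases hvx : v = x
  · rw [hvx, row_self]; exact U.zero_mem
  have hvxX : v ∉ insert x X := by simp [hvx, hv]
  have hT : (insert v (insert x X)).card = d + 2 := by
    rw [card_insert_of_notMem hvxX, card_insert_of_notMem hx, hX]
  set T := insert v (insert x X) with hTd
  have hnot : ¬ LinearIndepOn ℝ (hat p) (T : Set V) := by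
    intro h
    have := LinearIndependent.fintype_card_le_finrank h
    simp [hT] at this
  rw [linearIndepOn_finset_iff] at hnot
  push Not at hnot
  obtain ⟨l, hl, w, hw, hlw⟩ := hnot
  have l0 : ∑ v ∈ T, l v = 0 := by
    simpa [hat, Finset.sum_apply] using congrFun hl none
  have l1 : ∀ i, ∑ v ∈ T, l v * p (v, i) = 0 := by
    intro i
    simpa [hat, Finset.sum_apply] using congrFun hl (some i)
  have hne : ∀ u ∈ T, l u ≠ 0 := by
    intro u hu hu0
    have hcard : (T.erase u).card ≤ d + 1 := by rw [card_erase_of_mem hu]; omega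
    have := hp.gp (T.erase u) hcard l (by rw [← l0, ← Finset.add_sum_erase T l hu, hu0, zero_add])
      (fun i => by rw [← l1 i, ← Finset.add_sum_erase T _ hu, hu0, zero_mul, zero_add])
    by_cases hwu : w = u
    · exact hlw (hwu ▸ hu0)
    · exact hlw (this w (mem_erase.2 ⟨hwu, hw⟩))
  have hs := stress p T l l0 l1
  have hvT : v ∈ T := mem_insert_self _ _
  have hxT : x ∈ T := mem_insert_of_mem (mem_insert_self _ _)
  have hin : ∀ a ∈ T, ∀ b ∈ T, ¬ (a = v ∧ b = x) → ¬ (a = x ∧ b = v) → row p a b ∈ U := by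
    intro a ha b hb n1 n2
    have h2' : ∀ a ∈ X, row p a x ∈ U := fun a ha => row_symm p x a ▸ h2 a ha
    have h3' : ∀ a ∈ X, row p a v ∈ U := fun a ha => row_symm p v a ▸ h3 a ha
    have hs : ∀ a, row p a a ∈ U := fun a => by rw [row_self]; exact U.zero_mem
    rw [hTd, mem_insert, mem_insert] at ha hb
    rcases ha with rfl | rfl | ha <;> rcases hb with rfl | rfl | hb <;> simp_all
  have hs2 : ∑ a ∈ T, ∑ b ∈ T, (if (a = v ∧ b = x) ∨ (a = x ∧ b = v) then
      (l a * l b) • row p a b else 0) + ∑ a ∈ T, ∑ b ∈ T, (if (a = v ∧ b = x) ∨ (a = x ∧ b = v) then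
      0 else (l a * l b) • row p a b) = 0 := by
    rw [← Finset.sum_add_distrib]
    refine Eq.trans ?_ hs
    refine Finset.sum_congr rfl fun a _ => ?_
    rw [← Finset.sum_add_distrib]
    refine Finset.sum_congr rfl fun b _ => ?_
    split_ifs <;> simp
  have hs3 : ∑ a ∈ T, ∑ b ∈ T, (if (a = v ∧ b = x) ∨ (a = x ∧ b = v) then
      (l a * l b) • row p a b else 0) = (2 * (l v * l x)) • row p v x := by
    rw [Finset.sum_eq_add_of_mem v x hvT hxT hvx]
    · rw [Finset.sum_eq_single_of_mem x hxT, Finset.sum_eq_single_of_mem v hvT]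
      · simp only [true_and, and_self, true_or, or_true, if_true]
        rw [row_symm p x v, ← add_smul]
        congr 1
        ring
      · intro b _ hb
        rw [if_neg]
        simp [hb, Ne.symm hvx]
      · intro b _ hb
        rw [if_neg]
        simp [hb, hvx]
    · intro c _ hc
      apply Finset.sum_eq_zero
      intro b _
      rw [if_neg]
      simp [hc.1, hc.2]
  have hs4 : ∑ a ∈ T, ∑ b ∈ T, (if (a = v ∧ b = x) ∨ (a = x ∧ b = v) then
      0 else (l a * l b) • row p a b) ∈ U := by
    refine U.sum_mem fun a ha => U.sum_mem fun b hb => ?_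
    split_ifs with h
    · exact U.zero_mem
    · rw [not_or] at h
      exact U.smul_mem _ (hin a ha b hb h.1 h.2)
  rw [hs3] at hs2
  have h5 : (2 * (l v * l x)) • row p v x ∈ U := by
    rw [eq_neg_of_add_eq_zero_left hs2]
    exact U.neg_mem hs4
  have h6 : (2 * (l v * l x)) ≠ 0 := mul_ne_zero two_ne_zero (mul_ne_zero (hne v hvT) (hne x hxT))
  exact (U.smul_mem_iff h6).1 h5

lemma functional {p : V × Fin d → ℝ} (hp : Gen p) (S : Finset V) (b : V) (hb : b ∉ S)
    (hc : S.card ≤ d) : ∃ (α : Fin d → ℝ) (l : V → ℝ),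
      (∀ u w, l u - l w = ∑ i, α i * (p (u, i) - p (w, i))) ∧ (∀ s ∈ S, l s = 0) ∧ l b ≠ 0 := by
  have hI : LinearIndepOn ℝ (hat p) ((insert b S : Finset V) : Set V) := by
    rw [linearIndepOn_finset_iff]
    intro l hl
    apply hp.gp _ (by rw [card_insert_of_notMem hb]; omega)
    · simpa [hat, Finset.sum_apply] using congrFun hl none
    · intro i
      simpa [hat, Finset.sum_apply] using congrFun hl (some i)
  rw [Finset.coe_insert] at hI
  have hn := hI.notMem_span_of_insert (by simpa using hb)
  obtain ⟨f, hf, hle⟩ := Submodule.exists_le_ker_of_notMem hn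
  refine ⟨fun i => f (Pi.single (some i) 1), fun u => f (hat p u), ?_, ?_, hf⟩
  · intro u w
    rw [← map_sub]
    have : hat p u - hat p w = ∑ i, (p (u, i) - p (w, i)) • (Pi.single (some i) 1 : Option (Fin d) → ℝ) := by
      funext o
      cases o with
      | none => simp [hat, Finset.sum_apply]
      | some j => simp [hat, Finset.sum_apply, Pi.single_apply]
    rw [this, map_sum]
    refine Finset.sum_congr rfl fun i _ => ?_
    rw [map_smul, smul_eq_mul, mul_comm]
  · intro s hs
    exact hle (Submodule.subset_span ⟨s, by simpa using hs, rfl⟩)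

lemma sep [Fintype V] {p : V × Fin d → ℝ} (hp : Gen p) (F : Set (Sym2 V)) (S A : Finset V)
    (hS : S.card + 1 ≤ d) (a b : V) (ha : a ∈ A) (haS : a ∉ S) (hb : b ∉ A) (hbS : b ∉ S)
    (hF : ∀ x ∈ A, ∀ y, s(x, y) ∈ F → y ∈ A ∨ y ∈ S) :
    row p a b ∉ Submodule.span ℝ (rowS p '' F) := by
  have hab : a ≠ b := fun h => hb (h ▸ ha)
  obtain ⟨α, la, h1, h2, h3⟩ := functional hp (insert a S) b (by simp [hab.symm, hbS])
    ((card_insert_le _ _).trans hS)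
  obtain ⟨β, lb, k1, k2, k3⟩ := functional hp (insert b S) a (by simp [hab, haS])
    ((card_insert_le _ _).trans hS)
  let u : V → Fin d → ℝ := fun x i => α i * lb x - β i * la x
  let U : V × Fin d → ℝ := fun x => if x.1 ∈ A then u x.1 x.2 else 0
  have hu : ∀ x w w', ∑ i, u x i * (p (w, i) - p (w', i)) =
      (la w - la w') * lb x - (lb w - lb w') * la x := by
    intro x w w'
    rw [h1, k1, Finset.sum_mul, Finset.sum_mul, ← Finset.sum_sub_distrib]
    refine Finset.sum_congr rfl fun i _ => ?_
    simp only [u]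
    ring
  have hrow : ∀ x y, ∑ z, U z * row p x y z = ∑ i, U (x, i) * (p (x, i) - p (y, i)) +
      ∑ i, U (y, i) * (p (y, i) - p (x, i)) := by
    intro x y
    rw [Fintype.sum_prod_type_right, ← Finset.sum_add_distrib]
    refine Finset.sum_congr rfl fun i _ => ?_
    simp only [row, mul_add, mul_ite, mul_zero, Finset.sum_add_distrib]
    simp
  have hUA : ∀ x ∈ A, ∀ i, U (x, i) = u x i := fun x hx i => if_pos hx
  have hUN : ∀ x, x ∉ A → ∀ i, U (x, i) = 0 := fun x hx i => if_neg hx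
  have huS : ∀ x ∈ S, ∀ i, u x i = 0 := by
    intro x hx i
    simp only [u, h2 x (mem_insert_of_mem hx), k2 x (mem_insert_of_mem hx)]
    ring
  have hvan : ∀ x ∈ A, ∀ y, (y ∈ A ∨ y ∈ S) → ∑ z, U z * row p x y z = 0 := by
    intro x hx y hy
    have e : ∀ i, U (y, i) = u y i := by
      intro i
      by_cases hyA : y ∈ A
      · exact hUA y hyA i
      · rw [hUN y hyA, huS y (hy.resolve_left hyA)]
    rw [hrow]
    simp only [e, hUA x hx, hu]
    ring
  have hperp : ∀ w ∈ Submodule.span ℝ (rowS p '' F), ∑ z, U z * w z = 0 := by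
    intro w hw
    induction hw using Submodule.span_induction with
    | mem w hw =>
      obtain ⟨e, he, rfl⟩ := hw
      induction e with | _ x y => ?_
      rw [rowS_mk]
      by_cases hx : x ∈ A
      · exact hvan x hx y (hF x hx y he)
      · by_cases hy : y ∈ A
        · rw [row_symm]
          exact hvan y hy x (hF y hy x (by rwa [Sym2.eq_swap]))
        · rw [hrow]
          simp [hUN x hx, hUN y hy]
    | zero => simp
    | add x y _ _ hx hy => simp [mul_add, Finset.sum_add_distrib, hx, hy]
    | smul c x _ hx =>
      simp only [Pi.smul_apply, smul_eq_mul, mul_left_comm _ c, ← Finset.mul_sum, hx, mul_zero]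
  intro hmem
  have := hperp _ hmem
  rw [hrow] at this
  simp only [hUA a ha, hUN b hb, hu, zero_mul, Finset.sum_const_zero, add_zero,
    h2 a (mem_insert_self _ _), k2 b (mem_insert_self _ _)] at this
  have h5 : la b * lb a = 0 := by linarith
  exact (mul_ne_zero h3 k3) h5
end
end Pack

namespace Pack
open Finset

section
variable {ι W : Type*} [Fintype ι] [DecidableEq ι] [AddCommGroup W] [Module ℝ W] {t : ℕ}

def cls (c : ι → Option (Fin t)) (j : Fin t) : Finset ι := univ.filter (fun e => c e = some j)

def Valid (ρ : ι → W) (E : Finset ι) (c : ι → Option (Fin t)) : Prop :=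
  (∀ j, LinearIndepOn ℝ ρ (cls c j : Set ι)) ∧ ∀ e, c e ≠ none → e ∈ E

def cov (c : ι → Option (Fin t)) : Finset ι := univ.filter (fun e => c e ≠ none)

def exch (c : ι → Option (Fin t)) (e f : ι) (j : Fin t) : ι → Option (Fin t) :=
  fun g => if g = f then none else if g = e then some j else c g

def Step (ρ : ι → W) (E : Finset ι) (c c' : ι → Option (Fin t)) : Prop :=
  ∃ e f j, e ∈ E ∧ c e = none ∧ c f = some j ∧ c' = exch c e f j ∧ Valid ρ E c'

lemma mem_cls {c : ι → Option (Fin t)} {j : Fin t} {e : ι} : e ∈ cls c j ↔ c e = some j := by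
  simp [cls]

lemma valid_insert {ρ : ι → W} {E : Finset ι} {c : ι → Option (Fin t)} (hc : Valid ρ E c)
    {e : ι} (he : e ∈ E) (hn : c e = none) (j : Fin t)
    (hs : ρ e ∉ Submodule.span ℝ (ρ '' (cls c j : Set ι))) :
    Valid ρ E (fun g => if g = e then some j else c g) := by
  constructor
  · intro j'
    by_cases h : j' = j
    · subst h
      refine (LinearIndepOn.insert (hc.1 j') hs).mono ?_
      intro g hg
      have := mem_cls.1 (Finset.mem_coe.1 hg)
      by_cases hge : g = e
      · exact Or.inl hge
      · rw [if_neg hge] at this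
        exact Or.inr (by simpa [cls] using this)
    · refine (hc.1 j').mono ?_
      intro g hg
      have := mem_cls.1 (Finset.mem_coe.1 hg)
      by_cases hge : g = e
      · rw [if_pos hge, Option.some.injEq] at this
        exact absurd this.symm h
      · rw [if_neg hge] at this
        simpa [cls] using this
  · intro g hg
    by_cases hge : g = e
    · exact hge ▸ he
    · simp only [if_neg hge] at hg
      exact hc.2 g hg

lemma valid_exch {ρ : ι → W} {E : Finset ι} {c : ι → Option (Fin t)} (hc : Valid ρ E c)
    {e f : ι} (he : e ∈ E) (j : Fin t)
    (hs : ρ e ∉ Submodule.span ℝ (ρ '' ((cls c j).erase f : Set ι))) :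
    Valid ρ E (exch c e f j) := by
  constructor
  · intro j'
    by_cases h : j' = j
    · subst h
      refine (LinearIndepOn.insert ((hc.1 j').mono (t := ((cls c j').erase f : Set ι)) ?_) hs).mono ?_
      · exact Finset.coe_subset.2 (erase_subset _ _)
      intro g hg
      have := mem_cls.1 (Finset.mem_coe.1 hg)
      unfold exch at this
      by_cases hgf : g = f
      · simp [hgf] at this
      · rw [if_neg hgf] at this
        by_cases hge : g = e
        · exact Or.inl hge
        · rw [if_neg hge] at this
          refine Or.inr ?_
          simp [cls, hgf, this]
    · refine (hc.1 j').mono ?_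
      intro g hg
      have := mem_cls.1 (Finset.mem_coe.1 hg)
      unfold exch at this
      by_cases hgf : g = f
      · simp [hgf] at this
      · rw [if_neg hgf] at this
        by_cases hge : g = e
        · rw [if_pos hge, Option.some.injEq] at this
          exact absurd this.symm h
        · rw [if_neg hge] at this
          simpa [cls] using this
  · intro g hg
    unfold exch at hg
    by_cases hgf : g = f
    · simp [hgf] at hg
    · rw [if_neg hgf] at hg
      by_cases hge : g = e
      · exact hge ▸ he
      · rw [if_neg hge] at hg
        exact hc.2 g hg

lemma step_cov {ρ : ι → W} {E : Finset ι} {c c' : ι → Option (Fin t)} (h : Step ρ E c c') :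
    (cov c').card = (cov c).card := by
  obtain ⟨e, f, j, he, hce, hcf, rfl, -⟩ := h
  have hef : e ≠ f := by rintro rfl; rw [hce] at hcf; cases hcf
  have hf : f ∈ cov c := by simp [cov, hcf]
  have : cov (exch c e f j) = insert e ((cov c).erase f) := by
    ext g
    simp only [cov, exch, mem_filter, mem_univ, true_and, mem_insert, mem_erase]
    by_cases hgf : g = f
    · subst hgf; simp [hef.symm]
    · by_cases hge : g = e
      · simp [hge, hef]
      · simp [hge, hgf]
  rw [this, card_insert_of_notMem, card_erase_of_mem hf]
  · have := card_pos.2 ⟨f, hf⟩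
    omega
  · simp [cov, hce]

theorem union_thm [FiniteDimensional ℝ W] (ρ : ι → W) (E : Finset ι) (t R : ℕ)
    (hR : ∀ I : Finset ι, I ⊆ E → LinearIndepOn ℝ ρ (I : Set ι) → I.card ≤ R)
    (h : ∀ F ⊆ E, t * R ≤ t * Module.finrank ℝ (Submodule.span ℝ (ρ '' (F : Set ι))) + (E \ F).card) :
    ∃ c : ι → Option (Fin t), Valid ρ E c ∧ ∀ j, (cls c j).card = R := by
  classical
  obtain ⟨c0, hc0, hmax⟩ : ∃ c0 : ι → Option (Fin t), Valid ρ E c0 ∧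
      ∀ c, Valid ρ E c → (cov c).card ≤ (cov c0).card := by
    have hne : (univ.filter (fun c : ι → Option (Fin t) => Valid ρ E c)).Nonempty := by
      refine ⟨fun _ => none, ?_⟩
      simp only [mem_filter, mem_univ, true_and]
      refine ⟨fun j => ?_, fun e he => absurd rfl he⟩
      have : cls (fun _ : ι => (none : Option (Fin t))) j = ∅ := by simp [cls]
      rw [this]
      simp
    obtain ⟨c0, h1, h2⟩ := Finset.exists_max_image _ (fun c => (cov c).card) hne
    refine ⟨c0, (mem_filter.1 h1).2, fun c hc => h2 c (mem_filter.2 ⟨mem_univ _, hc⟩)⟩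
  let Re : (ι → Option (Fin t)) → Prop := fun c => Relation.ReflTransGen (Step ρ E) c0 c
  have hRe : ∀ c, Re c → Valid ρ E c ∧ (cov c).card = (cov c0).card := by
    intro c hc
    induction hc with
    | refl => exact ⟨hc0, rfl⟩
    | tail _ hs ih =>
      refine ⟨?_, (step_cov hs).trans ih.2⟩
      obtain ⟨e, f, j, _, _, _, _, hv⟩ := hs
      exact hv
  let E0 : Finset ι := E.filter (fun x => ∃ c, Re c ∧ c x = none)
  have claim1 : ∀ c, Re c → ∀ e ∈ E, c e = none → ∀ j,
      ρ e ∈ Submodule.span ℝ (ρ '' ((cls c j ∩ E0 : Finset ι) : Set ι)) := by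
    intro c hc e he hce j
    obtain ⟨hv, hcard⟩ := hRe c hc
    have h1 : ρ e ∈ Submodule.span ℝ (ρ '' (cls c j : Set ι)) := by
      by_contra hcon
      have hv' := valid_insert hv he hce j hcon
      have := hmax _ hv'
      have h2 : cov (fun g => if g = e then some j else c g) = insert e (cov c) := by
        ext g
        simp only [cov, mem_filter, mem_univ, true_and, mem_insert]
        by_cases hge : g = e <;> simp [hge]
      rw [h2, card_insert_of_notMem (by simp [cov, hce])] at this
      omega
    have h2 : ∀ f ∈ cls c j, f ∉ E0 → ρ e ∈ Submodule.span ℝ (ρ '' ((cls c j).erase f : Set ι)) := by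
      intro f hf hfE
      by_contra hcon
      have hv' := valid_exch hv he j hcon
      have hcf := mem_cls.1 hf
      apply hfE
      refine mem_filter.2 ⟨hv.2 f (by simp [hcf]), exch c e f j, hc.tail ⟨e, f, j, he, hce, hcf, rfl, hv'⟩, ?_⟩
      simp [exch]
    rw [Submodule.mem_span_image_finset_iff_exists_fun'] at h1 ⊢
    obtain ⟨a, ha⟩ := h1
    refine ⟨a, ?_⟩
    rw [← ha]
    apply Finset.sum_subset inter_subset_left
    intro f hf hfE
    have hfE0 : f ∉ E0 := fun h => hfE (mem_inter.2 ⟨hf, h⟩)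
    have h3 := h2 f hf hfE0
    rw [Submodule.mem_span_image_finset_iff_exists_fun'] at h3
    obtain ⟨b, hb⟩ := h3
    have hI := hv.1 j
    rw [linearIndepOn_finset_iff] at hI
    have := hI (fun g => a g - (if g = f then 0 else b g)) (by
      simp only [sub_smul, Finset.sum_sub_distrib, ha]
      rw [← Finset.add_sum_erase _ _ hf]
      simp only [if_true, zero_smul, zero_add]
      rw [← hb, sub_eq_zero]
      refine Finset.sum_congr rfl fun g hg => ?_
      rw [if_neg (ne_of_mem_erase hg)]) f hf
    simp only [if_true, sub_zero] at this
    rw [this, zero_smul]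
  have claim2 : ∀ c, Re c → ∀ j, Submodule.span ℝ (ρ '' ((cls c j ∩ E0 : Finset ι) : Set ι)) ≤
      Submodule.span ℝ (ρ '' ((cls c0 j ∩ E0 : Finset ι) : Set ι)) := by
    intro c hc
    induction hc with
    | refl => intro j; exact le_rfl
    | @tail c1 c2 hc1 hs ih =>
      intro j
      refine le_trans ?_ (ih j)
      rw [Submodule.span_le]
      rintro _ ⟨g, hg, rfl⟩
      obtain ⟨e, f, j', he, hce, hcf, rfl, hv⟩ := hs
      rw [Finset.mem_coe, mem_inter, mem_cls] at hg
      obtain ⟨hg1, hg2⟩ := hg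
      unfold exch at hg1
      by_cases hgf : g = f
      · simp [hgf] at hg1
      · rw [if_neg hgf] at hg1
        by_cases hge : g = e
        · rw [hge]
          exact claim1 c1 hc1 e he hce j
        · rw [if_neg hge] at hg1
          apply Submodule.subset_span
          exact ⟨g, by simp [mem_cls, hg1, hg2], rfl⟩
  have claim3 : ∀ j, Module.finrank ℝ (Submodule.span ℝ (ρ '' (E0 : Set ι))) ≤ (cls c0 j ∩ E0).card := by
    intro j
    have hle : Submodule.span ℝ (ρ '' (E0 : Set ι)) ≤
        Submodule.span ℝ (ρ '' ((cls c0 j ∩ E0 : Finset ι) : Set ι)) := by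
      rw [Submodule.span_le]
      rintro _ ⟨e, he, rfl⟩
      obtain ⟨heE, c, hc, hce⟩ := mem_filter.1 (Finset.mem_coe.1 he)
      exact claim2 c hc j (claim1 c hc e heE hce j)
    refine (Submodule.finrank_mono hle).trans ?_
    rw [← Finset.coe_image]
    exact (finrank_span_finset_le_card _).trans card_image_le
  have claim4 : (E \ E0).card ≤ ∑ j, (cls c0 j \ E0).card := by
    rw [← Finset.card_biUnion]
    · apply card_le_card
      intro e he
      rw [mem_sdiff] at he
      have : c0 e ≠ none := by
        intro hn
        exact he.2 (mem_filter.2 ⟨he.1, c0, Relation.ReflTransGen.refl, hn⟩)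
      obtain ⟨j, hj⟩ := Option.ne_none_iff_exists'.1 this
      exact mem_biUnion.2 ⟨j, mem_univ _, mem_sdiff.2 ⟨mem_cls.2 hj, he.2⟩⟩
    · intro i _ j _ hij
      rw [Function.onFun, Finset.disjoint_left]
      intro e h1 h2
      have h1 := mem_cls.1 (mem_sdiff.1 h1).1
      have h2 := mem_cls.1 (mem_sdiff.1 h2).1
      rw [h1] at h2
      exact hij (Option.some.inj h2)
  have hle : ∀ j ∈ (univ : Finset (Fin t)), (cls c0 j).card ≤ R := by
    intro j _
    apply hR _ _ (hc0.1 j)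
    intro e he
    exact hc0.2 e (by simp [mem_cls.1 he])
  have hsum : ∑ j : Fin t, (cls c0 j).card = ∑ j : Fin t, R := by
    apply le_antisymm (Finset.sum_le_sum hle)
    have h1 := h E0 (filter_subset _ _)
    have h2 : t * Module.finrank ℝ (Submodule.span ℝ (ρ '' (E0 : Set ι))) ≤
        ∑ j : Fin t, (cls c0 j ∩ E0).card := by
      have := Finset.sum_le_sum (fun j (_ : j ∈ (univ : Finset (Fin t))) => claim3 j)
      simpa using this
    have h3 : ∑ j : Fin t, (cls c0 j).card =
        ∑ j : Fin t, (cls c0 j ∩ E0).card + ∑ j : Fin t, (cls c0 j \ E0).card := by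
      rw [← Finset.sum_add_distrib]
      refine Finset.sum_congr rfl fun j _ => ?_
      rw [Finset.card_inter_add_card_sdiff]
    simp only [sum_const, card_univ, Fintype.card_fin, smul_eq_mul]
    omega
  refine ⟨c0, hc0, fun j => ?_⟩
  exact (Finset.sum_eq_sum_iff_of_le hle).1 hsum j (mem_univ j)
end
end Pack

namespace Pack
open Finset

section
variable {V : Type*} [DecidableEq V] {d : ℕ}

open Classical in
noncomputable def contr (C : SimpleGraph V) (d : ℕ) (Q : Finset V) : ℕ :=
  if d + 1 ≤ Q.card ∧ ¬ C.IsClique (Q : Set V) then d + 1 else if d ≤ Q.card then d else 0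

lemma contr_ge (C : SimpleGraph V) (Q : Finset V) (h : d ≤ Q.card) : d ≤ contr C d Q := by
  unfold contr
  split_ifs <;> omega

lemma contr_ge' (C : SimpleGraph V) (Q : Finset V) (h : d + 1 ≤ Q.card)
    (h2 : ¬ C.IsClique (Q : Set V)) : d + 1 ≤ contr C d Q := by
  unfold contr
  rw [if_pos ⟨h, h2⟩]

lemma contr_step (hd : 0 < d) {p : V × Fin d → ℝ} (hp : Gen p) (U : Submodule ℝ (V × Fin d → ℝ))
    (C : SimpleGraph V) (hC : ∀ a b, C.Adj a b ↔ a ≠ b ∧ row p a b ∈ U)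
    (B : Finset (Sym2 V)) (hB : LinearIndepOn ℝ (rowS p) (B : Set (Sym2 V)))
    (hBU : ∀ e ∈ B, rowS p e ∈ U) (v : V) (hv : ∀ e ∈ B, v ∉ e) (Q : Finset V) (hQ : v ∉ Q) :
    ∃ Q' ⊆ Q, LinearIndepOn ℝ (rowS p)
      ((B ∪ Q'.image (fun z => s(v, z)) : Finset (Sym2 V)) : Set (Sym2 V)) ∧
      contr C d Q ≤ Q'.card := by
  unfold contr
  split_ifs with h1 h2
  · obtain ⟨h1, h2⟩ := h1
    unfold SimpleGraph.IsClique Set.Pairwise at h2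
    push Not at h2
    obtain ⟨x, hx, y, hy, hxy, hn⟩ := h2
    have hU : row p x y ∉ U := fun h => hn ((hC x y).2 ⟨hxy, h⟩)
    have hxB : s(x, y) ∉ B := fun h => hU (hBU _ h)
    have hsub : ({x, y} : Finset V) ⊆ Q := by
      intro z hz
      simp only [mem_insert, mem_singleton] at hz
      rcases hz with rfl | rfl
      · exact hx
      · exact hy
    obtain ⟨Q', hQ1, hQ2, hQ3⟩ := Finset.exists_subsuperset_card_eq hsub
      (n := d + 1) (by rw [card_pair hxy]; omega) h1
    refine ⟨Q', hQ2, ?_, hQ3.ge⟩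
    refine ext1 hp B v x y hv hxy hxB ?_ Q' (fun h => hQ (hQ2 h)) (hQ1 (by simp)) (hQ1 (by simp)) hQ3.le
    rw [Finset.coe_insert]
    refine LinearIndepOn.insert hB ?_
    intro hmem
    apply hU
    have : Submodule.span ℝ (rowS p '' (B : Set (Sym2 V))) ≤ U := by
      rw [Submodule.span_le]
      rintro _ ⟨e, he, rfl⟩
      exact hBU e he
    exact this hmem
  · obtain ⟨Q', hQ2, hQ3⟩ := Finset.exists_subset_card_eq h2
    exact ⟨Q', hQ2, ext0 hp B v hv hB Q' (fun h => hQ (hQ2 h)) hQ3.le, hQ3.ge⟩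
  · exact ⟨∅, empty_subset _, by simpa using hB, by simp⟩

open Classical in
lemma build [Fintype V] (hd : 0 < d) {p : V × Fin d → ℝ} (hp : Gen p)
    (U : Submodule ℝ (V × Fin d → ℝ))
    (C : SimpleGraph V) (hC : ∀ a b, C.Adj a b ↔ a ≠ b ∧ row p a b ∈ U)
    (f : V → ℕ) (hf : Function.Injective f) :
    ∑ v, contr C d (univ.filter (fun u => C.Adj v u ∧ f u < f v)) ≤ Module.finrank ℝ U := by
  have key : ∀ m : ℕ, ∃ B : Finset (Sym2 V), LinearIndepOn ℝ (rowS p) (B : Set (Sym2 V)) ∧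
      (∀ e ∈ B, rowS p e ∈ U) ∧ (∀ e ∈ B, ∀ u ∈ e, f u < m) ∧
      ∑ v ∈ univ.filter (fun v => f v < m),
        contr C d (univ.filter (fun u => C.Adj v u ∧ f u < f v)) ≤ B.card := by
    intro m
    induction m with
    | zero => exact ⟨∅, by simp⟩
    | succ m ih =>
      obtain ⟨B, h1, h2, h3, h4⟩ := ih
      by_cases hm : ∃ v, f v = m
      · obtain ⟨v, rfl⟩ := hm
        have hv : ∀ e ∈ B, v ∉ e := fun e he hve => lt_irrefl _ (h3 e he v hve)
        obtain ⟨Q', hQ1, hQ2, hQ3⟩ := contr_step hd hp U C hC B h1 h2 v hv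
          (univ.filter (fun u => C.Adj v u ∧ f u < f v)) (by simp)
        refine ⟨_, hQ2, ?_, ?_, ?_⟩
        · intro e he
          rcases Finset.mem_union.1 he with he | he
          · exact h2 e he
          · obtain ⟨z, hz, rfl⟩ := Finset.mem_image.1 he
            have := (mem_filter.1 (hQ1 hz)).2
            exact ((hC v z).1 this.1).2
        · intro e he u hu
          rcases Finset.mem_union.1 he with he | he
          · exact (h3 e he u hu).trans (Nat.lt_succ_self _)
          · obtain ⟨z, hz, rfl⟩ := Finset.mem_image.1 he
            have := (mem_filter.1 (hQ1 hz)).2.2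
            rcases Sym2.mem_iff.1 hu with rfl | rfl <;> omega
        · have e1 : univ.filter (fun u => f u < f v + 1) = insert v (univ.filter (fun u => f u < f v)) := by
            ext u
            simp only [mem_filter, mem_univ, true_and, mem_insert]
            constructor
            · intro h
              rcases Nat.lt_succ_iff_lt_or_eq.1 h with h | h
              · exact Or.inr h
              · exact Or.inl (hf h)
            · rintro (rfl | h) <;> omega
          rw [e1, Finset.sum_insert (by simp), card_union_of_disjoint, card_image_star]
          · omega
          · rw [Finset.disjoint_left]
            intro e he h
            obtain ⟨z, -, rfl⟩ := Finset.mem_image.1 h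
            exact hv _ he (Sym2.mem_mk_left _ _)
      · refine ⟨B, h1, h2, fun e he u hu => (h3 e he u hu).trans (Nat.lt_succ_self _), ?_⟩
        have e1 : univ.filter (fun u => f u < m + 1) = univ.filter (fun u => f u < m) := by
          ext u
          simp only [mem_filter, mem_univ, true_and]
          have : f u ≠ m := fun h => hm ⟨u, h⟩
          omega
        rw [e1]
        exact h4
  obtain ⟨B, h1, h2, -, h4⟩ := key ((univ.sup f) + 1)
  have e1 : univ.filter (fun v => f v < (univ.sup f) + 1) = univ := by
    ext u
    simp only [mem_filter, mem_univ, true_and, iff_true]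
    exact Nat.lt_succ_of_le (Finset.le_sup (mem_univ u))
  rw [e1] at h4
  refine h4.trans ?_
  have hli : LinearIndependent ℝ (fun e : B => (⟨rowS p e, h2 e e.2⟩ : U)) := by
    apply LinearIndependent.of_comp U.subtype
    exact h1
  simpa using hli.fintype_card_le_finrank

/-- position counting -/
def rk (pos : V → ℕ) (A : Finset V) (s : Equiv.Perm V) (v : V) : ℕ :=
  (A.filter (fun u => pos (s u) < pos (s v))).card

lemma rank_count [Fintype V] (pos : V → ℕ) (hpos : Function.Injective pos) (A : Finset V) (v : V)
    (hv : v ∈ A) (m : ℕ) :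
    A.card * (univ.filter (fun s : Equiv.Perm V => rk pos A s v < m)).card ≤
      m * Fintype.card (Equiv.Perm V) := by
  have h1 : ∀ w ∈ A, (univ.filter (fun s : Equiv.Perm V => rk pos A s w < m)).card =
      (univ.filter (fun s : Equiv.Perm V => rk pos A s v < m)).card := by
    intro w hw
    have hrk : ∀ s : Equiv.Perm V, rk pos A (s * Equiv.swap v w) v = rk pos A s w := by
      intro s
      unfold rk
      have hsw : ∀ u ∈ A, Equiv.swap v w u ∈ A := by
        intro u hu
        rcases Equiv.swap_apply_eq_iff.1 (rfl : Equiv.swap v w u = Equiv.swap v w u) with h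
        unfold Equiv.swap
        simp only [Equiv.coe_fn_mk, Equiv.swapCore]
        split_ifs <;> assumption
      apply Finset.card_bij (fun u _ => Equiv.swap v w u)
      · intro u hu
        rw [mem_filter] at hu ⊢
        refine ⟨hsw u hu.1, ?_⟩
        simpa using hu.2
      · intro a _ b _ h
        exact (Equiv.swap v w).injective h
      · intro b hb
        rw [mem_filter] at hb
        refine ⟨Equiv.swap v w b, mem_filter.2 ⟨hsw b hb.1, ?_⟩, by simp⟩
        simpa using hb.2
    apply Finset.card_bij (fun s _ => s * Equiv.swap v w)
    · intro s hs
      rw [mem_filter] at hs ⊢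
      exact ⟨mem_univ _, by rw [hrk]; exact hs.2⟩
    · intro a _ b _ h
      exact mul_right_cancel h
    · intro b hb
      rw [mem_filter] at hb
      refine ⟨b * Equiv.swap v w, mem_filter.2 ⟨mem_univ _, ?_⟩, by rw [mul_assoc]; simp⟩
      rw [← hrk, mul_assoc]
      simpa using hb.2
  have h2 : A.card * (univ.filter (fun s : Equiv.Perm V => rk pos A s v < m)).card =
      ∑ w ∈ A, (univ.filter (fun s : Equiv.Perm V => rk pos A s w < m)).card := by
    rw [Finset.sum_congr rfl h1, sum_const, smul_eq_mul]
  rw [h2]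
  simp only [Finset.card_filter]
  rw [Finset.sum_comm]
  simp only [← Finset.card_filter]
  have h3 : ∀ s ∈ (univ : Finset (Equiv.Perm V)), (A.filter (fun w => rk pos A s w < m)).card ≤ m := by
    intro s _
    have hlt : ∀ a ∈ A, ∀ b, pos (s a) < pos (s b) → rk pos A s a < rk pos A s b := by
      intro a ha b hab
      apply Finset.card_lt_card
      rw [Finset.ssubset_iff_of_subset]
      · exact ⟨a, by simp [ha, hab], by simp⟩
      · intro u hu
        rw [mem_filter] at hu ⊢
        exact ⟨hu.1, hu.2.trans hab⟩
    calc (A.filter (fun w => rk pos A s w < m)).card ≤ (range m).card := by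
          apply Finset.card_le_card_of_injOn (rk pos A s)
          · intro w hw
            have := (mem_filter.1 (Finset.mem_coe.1 hw)).2
            simpa using this
          · intro a ha b hb hab
            have ha := (mem_filter.1 (Finset.mem_coe.1 ha)).1
            have hb := (mem_filter.1 (Finset.mem_coe.1 hb)).1
            rcases lt_trichotomy (pos (s a)) (pos (s b)) with h | h | h
            · have := hlt a ha b h; omega
            · exact s.injective (hpos h)
            · have := hlt b hb a h; omega
      _ = m := card_range m
  refine (Finset.sum_le_sum h3).trans ?_
  rw [sum_const, smul_eq_mul, mul_comm, Finset.card_univ]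
end
end Pack

namespace Pack
open Finset

section
open Classical
variable {V : Type*} [Fintype V] [DecidableEq V] {d : ℕ}

def Glue (C : SimpleGraph V) (d : ℕ) : Prop :=
  ∀ (X : Finset V), C.IsClique (X : Set V) → ∀ v, v ∉ X → d ≤ (X.filter (fun u => C.Adj v u)).card →
    ∀ x ∈ X, C.Adj v x

noncomputable def cN (C : SimpleGraph V) (v : V) : Finset V := univ.filter (fun u => u = v ∨ C.Adj v u)

def Simp (C : SimpleGraph V) (v : V) : Prop := C.IsClique (cN C v : Set V)

noncomputable def X1 (C : SimpleGraph V) (v : V) : Finset V := (cN C v).filter (fun w => cN C w ≠ cN C v)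

noncomputable def DD (C : SimpleGraph V) (T : ℕ) : Finset V :=
  univ.filter (fun v => Simp C v ∧ T ≤ (X1 C v).card)

noncomputable def key (D : Finset V) (pos : V → ℕ) (s : Equiv.Perm V) (v : V) : ℕ :=
  if v ∈ D then Fintype.card V + pos (s v) else pos (s v)

noncomputable def QQ (C : SimpleGraph V) (f : V → ℕ) (v : V) : Finset V :=
  univ.filter (fun u => C.Adj v u ∧ f u < f v)

lemma mem_cN {C : SimpleGraph V} {v u : V} : u ∈ cN C v ↔ u = v ∨ C.Adj v u := by simp [cN]

lemma self_cN (C : SimpleGraph V) (v : V) : v ∈ cN C v := by simp [cN]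

lemma cN_symm {C : SimpleGraph V} {v u : V} (h : u ∈ cN C v) : v ∈ cN C u := by
  rw [mem_cN] at h ⊢
  rcases h with h | h
  · exact Or.inl h.symm
  · exact Or.inr h.symm

lemma simp_sub {C : SimpleGraph V} {v w : V} (hv : Simp C v) (h : w ∈ cN C v) :
    cN C v ⊆ cN C w := by
  intro u hu
  rw [mem_cN]
  by_cases hne : u = w
  · exact Or.inl hne
  · exact Or.inr (hv (Finset.mem_coe.2 h) (Finset.mem_coe.2 hu) (Ne.symm hne))

lemma simp_eq {C : SimpleGraph V} {v w : V} (hv : Simp C v) (hw : Simp C w) (h : w ∈ cN C v) :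
    cN C v = cN C w :=
  Subset.antisymm (simp_sub hv h) (simp_sub hw (cN_symm h))

lemma X1_notD {C : SimpleGraph V} {T : ℕ} {v u : V} (hv : Simp C v) (h : u ∈ X1 C v) :
    u ∉ DD C T := by
  intro hu
  have hu := (mem_filter.1 hu).2.1
  have h := mem_filter.1 h
  exact h.2 (simp_eq hv hu h.1).symm

lemma X1_adj {C : SimpleGraph V} {v u : V} (h : u ∈ X1 C v) : C.Adj v u := by
  have h := mem_filter.1 h
  rcases mem_cN.1 h.1 with rfl | h1
  · exact absurd rfl h.2
  · exact h1

lemma key_lt {D : Finset V} {pos : V → ℕ} (hpos : ∀ v, pos v < Fintype.card V) {s : Equiv.Perm V}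
    {u v : V} (hu : u ∉ D) (h : v ∈ D ∨ pos (s u) < pos (s v)) : key D pos s u < key D pos s v := by
  unfold key
  rw [if_neg hu]
  have := hpos (s u)
  split_ifs with hv
  · omega
  · exact h.resolve_left hv

lemma key_inj {D : Finset V} {pos : V → ℕ} (hpos : ∀ v, pos v < Fintype.card V)
    (hinj : Function.Injective pos) (s : Equiv.Perm V) : Function.Injective (key D pos s) := by
  intro a b h
  have h1 := hpos (s a)
  have h2 := hpos (s b)
  unfold key at h
  have : pos (s a) = pos (s b) := by
    split_ifs at h <;> omega
  exact s.injective (hinj this)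

lemma caseD {C : SimpleGraph V} {T : ℕ} (hT : d ≤ T) {pos : V → ℕ}
    (hpos : ∀ v, pos v < Fintype.card V) (s : Equiv.Perm V) (v : V) (hv : v ∈ DD C T) :
    d ≤ contr C d (QQ C (key (DD C T) pos s) v) := by
  apply contr_ge
  have hv' := (mem_filter.1 hv).2
  refine hT.trans (hv'.2.trans (card_le_card ?_))
  intro u hu
  refine mem_filter.2 ⟨mem_univ _, X1_adj hu, key_lt hpos (X1_notD hv'.1 hu) (Or.inl hv)⟩

lemma before_sub {C : SimpleGraph V} {D : Finset V} {pos : V → ℕ}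
    (hpos : ∀ v, pos v < Fintype.card V) (s : Equiv.Perm V) (v : V) (A : Finset V)
    (hA : ∀ u ∈ A, u ∈ cN C v ∧ u ∉ D) :
    A.filter (fun u => pos (s u) < pos (s v)) ⊆ QQ C (key D pos s) v := by
  intro u hu
  rw [mem_filter] at hu
  refine mem_filter.2 ⟨mem_univ _, ?_, key_lt hpos (hA u hu.1).2 (Or.inr hu.2)⟩
  rcases mem_cN.1 (hA u hu.1).1 with rfl | h
  · exact absurd hu.2 (lt_irrefl _)
  · exact h

lemma caseBad {C : SimpleGraph V} {T : ℕ} {pos : V → ℕ} (hinj : Function.Injective pos)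
    (hpos : ∀ v, pos v < Fintype.card V) (v : V) (hv : v ∉ DD C T) (hs : Simp C v) :
    (cN C v).card * (d * Fintype.card (Equiv.Perm V)) ≤
      (cN C v).card * ∑ s : Equiv.Perm V, contr C d (QQ C (key (DD C T) pos s) v) +
        d * d * Fintype.card (Equiv.Perm V) := by
  have hA : ∀ u ∈ cN C v, u ∈ cN C v ∧ u ∉ DD C T := by
    intro u hu
    refine ⟨hu, fun hD => hv ?_⟩
    have hD := (mem_filter.1 hD).2
    have := simp_eq hs hD.1 hu
    refine mem_filter.2 ⟨mem_univ _, hs, ?_⟩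
    have e : X1 C v = X1 C u := by unfold X1; rw [this]
    rw [e]
    exact hD.2
  have h1 := rank_count pos hinj (cN C v) v (self_cN C v) d
  have h2 : d * Fintype.card (Equiv.Perm V) ≤
      ∑ s : Equiv.Perm V, contr C d (QQ C (key (DD C T) pos s) v) +
      d * (univ.filter (fun s : Equiv.Perm V => rk pos (cN C v) s v < d)).card := by
    rw [Finset.card_filter, Finset.mul_sum, ← Finset.sum_add_distrib, mul_comm, ← Finset.card_univ,
      ← smul_eq_mul, ← Finset.sum_const]
    apply Finset.sum_le_sum
    intro s _
    by_cases h : rk pos (cN C v) s v < d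
    · simp [h]
    · have := contr_ge C _ ((not_lt.1 h).trans (card_le_card (before_sub hpos s v (cN C v) hA)))
      omega
  calc _ ≤ (cN C v).card * (∑ s : Equiv.Perm V, contr C d (QQ C (key (DD C T) pos s) v) +
      d * (univ.filter (fun s : Equiv.Perm V => rk pos (cN C v) s v < d)).card) :=
        Nat.mul_le_mul_left _ h2
    _ = (cN C v).card * ∑ s : Equiv.Perm V, contr C d (QQ C (key (DD C T) pos s) v) +
      d * ((cN C v).card * (univ.filter (fun s : Equiv.Perm V => rk pos (cN C v) s v < d)).card) := by ring
    _ ≤ _ := by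
      have := Nat.mul_le_mul_left d h1
      have e : d * (d * Fintype.card (Equiv.Perm V)) = d * d * Fintype.card (Equiv.Perm V) := by ring
      omega

lemma A_facts {C : SimpleGraph V} (hg : Glue C d) {T : ℕ} (hT : d ≤ T) (v : V)
    (hv : v ∉ DD C T) (hs : ¬ Simp C v) (hdeg : T ≤ (cN C v).card) :
    T ≤ (cN C v \ DD C T).card ∧ ¬ C.IsClique ((cN C v \ DD C T : Finset V) : Set V) := by
  have hX : ∀ y ∈ cN C v, y ∈ DD C T → X1 C y ⊆ cN C v \ DD C T := by
    intro y hy hyD w hw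
    have hyD' := (mem_filter.1 hyD).2
    refine mem_sdiff.2 ⟨?_, X1_notD hyD'.1 hw⟩
    exact simp_sub hyD'.1 (cN_symm hy) (mem_filter.1 hw).1
  have h1 : T ≤ (cN C v \ DD C T).card := by
    by_cases h : ∃ y ∈ cN C v, y ∈ DD C T
    · obtain ⟨y, hy, hyD⟩ := h
      exact (mem_filter.1 hyD).2.2.trans (card_le_card (hX y hy hyD))
    · push Not at h
      rw [sdiff_eq_self_of_disjoint]
      · exact hdeg
      · rw [Finset.disjoint_left]
        exact h
  refine ⟨h1, fun hc => hs ?_⟩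
  set A := cN C v \ DD C T with hAd
  have hyA : ∀ y ∈ cN C v, y ∈ DD C T → ∀ a ∈ A, C.Adj y a := by
    intro y hy hyD
    apply hg A hc y (fun h => (mem_sdiff.1 h).2 hyD)
    refine hT.trans ((mem_filter.1 hyD).2.2.trans (card_le_card ?_))
    intro w hw
    exact mem_filter.2 ⟨hX y hy hyD hw, X1_adj hw⟩
  intro y hy y' hy' hne
  rw [Finset.mem_coe] at hy hy'
  by_cases hyD : y ∈ DD C T
  · by_cases hyD' : y' ∈ DD C T
    · by_contra hn
      have hAsub : A ⊆ cN C y := fun a ha => mem_cN.2 (Or.inr (hyA y hy hyD a ha))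
      have hny : y' ∉ cN C y := by
        rw [mem_cN, not_or]
        exact ⟨hne.symm, hn⟩
      apply hn
      refine (hg (cN C y) (mem_filter.1 hyD).2.1 y' hny ?_ y (self_cN C y)).symm
      refine hT.trans (h1.trans (card_le_card ?_))
      intro a ha
      exact mem_filter.2 ⟨hAsub ha, hyA y' hy' hyD' a ha⟩
    · exact hyA y hy hyD y' (mem_sdiff.2 ⟨hy', hyD'⟩)
  · by_cases hyD' : y' ∈ DD C T
    · exact (hyA y' hy' hyD' y (mem_sdiff.2 ⟨hy, hyD⟩)).symm
    · exact hc (Finset.mem_coe.2 (mem_sdiff.2 ⟨hy, hyD⟩)) (Finset.mem_coe.2 (mem_sdiff.2 ⟨hy', hyD'⟩)) hne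

lemma caseNon {C : SimpleGraph V} (hg : Glue C d) (hd : 0 < d) {r : ℕ} (hr : d * d + 2 * d ≤ r)
    {pos : V → ℕ} (hinj : Function.Injective pos)
    (hpos : ∀ v, pos v < Fintype.card V) (v : V) (hv : v ∉ DD C (2 * r)) (hs : ¬ Simp C v)
    (hdeg : 2 * r ≤ (cN C v).card) :
    d * Fintype.card (Equiv.Perm V) ≤
      ∑ s : Equiv.Perm V, contr C d (QQ C (key (DD C (2 * r)) pos s) v) := by
  obtain ⟨hA1, hA2⟩ := A_facts hg (T := 2 * r) (by nlinarith) v hv hs hdeg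
  set D := DD C (2 * r) with hD
  set A := cN C v \ D with hAd
  have hA : ∀ u ∈ A, u ∈ cN C v ∧ u ∉ D := fun u hu => mem_sdiff.1 hu
  have hvA : v ∈ A := mem_sdiff.2 ⟨self_cN C v, hv⟩
  set N := Fintype.card (Equiv.Perm V) with hN
  -- reduction
  have red : ∀ bad : Equiv.Perm V → Prop,
      (∀ s, ¬ bad s → d + 1 ≤ contr C d (QQ C (key D pos s) v)) →
      d * (univ.filter (fun s : Equiv.Perm V => rk pos A s v < d)).card +
        (univ.filter bad).card ≤ N →
      d * N ≤ ∑ s : Equiv.Perm V, contr C d (QQ C (key D pos s) v) := by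
    intro bad h1 h2
    have h3 : (d + 1) * N ≤ ∑ s : Equiv.Perm V, contr C d (QQ C (key D pos s) v) +
        (d * (univ.filter (fun s : Equiv.Perm V => rk pos A s v < d)).card +
        (univ.filter bad).card) := by
      rw [Finset.card_filter, Finset.card_filter, Finset.mul_sum, ← Finset.sum_add_distrib,
        ← Finset.sum_add_distrib, mul_comm, hN, ← Finset.card_univ, ← smul_eq_mul, ← Finset.sum_const]
      apply Finset.sum_le_sum
      intro s _
      by_cases hb : bad s
      · by_cases h : rk pos A s v < d
        · simp [h, hb]
        · have := contr_ge C _ ((not_lt.1 h).trans (card_le_card (before_sub hpos s v A hA)))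
          simp only [if_pos hb]
          omega
      · have := h1 s hb
        omega
    have : (d + 1) * N = d * N + N := by ring
    omega
  have hcount1 := rank_count pos hinj A v hvA d
  have hcount1' : 2 * r * (univ.filter (fun s : Equiv.Perm V => rk pos A s v < d)).card ≤ d * N :=
    (Nat.mul_le_mul_right _ hA1).trans hcount1
  have hrpos : 0 < 2 * r := by nlinarith
  -- maximum clique
  obtain ⟨K, hKA, hvK, hKc, hKmax⟩ : ∃ K ⊆ A, v ∈ K ∧ C.IsClique (K : Set V) ∧
      ∀ K' ⊆ A, v ∈ K' → C.IsClique (K' : Set V) → K'.card ≤ K.card := by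
    have hne : (A.powerset.filter (fun K : Finset V => v ∈ K ∧ C.IsClique (K : Set V))).Nonempty := by
      refine ⟨{v}, mem_filter.2 ⟨by simpa using hvA, by simp, by simp⟩⟩
    obtain ⟨K, hK, hmax⟩ := Finset.exists_max_image _ (fun K : Finset V => K.card) hne
    rw [mem_filter, mem_powerset] at hK
    exact ⟨K, hK.1, hK.2.1, hK.2.2, fun K' h1 h2 h3 =>
      hmax K' (mem_filter.2 ⟨mem_powerset.2 h1, h2, h3⟩)⟩
  by_cases hKr : K.card ≤ r
  · apply red (fun s => rk pos A s v < r)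
    · intro s hs'
      have hs' : r ≤ rk pos A s v := not_lt.1 hs'
      have hsub := before_sub hpos s v A hA
      apply contr_ge'
      · have : d + 1 ≤ r := by nlinarith
        exact this.trans (hs'.trans (card_le_card hsub))
      · intro hcl
        have hcl2 : C.IsClique ((insert v (A.filter (fun u => pos (s u) < pos (s v))) : Finset V) : Set V) := by
          rw [Finset.coe_insert]
          apply SimpleGraph.IsClique.insert
          · exact hcl.subset (Finset.coe_subset.2 hsub)
          · intro b hb _
            exact (mem_filter.1 (hsub (Finset.mem_coe.1 hb))).2.1
        have := hKmax _ (insert_subset hvA (filter_subset _ _)) (mem_insert_self _ _) hcl2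
        rw [card_insert_of_notMem (by simp)] at this
        unfold rk at hs'
        omega
    · have hcount2 := rank_count pos hinj A v hvA r
      have hcount2' : 2 * r * (univ.filter (fun s : Equiv.Perm V => rk pos A s v < r)).card ≤ r * N :=
        (Nat.mul_le_mul_right _ hA1).trans hcount2
      apply Nat.le_of_mul_le_mul_left _ hrpos
      nlinarith
  · push Not at hKr
    have hKA' : K ≠ A := fun h => hA2 (h ▸ hKc)
    obtain ⟨x, hxA, hxK⟩ := Finset.exists_of_ssubset (hKA.ssubset_of_ne hKA')
    have hxd : (K.filter (fun u => C.Adj x u)).card < d := by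
      by_contra hcon
      have h1 := hg K hKc x hxK (not_lt.1 hcon)
      have hcl : C.IsClique ((insert x K : Finset V) : Set V) := by
        rw [Finset.coe_insert]
        exact hKc.insert (fun b hb _ => h1 b hb)
      have := hKmax _ (insert_subset hxA hKA) (mem_insert_of_mem hvK) hcl
      rw [card_insert_of_notMem hxK] at this
      omega
    have hxv : x ≠ v := fun h => hxK (h ▸ hvK)
    apply red (fun s => rk pos {x, v} s v < 1 ∨ rk pos K s v < d)
    · intro s hs'
      rw [not_or, not_lt, not_lt] at hs'
      obtain ⟨h1, h2⟩ := hs'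
      have hsub := before_sub hpos s v A hA
      have hx : x ∈ QQ C (key D pos s) v := by
        obtain ⟨w, hw⟩ := card_pos.1 h1
        rw [mem_filter, mem_insert, mem_singleton] at hw
        rcases hw with ⟨rfl | rfl, hw⟩
        · exact hsub (mem_filter.2 ⟨hxA, hw⟩)
        · exact absurd hw (lt_irrefl _)
      have hK' : K.filter (fun u => pos (s u) < pos (s v)) ⊆ QQ C (key D pos s) v :=
        (filter_subset_filter _ hKA).trans hsub
      apply contr_ge'
      · have := card_le_card (insert_subset hx hK')
        rw [card_insert_of_notMem (fun h => hxK (mem_filter.1 h).1)] at this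
        unfold rk at h2
        omega
      · intro hcl
        have : K.filter (fun u => pos (s u) < pos (s v)) ⊆ K.filter (fun u => C.Adj x u) := by
          intro u hu
          have huK := (mem_filter.1 hu).1
          refine mem_filter.2 ⟨huK, hcl (Finset.mem_coe.2 hx) (Finset.mem_coe.2 (hK' hu)) ?_⟩
          exact fun h => hxK (h ▸ huK)
        have := card_le_card this
        unfold rk at h2
        omega
    · have hc2 := rank_count pos hinj {x, v} v (by simp) 1
      rw [card_pair hxv] at hc2
      have hc3 := rank_count pos hinj K v hvK d
      have hc3' : r * (univ.filter (fun s : Equiv.Perm V => rk pos K s v < d)).card ≤ d * N :=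
        (Nat.mul_le_mul_right _ hKr.le).trans hc3
      have hu : (univ.filter (fun s : Equiv.Perm V => rk pos {x, v} s v < 1 ∨ rk pos K s v < d)).card ≤
          (univ.filter (fun s : Equiv.Perm V => rk pos {x, v} s v < 1)).card +
          (univ.filter (fun s : Equiv.Perm V => rk pos K s v < d)).card := by
        refine (card_le_card ?_).trans (card_union_le _ _)
        intro s hs'
        simp only [mem_filter, mem_univ, true_and, mem_union] at hs' ⊢
        exact hs'
      refine (Nat.add_le_add_left (le_trans (le_of_eq (by congr)) hu) _).trans ?_
      apply Nat.le_of_mul_le_mul_left _ hrpos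
      have h5 := Nat.mul_le_mul_left r hc2
      have h6 := Nat.mul_le_mul_left d hcount1'
      have h7 := Nat.mul_le_mul_right N hr
      rw [← hN] at h5
      nlinarith
end
end Pack

namespace Pack
open Finset

section
open Classical
variable {V : Type*} [Fintype V] [DecidableEq V] {d : ℕ}

lemma cross {G : SimpleGraph V} {k : ℕ} (hG : KConnected G k) (S A : Finset V) (hS : S.card < k)
    {a b : V} (ha : a ∈ A) (haS : a ∉ S) (hb : b ∉ A) (hbS : b ∉ S) :
    ∃ x y, x ∈ A ∧ x ∉ S ∧ y ∉ A ∧ y ∉ S ∧ G.Adj x y := by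
  have h := hG.2 (S : Set V) S.finite_toSet (by rw [Set.ncard_coe_finset]; exact hS)
  obtain ⟨p⟩ := h.preconnected ⟨a, by simpa using haS⟩ ⟨b, by simpa using hbS⟩
  obtain ⟨e, -, h1, h2⟩ := p.exists_boundary_dart {x | (x : V) ∈ A} ha hb
  refine ⟨e.fst, e.snd, h1, ?_, h2, ?_, e.adj⟩
  · exact fun h => e.fst.2 (mem_coe.2 h)
  · exact fun h => e.snd.2 (mem_coe.2 h)

lemma degG {G : SimpleGraph V} {k : ℕ} (hG : KConnected G k) (v : V) :
    k ≤ (univ.filter (fun u => G.Adj v u)).card := by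
  by_contra hcon
  push Not at hcon
  set S := univ.filter (fun u => G.Adj v u) with hSd
  have hn := hG.1
  rw [Nat.card_eq_fintype_card] at hn
  obtain ⟨b, hb⟩ : ∃ b, b ∉ insert v S := by
    by_contra h
    push Not at h
    have h1 : (univ : Finset V) ⊆ insert v S := fun x _ => h x
    have h2 := card_le_card h1
    have h3 := card_insert_le v S
    rw [card_univ] at h2
    omega
  rw [mem_insert, not_or] at hb
  obtain ⟨x, y, hx, hxS, hy, hyS, hxy⟩ := cross hG S {v} hcon (a := v) (b := b) (by simp)
    (by simp [hSd]) (by simpa using hb.1) hb.2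
  rw [mem_singleton] at hx
  subst hx
  exact hyS (by simpa [hSd] using hxy)

noncomputable def gg (G : SimpleGraph V) (F : Finset (Sym2 V)) (v : V) : ℕ :=
  (univ.filter (fun u => G.Adj v u ∧ s(v, u) ∉ F)).card

lemma sum_gg (G : SimpleGraph V) (E F : Finset (Sym2 V)) (hE : ∀ e, e ∈ E ↔ e ∈ G.edgeSet) :
    ∑ v, gg G F v = 2 * (E \ F).card := by
  obtain ⟨H, hH⟩ : ∃ H : SimpleGraph V, ∀ a b, H.Adj a b ↔ G.Adj a b ∧ s(a, b) ∉ F := by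
    refine ⟨SimpleGraph.fromEdgeSet ((E \ F : Finset (Sym2 V)) : Set (Sym2 V)), ?_⟩
    intro a b
    rw [SimpleGraph.fromEdgeSet_adj, mem_coe, mem_sdiff, hE, SimpleGraph.mem_edgeSet]
    constructor
    · rintro ⟨h, -⟩; exact h
    · intro h; exact ⟨h, h.1.ne⟩
  have h2 : 2 * (E \ F).card = ∑ v, H.degree v := by
    rw [H.sum_degrees_eq_twice_card_edges]
    congr 2
    ext e
    induction e with
    | h a b =>
      rw [SimpleGraph.mem_edgeFinset, SimpleGraph.mem_edgeSet, hH, mem_sdiff, hE,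
        SimpleGraph.mem_edgeSet]
  rw [h2]
  apply Finset.sum_congr rfl
  intro v _
  rw [← SimpleGraph.card_neighborFinset_eq_degree]
  unfold gg
  congr 1
  ext u
  simp [hH]

lemma low_gg {G C : SimpleGraph V} {F : Finset (Sym2 V)} {k m : ℕ} (hG : KConnected G k)
    (hF : ∀ a b, s(a, b) ∈ F → a ≠ b → C.Adj a b) (v : V) (h : (cN C v).card ≤ m) :
    k ≤ gg G F v + m := by
  refine (degG hG v).trans ?_
  refine (card_le_card (t := (univ.filter (fun u => G.Adj v u ∧ s(v, u) ∉ F)) ∪ cN C v) ?_).trans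
    ((card_union_le _ _).trans (Nat.add_le_add_left h _))
  intro u hu
  have hu := (mem_filter.1 hu).2
  rw [mem_union]
  by_cases hf : s(v, u) ∈ F
  · exact Or.inr (mem_cN.2 (Or.inr (hF v u hf hu.ne)))
  · exact Or.inl (mem_filter.2 ⟨mem_univ _, hu, hf⟩)

noncomputable def Bad (C : SimpleGraph V) (T m : ℕ) : Finset V :=
  univ.filter (fun v => v ∉ DD C T ∧ Simp C v ∧ m < (cN C v).card)

lemma bad_congr {C : SimpleGraph V} {T m : ℕ} {v w : V} (h : cN C w = cN C v) (hv : v ∈ Bad C T m) :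
    w ∈ Bad C T m := by
  have hv := (mem_filter.1 hv).2
  have e : X1 C w = X1 C v := by unfold X1; rw [h]
  have e2 : Simp C w ↔ Simp C v := by unfold Simp; rw [h]
  refine mem_filter.2 ⟨mem_univ _, fun hD => hv.1 ?_, e2.2 hv.2.1, by rw [h]; exact hv.2.2⟩
  have hD := (mem_filter.1 hD).2
  exact mem_filter.2 ⟨mem_univ _, e2.1 hD.1, by rw [← e]; exact hD.2⟩

lemma class_bound {G C : SimpleGraph V} {F : Finset (Sym2 V)} {k T m q : ℕ} (hG : KConnected G k)
    (hF : ∀ a b, s(a, b) ∈ F → a ≠ b → C.Adj a b) (hC : ¬ ∀ a b, a ≠ b → C.Adj a b)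
    (h1 : T + q ≤ k) (h2 : T + q ≤ m) (v : V) (hv : v ∈ Bad C T m) :
    q ≤ ∑ w ∈ (Bad C T m).filter (fun w => cN C w = cN C v), gg G F w := by
  set B := (Bad C T m).filter (fun w => cN C w = cN C v) with hB
  have hv' := (mem_filter.1 hv).2
  have hX1 : (X1 C v).card < T := by
    by_contra h
    exact hv'.1 (mem_filter.2 ⟨mem_univ _, hv'.2.1, not_lt.1 h⟩)
  have hsub : cN C v ⊆ X1 C v ∪ B := by
    intro w hw
    rw [mem_union]
    by_cases h : cN C w = cN C v
    · exact Or.inr (mem_filter.2 ⟨bad_congr h hv, h⟩)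
    · exact Or.inl (mem_filter.2 ⟨hw, h⟩)
  set Z := B.filter (fun w => 1 ≤ gg G F w) with hZ
  have hZs : Z.card ≤ ∑ w ∈ B, gg G F w := by
    rw [hZ, Finset.card_filter]
    apply Finset.sum_le_sum
    intro w _
    split_ifs with h
    · exact h
    · exact Nat.zero_le _
  by_contra hcon
  have hZq : Z.card < q := by omega
  have hSk : (X1 C v ∪ Z).card < k := by
    have := card_union_le (X1 C v) Z
    omega
  have hXm : (cN C v).card ≤ (X1 C v).card + B.card := (card_le_card hsub).trans (card_union_le _ _)
  obtain ⟨a, haB, haZ⟩ : ∃ a ∈ B, a ∉ Z := by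
    by_contra h
    push Not at h
    have := card_le_card (show B ⊆ Z from h)
    omega
  have haX : a ∈ cN C v := by
    have := (mem_filter.1 haB).2
    rw [← this]
    exact self_cN C a
  have haX1 : a ∉ X1 C v := fun h => (mem_filter.1 h).2 (mem_filter.1 haB).2
  obtain ⟨b, hb⟩ : ∃ b, b ∉ cN C v := by
    by_contra h
    push Not at h
    exact hC (fun x y hne => hv'.2.1 (mem_coe.2 (h x)) (mem_coe.2 (h y)) hne)
  have hbS : b ∉ X1 C v ∪ Z := by
    rw [mem_union, not_or]
    refine ⟨fun h => hb (mem_filter.1 h).1, fun h => hb ?_⟩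
    have := (mem_filter.1 (mem_filter.1 h).1).2
    rw [← this]
    exact self_cN C b
  obtain ⟨x, y, hx, hxS, hy, -, hxy⟩ := cross hG (X1 C v ∪ Z) (cN C v) hSk haX
    (by rw [mem_union, not_or]; exact ⟨haX1, haZ⟩) hb hbS
  rw [mem_union, not_or] at hxS
  have hxB : x ∈ B := by
    have := hsub hx
    rw [mem_union] at this
    exact this.resolve_left hxS.1
  apply hxS.2
  refine mem_filter.2 ⟨hxB, card_pos.2 ⟨y, mem_filter.2 ⟨mem_univ _, hxy, fun hf => hy ?_⟩⟩⟩
  rw [← (mem_filter.1 hxB).2]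
  exact mem_cN.2 (Or.inr (hF x y hf hxy.ne))

lemma bad_sum {G C : SimpleGraph V} {F : Finset (Sym2 V)} {k T m q : ℕ} (hG : KConnected G k)
    (hF : ∀ a b, s(a, b) ∈ F → a ≠ b → C.Adj a b) (hC : ¬ ∀ a b, a ≠ b → C.Adj a b)
    (h1 : T + q ≤ k) (h2 : T + q ≤ m) :
    ∑ v ∈ Bad C T m, (q : ℝ) / (cN C v).card ≤ ∑ v ∈ Bad C T m, (gg G F v : ℝ) := by
  have hmap : ∀ v ∈ Bad C T m, cN C v ∈ (Bad C T m).image (cN C) := fun v hv =>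
    mem_image_of_mem _ hv
  rw [← Finset.sum_fiberwise_of_maps_to hmap, ← Finset.sum_fiberwise_of_maps_to hmap]
  apply Finset.sum_le_sum
  intro X hX
  obtain ⟨v, hv, rfl⟩ := mem_image.1 hX
  have h3 := class_bound hG hF hC h1 h2 v hv
  have h4 : ∑ w ∈ (Bad C T m).filter (fun w => cN C w = cN C v), (q : ℝ) / (cN C w).card ≤ q := by
    have e : ∑ w ∈ (Bad C T m).filter (fun w => cN C w = cN C v), (q : ℝ) / (cN C w).card =
        ∑ w ∈ (Bad C T m).filter (fun w => cN C w = cN C v), (q : ℝ) / (cN C v).card := by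
      apply Finset.sum_congr rfl
      intro w hw
      rw [(mem_filter.1 hw).2]
    rw [e, Finset.sum_const, nsmul_eq_mul]
    have hle : ((Bad C T m).filter (fun w => cN C w = cN C v)).card ≤ (cN C v).card := by
      apply card_le_card
      intro w hw
      rw [← (mem_filter.1 hw).2]
      exact self_cN C w
    have hpos : (0 : ℝ) < (cN C v).card := by
      exact_mod_cast card_pos.2 ⟨v, self_cN C v⟩
    rw [← mul_div_assoc, div_le_iff₀ hpos, mul_comm]
    apply mul_le_mul_of_nonneg_left
    · exact_mod_cast hle
    · positivity
  refine h4.trans ?_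
  exact_mod_cast h3

theorem main_ineq {G C : SimpleGraph V} {t : ℕ} (hd : 0 < d) (ht : 0 < t)
    (hG : KConnected G (t * (10 * d * (d + 1)))) (E F : Finset (Sym2 V))
    (hE : ∀ e, e ∈ E ↔ e ∈ G.edgeSet) (hF : ∀ a b, s(a, b) ∈ F → a ≠ b → C.Adj a b)
    (hg : Glue C d) (hC : ¬ ∀ a b, a ≠ b → C.Adj a b) (ρ : ℕ)
    (hb : ∀ f : V → ℕ, Function.Injective f → ∑ v, contr C d (QQ C f v) ≤ ρ) :
    t * (d * Fintype.card V) ≤ t * ρ + (E \ F).card := by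
  set r := d * d + 2 * d with hr
  set T := 2 * r with hT
  set m := 5 * t * d * (d + 1) with hm
  set q := 2 * t * d * d with hq
  set k := t * (10 * d * (d + 1)) with hk
  have hkm : k = 2 * m := by rw [hk, hm]; ring
  have hTq : T + q ≤ m := by
    rw [hT, hr, hq, hm]
    have h1 : d * d ≤ t * (d * d) := Nat.le_mul_of_pos_left _ ht
    have h2 : d ≤ t * d := Nat.le_mul_of_pos_left _ ht
    nlinarith
  have hTq' : T + q ≤ k := by omega
  let pos : V → ℕ := fun v => (Fintype.equivFin V v : ℕ)
  have hinj : Function.Injective pos := fun a b h =>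
    (Fintype.equivFin V).injective (Fin.ext h)
  have hpos : ∀ v, pos v < Fintype.card V := fun v => (Fintype.equivFin V v).2
  set N := Fintype.card (Equiv.Perm V) with hN
  have hN0 : 0 < N := Fintype.card_pos
  have hNR : (0 : ℝ) < N := by exact_mod_cast hN0
  let W : V → ℕ := fun v => ∑ s : Equiv.Perm V, contr C d (QQ C (key (DD C T) pos s) v)
  have hW : ∑ v, W v ≤ N * ρ := by
    show ∑ v, ∑ s : Equiv.Perm V, contr C d (QQ C (key (DD C T) pos s) v) ≤ N * ρ
    rw [Finset.sum_comm]
    refine (Finset.sum_le_sum (fun s _ => hb _ (key_inj hpos hinj s))).trans ?_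
    rw [Finset.sum_const, card_univ, smul_eq_mul]
  have hrT : d ≤ T := by rw [hT, hr]; nlinarith
  -- pointwise
  have hpt : ∀ v, (t : ℝ) * d ≤ t * ((W v : ℝ) / N) +
      (if v ∈ Bad C T m then ((q : ℝ) / (cN C v).card) / 2 else (gg G F v : ℝ) / 2) := by
    intro v
    have key1 : d * N ≤ W v → (d : ℝ) ≤ (W v : ℝ) / N := by
      intro h
      rw [le_div_iff₀ hNR]
      exact_mod_cast h
    have htR : (0 : ℝ) ≤ t := by positivity
    by_cases hv : v ∈ Bad C T m
    · rw [if_pos hv]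
      have hv' := (mem_filter.1 hv).2
      have h := caseBad (d := d) hinj hpos v hv'.1 hv'.2.1
      have hc : (0 : ℝ) < (cN C v).card := by
        exact_mod_cast card_pos.2 ⟨v, self_cN C v⟩
      have h' : ((cN C v).card : ℝ) * (d * N) ≤ (cN C v).card * W v + d * d * N := by
        exact_mod_cast h
      have h2 : (d : ℝ) ≤ (W v : ℝ) / N + d * d / (cN C v).card := by
        rw [div_add_div _ _ hNR.ne' hc.ne', le_div_iff₀ (by positivity)]
        nlinarith
      have e : ((q : ℝ) / (cN C v).card) / 2 = t * (d * d / (cN C v).card) := by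
        rw [hq]; push_cast; field_simp
      rw [e, ← mul_add]
      exact mul_le_mul_of_nonneg_left h2 htR
    · rw [if_neg hv]
      have hgn : (0 : ℝ) ≤ gg G F v := by positivity
      have hWn : (0 : ℝ) ≤ t * ((W v : ℝ) / N) := by positivity
      by_cases hD : v ∈ DD C T
      · have : d * N ≤ W v := by
          rw [hN, ← card_univ, mul_comm, ← smul_eq_mul, ← Finset.sum_const]
          exact Finset.sum_le_sum (fun s _ => caseD hrT hpos s v hD)
        have := mul_le_mul_of_nonneg_left (key1 this) htR
        linarith
      · by_cases hlow : (cN C v).card ≤ m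
        · have h := low_gg hG hF v hlow
          have h2 : 2 * (t * d) ≤ gg G F v := by
            have : 2 * (t * d) ≤ m := by
              rw [hm]
              have : 0 ≤ t * d * d := Nat.zero_le _
              nlinarith
            omega
          have h2 : (2 : ℝ) * (t * d) ≤ gg G F v := by exact_mod_cast h2
          linarith
        · have hns : ¬ Simp C v := by
            intro hs
            exact hv (mem_filter.2 ⟨mem_univ _, hD, hs, not_le.1 hlow⟩)
          have : d * N ≤ W v := caseNon hg hd le_rfl hinj hpos v hD hns (by omega)
          have := mul_le_mul_of_nonneg_left (key1 this) htR
          linarith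
  have hsum := Finset.sum_le_sum (fun v (_ : v ∈ univ) => hpt v)
  rw [Finset.sum_const, card_univ, nsmul_eq_mul, Finset.sum_add_distrib, ← Finset.mul_sum,
    ← Finset.sum_div] at hsum
  have hbs := bad_sum hG hF hC hTq' hTq
  have hsplit : ∑ v, (if v ∈ Bad C T m then ((q : ℝ) / (cN C v).card) / 2 else (gg G F v : ℝ) / 2) ≤
      ∑ v, (gg G F v : ℝ) / 2 := by
    rw [← Finset.sum_filter_add_sum_filter_not univ (fun v => v ∈ Bad C T m),
      ← Finset.sum_filter_add_sum_filter_not univ (fun v => v ∈ Bad C T m) (fun v => (gg G F v : ℝ) / 2)]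
    apply add_le_add
    · have e : univ.filter (fun v => v ∈ Bad C T m) = Bad C T m := by ext; simp
      rw [e, ← Finset.sum_div]
      have : ∑ v ∈ Bad C T m, (if v ∈ Bad C T m then ((q : ℝ) / (cN C v).card) / 2 else (gg G F v : ℝ) / 2)
          = (∑ v ∈ Bad C T m, (q : ℝ) / (cN C v).card) / 2 := by
        rw [Finset.sum_div]
        exact Finset.sum_congr rfl (fun v hv => if_pos hv)
      rw [this]
      linarith
    · apply Finset.sum_le_sum
      intro v hv
      rw [if_neg (mem_filter.1 hv).2]
  have hgs : ∑ v, (gg G F v : ℝ) / 2 = (E \ F).card := by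
    rw [← Finset.sum_div]
    have := sum_gg G E F hE
    have : ∑ v, (gg G F v : ℝ) = 2 * (E \ F).card := by exact_mod_cast this
    rw [this]; ring
  have hWR : (∑ v, (W v : ℝ)) / N ≤ ρ := by
    rw [div_le_iff₀ hNR, mul_comm]
    exact_mod_cast hW
  have htR : (0 : ℝ) ≤ t := by positivity
  have h9 := mul_le_mul_of_nonneg_left hWR htR
  have : (t : ℝ) * (d * Fintype.card V) ≤ t * ρ + (E \ F).card := by
    calc (t : ℝ) * (d * Fintype.card V) = Fintype.card V * (t * d) := by ring
      _ ≤ _ := hsum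
      _ ≤ t * ρ + (E \ F).card := by linarith
  exact_mod_cast this
end
end Pack

namespace Pack
open Finset

section
open Classical
variable {V : Type*} [Fintype V] [DecidableEq V] {d : ℕ}

lemma glue_closure {p : V × Fin d → ℝ} (hp : Gen p) (U : Submodule ℝ (V × Fin d → ℝ))
    (C : SimpleGraph V) (hC : ∀ a b, C.Adj a b ↔ a ≠ b ∧ row p a b ∈ U) : Glue C d := by
  have hU : ∀ a b, (a ≠ b → C.Adj a b) → row p a b ∈ U := by
    intro a b h
    by_cases hab : a = b
    · rw [hab, row_self]; exact U.zero_mem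
    · exact ((hC a b).1 (h hab)).2
  intro X hX v hv hcard x hx
  obtain ⟨Y, hY, hYc⟩ := exists_subset_card_eq hcard
  by_cases hxY : x ∈ Y
  · exact (mem_filter.1 (hY hxY)).2
  have hYX : Y ⊆ X := hY.trans (filter_subset _ _)
  refine (hC v x).2 ⟨fun h => hv (h ▸ hx), ?_⟩
  apply glue hp U Y hYc v x (fun h => hv (hYX h)) hxY
  · intro a ha b hb
    exact hU a b (fun hne => hX (mem_coe.2 (hYX ha)) (mem_coe.2 (hYX hb)) hne)
  · intro a ha
    exact hU x a (fun hne => hX (mem_coe.2 hx) (mem_coe.2 (hYX ha)) hne)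
  · intro a ha
    exact hU v a (fun _ => (mem_filter.1 (hY ha)).2)

theorem rank_ineq {p : V × Fin d → ℝ} (hp : Gen p) {G : SimpleGraph V} {t : ℕ} (hd : 0 < d)
    (ht : 0 < t) (hG : KConnected G (t * (10 * d * (d + 1)))) (E F : Finset (Sym2 V))
    (hE : ∀ e, e ∈ E ↔ e ∈ G.edgeSet) :
    t * Module.finrank ℝ (Submodule.span ℝ (Set.range (rowS p))) ≤
      t * Module.finrank ℝ (Submodule.span ℝ (rowS p '' (F : Set (Sym2 V)))) + (E \ F).card := by
  set U := Submodule.span ℝ (rowS p '' (F : Set (Sym2 V))) with hU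
  obtain ⟨C, hC⟩ : ∃ C : SimpleGraph V, ∀ a b, C.Adj a b ↔ a ≠ b ∧ row p a b ∈ U := by
    refine ⟨⟨fun a b => a ≠ b ∧ row p a b ∈ U, ?_, ?_⟩, fun _ _ => Iff.rfl⟩
    · exact ⟨fun a b h => ⟨h.1.symm, by rw [row_symm]; exact h.2⟩⟩
    · exact ⟨fun a h => h.1 rfl⟩
  by_cases hcomp : ∀ a b, a ≠ b → C.Adj a b
  · have hle : Submodule.span ℝ (Set.range (rowS p)) ≤ U := by
      rw [Submodule.span_le]
      rintro _ ⟨e, rfl⟩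
      induction e with
      | h a b =>
        rw [rowS_mk]
        by_cases hab : a = b
        · rw [hab, row_self]; exact U.zero_mem
        · exact ((hC a b).1 (hcomp a b hab)).2
    have := Submodule.finrank_mono hle
    exact (Nat.mul_le_mul_left t this).trans (Nat.le_add_right _ _)
  · have h1 : Module.finrank ℝ (Submodule.span ℝ (Set.range (rowS p))) ≤ d * Fintype.card V := by
      refine (Submodule.finrank_le _).trans ?_
      simp [mul_comm]
    refine (Nat.mul_le_mul_left t h1).trans ?_
    refine main_ineq hd ht hG E F hE ?_ (glue_closure hp U C hC) hcomp _ ?_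
    · intro a b h hne
      exact (hC a b).2 ⟨hne, Submodule.subset_span ⟨s(a, b), mem_coe.2 h, rfl⟩⟩
    · intro f hf
      have := build hd hp U C hC f hf
      unfold QQ
      convert this

lemma conn {p : V × Fin d → ℝ} (hp : Gen p) (hn : d + 1 ≤ Fintype.card V) (B : Finset (Sym2 V))
    (hB : Submodule.span ℝ (Set.range (rowS p)) ≤
      Submodule.span ℝ (rowS p '' (B : Set (Sym2 V)))) :
    KConnected (SimpleGraph.fromEdgeSet (B : Set (Sym2 V))) d := by
  refine ⟨by rw [Nat.card_eq_fintype_card]; exact hn, ?_⟩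
  intro S hSf hS
  set H := (SimpleGraph.fromEdgeSet (B : Set (Sym2 V))).induce (Sᶜ : Set V) with hH
  have hScard : S.toFinset.card = S.ncard := (Set.ncard_eq_toFinset_card' S).symm
  have hne : Nonempty (Sᶜ : Set V) := by
    by_contra h
    have hu : S.toFinset = univ := by
      ext x
      simp only [Set.mem_toFinset, mem_univ, iff_true]
      by_contra hx
      exact h ⟨x, hx⟩
    rw [hu, card_univ] at hScard
    omega
  refine ⟨?_⟩
  intro a b
  by_contra hab
  let A : Finset V := univ.filter (fun x => ∃ hx : x ∈ Sᶜ, H.Reachable a ⟨x, hx⟩)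
  refine sep hp (B : Set (Sym2 V)) S.toFinset A (by omega) a b ?_ ?_ ?_ ?_ ?_ ?_
  · exact mem_filter.2 ⟨mem_univ _, a.2, SimpleGraph.Reachable.refl _⟩
  · rw [Set.mem_toFinset]; exact a.2
  · intro h
    obtain ⟨-, h1, h2⟩ := mem_filter.1 h
    exact hab h2
  · rw [Set.mem_toFinset]; exact b.2
  · intro x hx y hxy
    obtain ⟨-, hxS, hr⟩ := mem_filter.1 hx
    by_cases hy : y ∈ S
    · exact Or.inr (Set.mem_toFinset.2 hy)
    · left
      by_cases he : x = y
      · exact he ▸ hx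
      · refine mem_filter.2 ⟨mem_univ _, hy, hr.trans (SimpleGraph.Adj.reachable ?_)⟩
        rw [hH, SimpleGraph.comap_adj, SimpleGraph.fromEdgeSet_adj]
        exact ⟨hxy, he⟩
  · exact hB (Submodule.subset_span ⟨s(a.1, b.1), rfl⟩)

end
end Pack

/-- Every `(t·10d(d+1))`-connected finite simple graph contains `t` pairwise edge-disjoint
spanning subgraphs, each of which is `d`-connected. -/
theorem packing_d_connected_spanning_subgraphs {V : Type*} [Fintype V]
    (d t : ℕ) (hd : 0 < d) (ht : 0 < t)
    (G : SimpleGraph V) (hG : KConnected G (t * (10 * d * (d + 1)))) :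
    ∃ H : Fin t → SimpleGraph V,
      (∀ i, H i ≤ G) ∧
      (∀ i j, i ≠ j → Disjoint (H i).edgeSet (H j).edgeSet) ∧
      (∀ i, KConnected (H i) d) := by
  classical
  obtain ⟨p, hp⟩ := Pack.exists_gen V d
  obtain ⟨E, hE⟩ : ∃ E : Finset (Sym2 V), ∀ e, e ∈ E ↔ e ∈ G.edgeSet :=
    ⟨Finset.univ.filter (fun e => e ∈ G.edgeSet), by simp⟩
  have hind : ∀ I : Finset (Sym2 V), LinearIndepOn ℝ (Pack.rowS p) (I : Set (Sym2 V)) →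
      Module.finrank ℝ (Submodule.span ℝ (Pack.rowS p '' (I : Set (Sym2 V)))) = I.card := by
    intro I hI
    have h1 := finrank_span_set_eq_card hI.id_image
    rw [h1, Set.toFinset_image, Finset.toFinset_coe]
    exact Finset.card_image_of_injOn hI.injOn
  have hle : ∀ I : Finset (Sym2 V), Submodule.span ℝ (Pack.rowS p '' (I : Set (Sym2 V))) ≤
      Submodule.span ℝ (Set.range (Pack.rowS p)) := fun I =>
    Submodule.span_mono (Set.image_subset_range _ _)
  obtain ⟨c, hc, hcard⟩ := Pack.union_thm (Pack.rowS p) E t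
    (Module.finrank ℝ (Submodule.span ℝ (Set.range (Pack.rowS p))))
    (fun I _ hI => by rw [← hind I hI]; exact Submodule.finrank_mono (hle I))
    (fun F _ => Pack.rank_ineq hp hd ht hG E F hE)
  have hsub : ∀ i, ∀ e ∈ Pack.cls c i, e ∈ G.edgeSet := by
    intro i e he
    rw [← hE]
    exact hc.2 e (by rw [Pack.mem_cls.1 he]; simp)
  refine ⟨fun i => SimpleGraph.fromEdgeSet (Pack.cls c i : Set (Sym2 V)), ?_, ?_, ?_⟩
  · intro i a b h
    rw [SimpleGraph.fromEdgeSet_adj] at h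
    exact hsub i _ (Finset.mem_coe.1 h.1)
  · intro i j hij
    rw [Set.disjoint_left]
    intro e h1 h2
    rw [SimpleGraph.edgeSet_fromEdgeSet] at h1 h2
    have e1 := Pack.mem_cls.1 (Finset.mem_coe.1 h1.1)
    have e2 := Pack.mem_cls.1 (Finset.mem_coe.1 h2.1)
    rw [e1] at e2
    exact hij (Option.some.inj e2)
  · intro i
    apply Pack.conn hp
    · have h1 := hG.1
      rw [Nat.card_eq_fintype_card] at h1
      have h2 : d ≤ t * (10 * d * (d + 1)) := by
        have : 10 * d * (d + 1) ≤ t * (10 * d * (d + 1)) := Nat.le_mul_of_pos_left _ ht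
        nlinarith
      omega
    · apply le_of_eq
      symm
      apply Submodule.eq_of_le_of_finrank_eq (hle _)
      rw [hind _ (hc.1 i), hcard i]
end
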